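/- There exists an integer n₀ such that every oriented graph G on n ≥ n₀ vertices with minimum semidegree δ⁰(G) ≥ (3n − 4)/8 contains a Hamilton cycle. -/

import Mathlib

/-- The outdegree of a vertex `x` in the digraph with adjacency relation `G`. -/
noncomputable def outDeg {V : Type*} (G : V → V → Prop) (x : V) : ℕ :=
  Nat.card {y : V // G x y}

/-- The indegree of a vertex `x` in the digraph with adjacency relation `G`. -/
noncomputable def inDeg {V : Type*} (G : V → V → Prop) (x : V) : ℕ :=
  Nat.card {y : V // G y x}

/-- An oriented graph: no loops and no 2-cycles. -/
def IsOriented {V : Type*} (G : V → V → Prop) : Prop :=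
  ∀ x y : V, G x y → ¬ G y x

/-- `f` is a Hamilton cycle of the digraph `G`. -/
def IsHamCycle {V : Type*} [Fintype V] (G : V → V → Prop)
    (f : ZMod (Fintype.card V) → V) : Prop :=
  Function.Bijective f ∧ ∀ i, G (f i) (f (i + 1))

set_option linter.unusedSectionVars false

namespace OrientedHamilton

open Finset
open scoped Classical

section

variable {V : Type*} [Fintype V]

/-- The outneighbourhood of `x`. -/
noncomputable def nbrOut (H : V → V → Prop) (x : V) : Finset V := univ.filter fun y => H x y

/-- The inneighbourhood of `y`. -/
noncomputable def nbrIn (H : V → V → Prop) (y : V) : Finset V := univ.filter fun x => H x y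

/-- The vertices with at least `r` outneighbours in `S`. -/
noncomputable def robOut (H : V → V → Prop) (r : ℕ) (S : Finset V) : Finset V :=
  univ.filter fun x => r ≤ #(nbrOut H x ∩ S)

/-- The vertices with at least `r` inneighbours in `S`. -/
noncomputable def robIn (H : V → V → Prop) (r : ℕ) (S : Finset V) : Finset V :=
  univ.filter fun y => r ≤ #(nbrIn H y ∩ S)

@[simp] lemma mem_nbrOut {H : V → V → Prop} {x y : V} : y ∈ nbrOut H x ↔ H x y := by
  simp [nbrOut]

@[simp] lemma mem_nbrIn {H : V → V → Prop} {x y : V} : x ∈ nbrIn H y ↔ H x y := by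
  simp [nbrIn]

@[simp] lemma mem_robOut {H : V → V → Prop} {r : ℕ} {S : Finset V} {x : V} :
    x ∈ robOut H r S ↔ r ≤ #(nbrOut H x ∩ S) := by
  simp [robOut]

@[simp] lemma mem_robIn {H : V → V → Prop} {r : ℕ} {S : Finset V} {x : V} :
    x ∈ robIn H r S ↔ r ≤ #(nbrIn H x ∩ S) := by
  simp [robIn]

/-- The vertices of label `j`. -/
noncomputable def lab (o : V → Bool) (j : Bool) : Finset V := univ.filter fun x => o x = j

@[simp] lemma mem_lab {o : V → Bool} {j : Bool} {x : V} : x ∈ lab o j ↔ o x = j := by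
  simp [lab]

/-- A digraph whose edges go from the vertices of out-label `j` to those of in-label `j`, such that
each of these bipartite graphs is a robust expander in both directions, and such that the whole
digraph is robustly strongly connected. -/
structure Expander (H : V → V → Prop) (o i : V → Bool) (D τ g r : ℕ) : Prop where
  label : ∀ x y, H x y → o x = i y
  out_deg : ∀ x, D ≤ #(nbrOut H x)
  in_deg : ∀ x, D ≤ #(nbrIn H x)
  exp_out : ∀ j S, S ⊆ lab i j → τ ≤ #S →
    #(lab o j) ≤ #(robOut H r S) + τ ∨ #S + g ≤ #(robOut H r S)
  exp_in : ∀ j S, S ⊆ lab o j → τ ≤ #S →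
    #(lab i j) ≤ #(robIn H r S) + τ ∨ #S + g ≤ #(robIn H r S)
  cut : ∀ S, τ ≤ #S → Fintype.card V ≤ #S + τ ∨ #S + g ≤ #(S ∪ robOut H r S)

variable {H : V → V → Prop} {o i : V → Bool} {D τ g r : ℕ}

lemma exists_mem_sdiff_of_card_lt {S U : Finset V} (h : #U < #S) : ∃ x ∈ S, x ∉ U := by
  by_contra! hc
  exact absurd (card_le_card (show S ⊆ U from hc)) (by omega)

lemma exists_nonempty_inter_sdiff {S T W U : Finset V} (hS : S ⊆ W) (hT : T ⊆ W)
    (h : #W + #U < #S + #T) : ∃ x ∈ S, x ∈ T ∧ x ∉ U := by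
  have h1 := card_union_add_card_inter S T
  have h2 := card_le_card (union_subset hS hT)
  obtain ⟨x, hx, hxU⟩ := exists_mem_sdiff_of_card_lt (S := S ∩ T) (U := U) (by omega)
  rw [mem_inter] at hx
  exact ⟨x, hx.1, hx.2, hxU⟩

/-- The vertices from which `y` can robustly be reached in at most `k + 1` steps. -/
noncomputable def reachTo (H : V → V → Prop) (r : ℕ) (y : V) : ℕ → Finset V
  | 0 => nbrIn H y
  | k + 1 => reachTo H r y k ∪ robOut H r (reachTo H r y k)

lemma exists_path_of_mem_reachTo (y : V) (k : ℕ) : ∀ z ∈ reachTo H r y k, ∀ U : Finset V,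
    #U + k + 1 ≤ r → z ∉ U → ∃ l : List V, (z :: (l ++ [y])).IsChain H ∧ (z :: l).Nodup ∧
      (∀ w ∈ z :: l, w ∉ U) ∧ l.length ≤ k := by
  induction k with
  | zero =>
    intro z hz U _ hzU
    refine ⟨[], ?_, by simp, by simpa using hzU, by simp⟩
    simpa [reachTo] using hz
  | succ k ih =>
    intro z hz U hU hzU
    rw [reachTo, mem_union] at hz
    rcases hz with hz | hz
    · obtain ⟨l, h1, h2, h3, h4⟩ := ih z hz U (by omega) hzU
      exact ⟨l, h1, h2, h3, by omega⟩
    · rw [mem_robOut] at hz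
      have hc := card_insert_le z U
      obtain ⟨w, hw, hwU⟩ := exists_mem_sdiff_of_card_lt
        (S := nbrOut H z ∩ reachTo H r y k) (U := insert z U) (by omega)
      rw [mem_inter, mem_nbrOut] at hw
      obtain ⟨l, h1, h2, h3, h4⟩ := ih w hw.2 (insert z U) (by omega) hwU
      refine ⟨w :: l, ?_, ?_, ?_, by simpa using h4⟩
      · rw [List.cons_append, List.isChain_cons_cons]
        exact ⟨hw.1, h1⟩
      · refine List.nodup_cons.2 ⟨fun h => ?_, h2⟩
        exact h3 z h (mem_insert_self _ _)
      · intro v hv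
        rcases List.mem_cons.1 hv with rfl | hv
        · exact hzU
        · exact fun h => h3 v hv (mem_insert_of_mem h)

lemma Expander.card_reachTo (hE : Expander H o i D τ g r) (hD : τ ≤ D) (y : V) (k : ℕ) :
    Fintype.card V ≤ #(reachTo H r y k) + τ ∨
      (τ ≤ #(reachTo H r y k) ∧ k * g ≤ #(reachTo H r y k)) := by
  induction k with
  | zero => exact Or.inr ⟨hD.trans (hE.in_deg y), by simp⟩
  | succ k ih =>
    have hsub : #(reachTo H r y k) ≤ #(reachTo H r y (k + 1)) :=
      card_le_card (by rw [reachTo]; exact subset_union_left)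
    rcases ih with ih | ⟨h1, h2⟩
    · left; omega
    · rcases hE.cut _ h1 with h | h
      · left; omega
      · right
        replace h : #(reachTo H r y k) + g ≤ #(reachTo H r y (k + 1)) := h
        have h3 : (k + 1) * g = k * g + g := by ring
        exact ⟨by omega, by omega⟩

/-- In an expander any two vertices are joined by a short path avoiding a given small set. -/
lemma Expander.exists_link (hE : Expander H o i D τ g r) {K : ℕ} (hK : Fintype.card V ≤ K * g)
    (x y : V) (U : Finset V) (hU : #U + K + 1 ≤ r) (hD : τ + #U < D) :
    ∃ l : List V, (x :: (l ++ [y])).IsChain H ∧ l.Nodup ∧ (∀ w ∈ l, w ∉ U) ∧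
      l.length ≤ K + 1 := by
  have h1 : Fintype.card V ≤ #(reachTo H r y K) + τ := by
    rcases hE.card_reachTo (by omega) y K with h | h <;> omega
  have h2 := hE.out_deg x
  obtain ⟨z, hz, hz', hzU⟩ := exists_nonempty_inter_sdiff (S := nbrOut H x)
    (T := reachTo H r y K) (U := U) (subset_univ _) (subset_univ _) (by
      rw [card_univ]; omega)
  obtain ⟨l, h3, h4, h5, h6⟩ := exists_path_of_mem_reachTo y K z hz' U hU hzU
  refine ⟨z :: l, ?_, h4, h5, by simpa using h6⟩
  rw [List.cons_append, List.isChain_cons_cons]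
  exact ⟨by simpa using hz, h3⟩

end

section

variable {V : Type*} [Fintype V]

/-- A nonempty list of distinct vertices forming a directed path. -/
structure IsPath (H : V → V → Prop) (Z : List V) : Prop where
  chain : Z.IsChain H
  nodup : Z.Nodup
  ne_nil : Z ≠ []

/-- `Absorber H A m Z`: the path `Z` can successively absorb `m` paths from `s` to `t` with
`A t s`, keeping its endpoints. -/
def Absorber (H A : V → V → Prop) : ℕ → List V → Prop
  | 0, Z => IsPath H Z
  | m + 1, Z => IsPath H Z ∧ ∀ Q, IsPath H Q → Q.Disjoint Z →
      (∀ t ∈ Q.getLast?, ∀ s ∈ Q.head?, A t s) →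
      ∃ Z', Z'.head? = Z.head? ∧ Z'.getLast? = Z.getLast? ∧ Z'.Perm (Z ++ Q) ∧ Absorber H A m Z'

variable {H A A' : V → V → Prop} {o i : V → Bool} {D τ g r : ℕ}

lemma Absorber.isPath {m : ℕ} {Z : List V} (h : Absorber H A m Z) : IsPath H Z := by
  cases m with
  | zero => exact h
  | succ m => exact h.1

lemma Absorber.mono {m : ℕ} (hA : ∀ t s, A' t s → A t s) :
    ∀ {Z : List V}, Absorber H A m Z → Absorber H A' m Z := by
  induction m with
  | zero => exact fun h => h
  | succ m ih =>
    rintro Z ⟨h1, h2⟩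
    refine ⟨h1, fun Q hQ hd hts => ?_⟩
    obtain ⟨Z', a, b, c, d⟩ := h2 Q hQ hd fun t ht s hs => hA t s (hts t ht s hs)
    exact ⟨Z', a, b, c, ih d⟩

lemma isChain_replace {X Z Z' Y : List V} (h : (X ++ Z ++ Y).IsChain H) (hZ' : Z'.IsChain H)
    (hh : Z'.head? = Z.head?) (hl : Z'.getLast? = Z.getLast?) : (X ++ Z' ++ Y).IsChain H := by
  rcases Z with _ | ⟨a, Z⟩
  · have : Z' = [] := by simpa using hh
    simpa [this] using h
  rcases Z' with _ | ⟨b, Z'⟩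
  · simp at hh
  rw [List.append_assoc, List.isChain_append, List.isChain_append] at h ⊢
  obtain ⟨h1, ⟨h2, h3, h4⟩, h5⟩ := h
  refine ⟨h1, ⟨hZ', h3, ?_⟩, ?_⟩
  · rw [hl]; exact h4
  · simp only [List.cons_append, List.head?_cons] at h5 hh ⊢
    rw [hh]; exact h5

lemma head?_replace {X Z Z' Y : List V} (hh : Z'.head? = Z.head?) :
    (X ++ Z' ++ Y).head? = (X ++ Z ++ Y).head? := by
  simp [List.head?_append, hh]

lemma getLast?_replace {X Z Z' Y : List V} (hh : Z'.getLast? = Z.getLast?) :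
    (X ++ Z' ++ Y).getLast? = (X ++ Z ++ Y).getLast? := by
  simp [List.getLast?_append, hh]

lemma perm_replace {X Z Z' Y Q : List V} (h : Z'.Perm (Z ++ Q)) :
    (X ++ Z' ++ Y).Perm (X ++ Z ++ Y ++ Q) := by
  rw [List.perm_iff_count] at *
  intro a
  have := h a
  simp only [List.count_append] at *
  omega

lemma nodup_of_perm_append {Z Z' Q : List V} (h : Z'.Perm (Z ++ Q)) (hZ : Z.Nodup) (hQ : Q.Nodup)
    (hd : Q.Disjoint Z) : Z'.Nodup := by
  rw [h.nodup_iff, List.nodup_append']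
  exact ⟨hZ, hQ, hd.symm⟩

lemma Absorber.context {m : ℕ} : ∀ {Z : List V}, Absorber H A m Z → ∀ {X Y : List V},
    IsPath H (X ++ Z ++ Y) → Absorber H A m (X ++ Z ++ Y) := by
  induction m with
  | zero => exact fun _ _ _ h => h
  | succ m ih =>
    rintro Z ⟨h1, h2⟩ X Y hP
    refine ⟨hP, fun Q hQ hd hts => ?_⟩
    obtain ⟨Z', a, b, c, d⟩ := h2 Q hQ (fun v hv hv' => hd hv (by simp [hv'])) hts
    have hp := perm_replace (X := X) (Y := Y) c
    refine ⟨X ++ Z' ++ Y, head?_replace a, getLast?_replace b, hp, ih d ⟨?_, ?_, ?_⟩⟩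
    · exact isChain_replace hP.chain d.isPath.chain a b
    · exact nodup_of_perm_append hp hP.nodup hQ.nodup hd
    · simp [d.isPath.ne_nil]

lemma Absorber.append {m : ℕ} {Z₁ l Z₂ : List V} (h₁ : Absorber H A 1 Z₁)
    (h₂ : Absorber H A m Z₂) (hP : IsPath H (Z₁ ++ l ++ Z₂)) :
    Absorber H A (m + 1) (Z₁ ++ l ++ Z₂) := by
  refine ⟨hP, fun Q hQ hd hts => ?_⟩
  obtain ⟨Z', a, b, c, d⟩ := h₁.2 Q hQ (fun v hv hv' => hd hv (by simp [hv'])) hts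
  have hp := perm_replace (X := []) (Y := l ++ Z₂) c
  have hP' : IsPath H ([] ++ Z₁ ++ (l ++ Z₂)) := by simpa using hP
  have h3 : IsPath H ((Z' ++ l) ++ Z₂ ++ []) := by
    refine ⟨?_, ?_, by simp [h₂.isPath.ne_nil]⟩
    · simpa using isChain_replace hP'.chain d.isPath.chain a b
    · simpa using nodup_of_perm_append hp hP'.nodup hQ.nodup (by simpa using hd)
  refine ⟨Z' ++ l ++ Z₂, ?_, ?_, by simpa using hp, by simpa using h₂.context h3⟩
  · simpa using head?_replace (X := []) (Y := l ++ Z₂) a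
  · simpa using getLast?_replace (X := []) (Y := l ++ Z₂) b

lemma Absorber.or {Z₁ l Z₂ : List V} (h₁ : Absorber H A 1 Z₁)
    (h₂ : Absorber H A' 1 Z₂) (hP : IsPath H (Z₁ ++ l ++ Z₂)) :
    Absorber H (fun t s => A t s ∨ A' t s) 1 (Z₁ ++ l ++ Z₂) := by
  have h₁' : Absorber H A 1 (Z₁ ++ l ++ Z₂) := by
    have := h₁.context (X := []) (Y := l ++ Z₂) (by simpa using hP)
    simpa using this
  have h₂' : Absorber H A' 1 (Z₁ ++ l ++ Z₂) := by
    have := h₂.context (X := Z₁ ++ l) (Y := []) (by simpa using hP)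
    simpa using this
  refine ⟨hP, fun Q hQ hd hts => ?_⟩
  have hne := hQ.ne_nil
  rcases hts _ (List.getLast?_eq_getLast_of_ne_nil hne) _
    (List.head?_eq_some_head hne) with h | h
  · exact h₁'.2 Q hQ hd fun t ht s hs => by
      rw [List.getLast?_eq_getLast_of_ne_nil hne] at ht
      rw [List.head?_eq_some_head hne] at hs
      cases ht; cases hs; exact h
  · exact h₂'.2 Q hQ hd fun t ht s hs => by
      rw [List.getLast?_eq_getLast_of_ne_nil hne] at ht
      rw [List.head?_eq_some_head hne] at hs
      cases ht; cases hs; exact h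

lemma absorber_pair {p q : V} (hqp : H q p) (hne : p ≠ q) :
    Absorber H (fun t s => H t p ∧ H q s) 1 [q, p] := by
  refine ⟨⟨by simpa using hqp, by simpa using hne.symm, by simp⟩, fun Q hQ hd hts => ?_⟩
  refine ⟨[q] ++ Q ++ [p], by simp, by rw [List.getLast?_append]; simp, ?_, ?_⟩
  · rw [List.perm_iff_count]
    intro a
    simp only [List.count_append, List.count_cons, List.count_nil]
    omega
  · have hp : ([q] ++ Q ++ [p]).Perm ([q, p] ++ Q) := by
      rw [List.perm_iff_count]
      intro a
      simp only [List.count_append, List.count_cons, List.count_nil]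
      omega
    refine ⟨?_, nodup_of_perm_append hp (by simpa using hne.symm) hQ.nodup hd, by simp⟩
    obtain ⟨a, L, rfl⟩ := List.exists_cons_of_ne_nil hQ.ne_nil
    have hne' := hQ.ne_nil
    have key := hts _ (List.getLast?_eq_getLast_of_ne_nil hne') a rfl
    rw [List.isChain_append]
    refine ⟨?_, by simp, ?_⟩
    · rw [List.cons_append, List.nil_append, List.isChain_cons_cons]
      exact ⟨key.2, hQ.chain⟩
    · intro x hx y hy
      simp only [List.head?_cons, Option.mem_def, Option.some.injEq] at hy
      subst hy
      rw [List.getLast?_append_of_ne_nil _ hne', List.getLast?_eq_getLast_of_ne_nil hne'] at hx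
      cases hx
      exact key.1

lemma absorber_step {p q a b c d : V} {l l' B : List V}
    (hB : Absorber H (fun t s => H t d ∧ H q s) 1 B)
    (hP : IsPath H ([a, p] ++ l ++ [c, b] ++ l' ++ B)) (hab : H a b) (hcd : H c d) :
    Absorber H (fun t s => H t p ∧ H q s) 1 ([a, p] ++ l ++ [c, b] ++ l' ++ B) := by
  refine ⟨hP, fun Q hQ hd hts => ?_⟩
  have hne := hQ.ne_nil
  have hchain := hP.chain
  have hnd := hP.nodup
  have key := hts _ (List.getLast?_eq_getLast_of_ne_nil hne) _
    (List.head?_eq_some_head hne)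
  have hpl : (p :: (l ++ [c])).IsChain H := by
    refine List.IsChain.left_of_append (l₂ := [b] ++ l' ++ B) (List.IsChain.right_of_append
      (l₁ := [a]) ?_)
    simpa using hchain
  have hbB : (b :: l' ++ B ++ []).IsChain H := by
    refine List.IsChain.right_of_append (l₁ := [a, p] ++ l ++ [c]) ?_
    simpa using hchain
  have hQ' : IsPath H (Q ++ (p :: (l ++ [c]))) := by
    refine ⟨?_, ?_, by simp [hne]⟩
    · rw [List.isChain_append]
      refine ⟨hQ.chain, hpl, fun x hx y hy => ?_⟩
      rw [List.getLast?_eq_getLast_of_ne_nil hne] at hx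
      cases hx; cases hy
      exact key.1
    · rw [List.nodup_append']
      refine ⟨hQ.nodup, ?_, ?_⟩
      · exact hnd.sublist (List.IsInfix.sublist ⟨[a], [b] ++ l' ++ B, by simp⟩)
      · intro v hv hv'
        refine hd hv ?_
        simp only [List.mem_cons, List.mem_append, List.not_mem_nil, or_false] at hv' ⊢
        tauto
  have hd' : (Q ++ (p :: (l ++ [c]))).Disjoint B := by
    intro v hv hv'
    rw [List.mem_append] at hv
    rcases hv with hv | hv
    · exact hd hv (by simp [hv'])
    · have h1 : ([a] ++ (p :: (l ++ [c])) ++ ((b :: l') ++ B)).Nodup := by simpa using hnd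
      rw [List.append_assoc, List.nodup_append', List.nodup_append'] at h1
      exact h1.2.1.2.2 hv (by simp [hv'])
  obtain ⟨Z', h1, h2, h3, h4⟩ := hB.2 _ hQ' hd' (by
    intro t ht s hs
    have ht' : t = c := by
      rw [← List.cons_append, ← List.append_assoc, List.getLast?_append] at ht
      simpa using ht.symm
    have hs' : Q.head hne = s := by
      rw [List.head?_append, List.head?_eq_some_head hne] at hs
      simpa using hs
    subst ht' hs'
    exact ⟨hcd, key.2⟩)
  have hp : (a :: b :: l' ++ Z').Perm ([a, p] ++ l ++ [c, b] ++ l' ++ B ++ Q) := by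
    rw [List.perm_iff_count] at *
    intro x
    have := h3 x
    simp only [List.count_append, List.count_cons, List.count_nil] at *
    omega
  refine ⟨a :: b :: l' ++ Z', by simp, ?_, hp, ?_, ?_, by simp⟩
  · rw [List.getLast?_append, List.getLast?_append, h2,
      List.getLast?_eq_getLast_of_ne_nil hB.isPath.ne_nil]
    rfl
  · have := isChain_replace (X := b :: l') (Y := []) hbB h4.isPath.chain h1 h2
    rw [List.append_nil] at this
    rw [List.cons_append, List.cons_append, List.isChain_cons_cons]
    exact ⟨hab, this⟩
  · exact nodup_of_perm_append hp hnd hQ.nodup hd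

end

section

variable {V : Type*} [Fintype V]

variable {H R A A' : V → V → Prop} {o i : V → Bool} {D τ g r : ℕ}

lemma Expander.exists_link_lists_of_notMem (hE : Expander H o i D τ g r) (T : Finset V)
    (hR : ∀ x y, x ∉ T → H x y → R x y)
    {K : ℕ} (hK : Fintype.card V ≤ K * g) {Z₁ Z₂ : List V} (h₁ : IsPath R Z₁) (h₂ : IsPath R Z₂)
    (hT : Z₁.getLast h₁.ne_nil ∉ T)
    (hd : Z₁.Disjoint Z₂) (U : Finset V) (hTU : T ⊆ U) (hU : #U + Z₁.length + Z₂.length + K + 1 ≤ r)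
    (hD : τ + #U + Z₁.length + Z₂.length < D) :
    ∃ l : List V, IsPath R (Z₁ ++ l ++ Z₂) ∧ (∀ w ∈ l, w ∉ U) ∧ l.length ≤ K + 1 := by
  have c1 := List.toFinset_card_le Z₁
  have c2 := List.toFinset_card_le Z₂
  have c3 := card_union_le U Z₁.toFinset
  have c4 := card_union_le (U ∪ Z₁.toFinset) Z₂.toFinset
  obtain ⟨l, hl1, hl2, hl3, hl4⟩ := hE.exists_link hK (Z₁.getLast h₁.ne_nil) (Z₂.head h₂.ne_nil)
    (U ∪ Z₁.toFinset ∪ Z₂.toFinset) (by omega) (by omega)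
  simp only [mem_union, List.mem_toFinset, not_or] at hl3
  refine ⟨l, ⟨?_, ?_, by simp [h₁.ne_nil]⟩, fun w hw => (hl3 w hw).1.1, hl4⟩
  · have e1 : Z₁ ++ l ++ Z₂ =
        Z₁.dropLast ++ ((Z₁.getLast h₁.ne_nil :: (l ++ [Z₂.head h₂.ne_nil])) ++ Z₂.tail) := by
      conv_lhs => rw [← List.dropLast_append_getLast h₁.ne_nil, ← List.cons_head_tail h₂.ne_nil]
      simp
    have hl1' : (Z₁.getLast h₁.ne_nil :: (l ++ [Z₂.head h₂.ne_nil])).IsChain R := by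
      have hmem : ∀ v ∈ Z₁.getLast h₁.ne_nil :: l, v ∉ T := by
        intro v hv
        rcases List.mem_cons.1 hv with rfl | hv
        · exact hT
        · exact fun h => (hl3 v hv).1.1 (hTU h)
      rw [← List.cons_append, List.isChain_append] at hl1 ⊢
      exact ⟨hl1.1.imp_of_mem_imp fun a b ha _ h => hR a b (hmem a ha) h, by simp,
        fun a ha b hb => hR a b (hmem a (List.mem_of_getLast? ha)) (hl1.2.2 a ha b hb)⟩
    have k1 := h₁.chain
    have k2 := h₂.chain
    rw [← List.dropLast_append_getLast h₁.ne_nil, List.isChain_append] at k1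
    rw [← List.cons_head_tail h₂.ne_nil, List.isChain_cons] at k2
    rw [e1, List.isChain_append, List.isChain_append]
    refine ⟨k1.1, ⟨hl1', k2.2, ?_⟩, ?_⟩
    · intro x hx y hy
      have : x = Z₂.head h₂.ne_nil := by
        rw [← List.cons_append, List.getLast?_append] at hx
        simpa using hx.symm
      rw [this]
      exact k2.1 y hy
    · intro x hx y hy
      refine k1.2.2 x hx y ?_
      simpa using hy
  · rw [List.nodup_append', List.nodup_append']
    refine ⟨⟨h₁.nodup, hl2, fun v hv hv' => (hl3 v hv').1.2 hv⟩, h₂.nodup, ?_⟩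
    intro v hv hv'
    rcases List.mem_append.1 hv with hv | hv
    · exact hd hv hv'
    · exact (hl3 v hv).2 hv'

lemma Expander.exists_link_lists (hE : Expander H o i D τ g r) (hR : ∀ x y, H x y → R x y)
    {K : ℕ} (hK : Fintype.card V ≤ K * g) {Z₁ Z₂ : List V} (h₁ : IsPath R Z₁) (h₂ : IsPath R Z₂)
    (hd : Z₁.Disjoint Z₂) (U : Finset V) (hU : #U + Z₁.length + Z₂.length + K + 1 ≤ r)
    (hD : τ + #U + Z₁.length + Z₂.length < D) :
    ∃ l : List V, IsPath R (Z₁ ++ l ++ Z₂) ∧ (∀ w ∈ l, w ∉ U) ∧ l.length ≤ K + 1 :=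
  hE.exists_link_lists_of_notMem ∅ (fun x y _ h => hR x y h) hK h₁ h₂ (by simp) hd U (by simp)
    hU hD

/-- A short path through prescribed disjoint edges, ending with a given path. -/
lemma Expander.exists_path_through (hE : Expander H o i D τ g r) (T : Finset V)
    (hR : ∀ x y, x ∉ T → H x y → R x y)
    {K : ℕ} (hK : Fintype.card V ≤ K * g) {Z : List V} (hZ : IsPath R Z) (U : Finset V)
    (hTU : T ⊆ U) (hZU : ∀ v ∈ Z, v ∉ U) (M : List (V × V)) (hM : ∀ e ∈ M, R e.1 e.2)
    (hMU : ∀ e ∈ M, e.1 ∈ U ∧ e.2 ∈ U ∧ e.2 ∉ T) (hnd : (M.flatMap fun e => [e.1, e.2]).Nodup)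
    (hU : #U + Z.length + (M.length + 1) * (K + 3) ≤ r)
    (hD : τ + #U + Z.length + (M.length + 1) * (K + 3) < D) :
    ∃ X : List V, IsPath R (X ++ Z) ∧
      (∀ v ∈ X, v ∈ M.flatMap (fun e => [e.1, e.2]) ∨ v ∉ U) ∧ (∀ e ∈ M, e.1 ∈ X) ∧
      X.length ≤ M.length * (K + 3) := by
  induction M with
  | nil => exact ⟨[], by simpa using hZ, by simp, by simp, by simp⟩
  | cons e M ih =>
    obtain ⟨x, y⟩ := e
    have e1 : ((M.length + 1) + 1) * (K + 3) = M.length * (K + 3) + 2 * (K + 3) := by ring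
    have e2 : (M.length + 1) * (K + 3) = M.length * (K + 3) + (K + 3) := by ring
    rw [List.length_cons, e1] at hU hD
    simp only [List.flatMap_cons, List.cons_append, List.nil_append, List.nodup_cons,
      List.mem_cons, not_or] at hnd
    obtain ⟨X, h1, h2, h3, h4⟩ := ih (fun e he => hM e (by simp [he]))
      (fun e he => hMU e (by simp [he])) hnd.2.2 (by omega) (by omega)
    have hxy := hMU (x, y) (by simp)
    have hP : IsPath R [x, y] :=
      ⟨by simpa using hM (x, y) (by simp), by simpa using hnd.1.1, by simp⟩
    have hd : [x, y].Disjoint (X ++ Z) := by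
      intro v hv hv'
      have hvU : v ∈ U := by
        simp only [List.mem_cons, List.not_mem_nil, or_false] at hv
        rcases hv with rfl | rfl
        · exact hxy.1
        · exact hxy.2.1
      rcases List.mem_append.1 hv' with hv' | hv'
      · rcases h2 v hv' with h | h
        · simp only [List.mem_cons, List.not_mem_nil, or_false] at hv
          rcases hv with rfl | rfl
          · exact hnd.1.2 h
          · exact hnd.2.1 h
        · exact h hvU
      · exact hZU v hv' hvU
    have hlen : (X ++ Z).length = X.length + Z.length := by simp
    obtain ⟨l, hlP, hlU, hll⟩ := hE.exists_link_lists_of_notMem T hR hK hP h1 (by simpa using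
      hxy.2.2) hd U hTU (by simp only [List.length_cons, List.length_nil]; omega)
      (by simp only [List.length_cons, List.length_nil]; omega)
    refine ⟨[x, y] ++ l ++ X, by simpa using hlP, ?_, ?_, ?_⟩
    · intro v hv
      simp only [List.mem_append, List.mem_cons, List.not_mem_nil, or_false] at hv
      simp only [List.flatMap_cons, List.cons_append, List.nil_append, List.mem_cons]
      rcases hv with (hv | hv) | hv
      · tauto
      · exact Or.inr (hlU v hv)
      · have := h2 v hv
        tauto
    · intro e he
      rcases List.mem_cons.1 he with rfl | he
      · simp
      · simp [h3 e he]
    · simp only [List.length_append, List.length_cons, List.length_nil]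
      omega

/-- The vertices `p` for which absorbers of depth `k` with second vertex pair `(p, q)` are built. -/
noncomputable def absorbSet (H : V → V → Prop) (r : ℕ) (q : V) : ℕ → Finset V
  | 0 => nbrOut H q
  | k + 1 => robIn H r (robOut H r (robIn H r (robOut H r (absorbSet H r q k))))

lemma Expander.exists_block (hE : Expander H o i D τ g r) {K : ℕ}
    (hK : Fintype.card V ≤ K * g) (q : V) (k : ℕ) : ∀ p ∈ absorbSet H r q k, p ≠ q →
    ∀ U : Finset V, p ∉ U → q ∉ U → #U + (k + 2) * (2 * K + 6) ≤ r →
      τ + #U + (k + 2) * (2 * K + 6) ≤ D →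
      ∃ Z, Absorber H (fun t s => H t p ∧ H q s) 1 Z ∧ (∀ v ∈ Z, v ∉ U) ∧
        Z.length + (2 * K + 4) ≤ (k + 1) * (2 * K + 6) := by
  induction k with
  | zero =>
    intro p hp hpq U hpU hqU _ _
    rw [absorbSet, mem_nbrOut] at hp
    refine ⟨[q, p], absorber_pair hp hpq, ?_, ?_⟩
    · simp [hpU, hqU]
    · simp; omega
  | succ k ih =>
    intro p hp hpq U hpU hqU hUr hUD
    have e1 : (k + 1 + 2) * (2 * K + 6) = (k + 1) * (2 * K + 6) + 4 * K + 12 := by ring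
    have e2 : (k + 2) * (2 * K + 6) = (k + 1) * (2 * K + 6) + 2 * K + 6 := by ring
    have e3 : (k + 1 + 1) * (2 * K + 6) = (k + 1) * (2 * K + 6) + 2 * K + 6 := by ring
    rw [e1] at hUr hUD
    rw [absorbSet, mem_robIn] at hp
    have c0 := card_insert_le q U
    have c1 := card_insert_le p (insert q U)
    obtain ⟨a, ha, haU⟩ := exists_mem_sdiff_of_card_lt (U := insert p (insert q U))
      (lt_of_lt_of_le (by omega) hp)
    rw [mem_inter, mem_nbrIn, mem_robOut] at ha
    have c2 := card_insert_le a (insert p (insert q U))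
    obtain ⟨b, hb, hbU⟩ := exists_mem_sdiff_of_card_lt (U := insert a (insert p (insert q U)))
      (lt_of_lt_of_le (by omega) ha.2)
    rw [mem_inter, mem_nbrOut, mem_robIn] at hb
    have c3 := card_insert_le b (insert a (insert p (insert q U)))
    obtain ⟨c, hc, hcU⟩ := exists_mem_sdiff_of_card_lt
      (U := insert b (insert a (insert p (insert q U)))) (lt_of_lt_of_le (by omega) hb.2)
    rw [mem_inter, mem_nbrIn, mem_robOut] at hc
    have c4 := card_insert_le c (insert b (insert a (insert p (insert q U))))
    obtain ⟨d, hd, hdU⟩ := exists_mem_sdiff_of_card_lt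
      (U := insert c (insert b (insert a (insert p (insert q U)))))
      (lt_of_lt_of_le (by omega) hc.2)
    rw [mem_inter, mem_nbrOut] at hd
    simp only [mem_insert, not_or] at haU hbU hcU hdU
    have c5 := card_insert_le p U
    have c6 := card_insert_le a (insert p U)
    have c7 := card_insert_le b (insert a (insert p U))
    have c8 := card_insert_le c (insert b (insert a (insert p U)))
    obtain ⟨B, hB, hBU, hBl⟩ := ih d hd.2 hdU.2.2.2.2.1
      (insert c (insert b (insert a (insert p U))))
      (by simp only [mem_insert, not_or]; tauto)
      (by simp only [mem_insert, not_or]; refine ⟨?_, ?_, ?_, ?_, hqU⟩ <;> grind)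
      (by omega) (by omega)
    simp only [mem_insert, not_or] at hBU
    have hcb : IsPath H [c, b] := ⟨by simpa using hc.1, by simpa using hcU.1, by simp⟩
    have hap : IsPath H [a, p] := ⟨by simpa using ha.1, by simpa using haU.1, by simp⟩
    obtain ⟨l', hl'P, hl'U, hl'l⟩ := hE.exists_link_lists (fun _ _ h => h) hK hcb hB.isPath
      (by intro v hv hv'; simp at hv; grind) (insert a (insert p U))
      (by simp only [List.length_cons, List.length_nil]; omega)
      (by simp only [List.length_cons, List.length_nil]; omega)
    simp only [mem_insert, not_or] at hl'U
    have hlen : ([c, b] ++ l' ++ B).length ≤ 2 + (K + 1) + B.length := by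
      simp only [List.length_append, List.length_cons, List.length_nil]; omega
    obtain ⟨l, hlP, hlU, hll⟩ := hE.exists_link_lists (fun _ _ h => h) hK hap hl'P
      (by
        intro v hv hv'
        simp only [List.mem_cons, List.mem_append, List.not_mem_nil, or_false] at hv hv'
        grind) U
      (by simp only [List.length_cons, List.length_nil] at *; omega)
      (by simp only [List.length_cons, List.length_nil] at *; omega)
    have hlP' : IsPath H ([a, p] ++ l ++ [c, b] ++ l' ++ B) := by simpa using hlP
    refine ⟨_, absorber_step hB hlP' hb.1 hd.1, ?_, ?_⟩
    · intro v hv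
      simp only [List.mem_cons, List.mem_append, List.not_mem_nil, or_false] at hv
      grind
    · simp only [List.length_append, List.length_cons, List.length_nil]
      omega

end

section

variable {V : Type*} [Fintype V]

variable {H R A A' : V → V → Prop} {o i : V → Bool} {D τ g r : ℕ}

lemma Expander.robOut_subset (hE : Expander H o i D τ g r) (hr : 0 < r) {j : Bool} {S : Finset V}
    (hS : S ⊆ lab i j) : robOut H r S ⊆ lab o j := by
  intro x hx
  rw [mem_robOut] at hx
  obtain ⟨y, hy⟩ := card_pos.1 (lt_of_lt_of_le hr hx)
  rw [mem_inter, mem_nbrOut] at hy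
  rw [mem_lab, hE.label _ _ hy.1]
  exact mem_lab.1 (hS hy.2)

lemma Expander.robIn_subset (hE : Expander H o i D τ g r) (hr : 0 < r) {j : Bool} {S : Finset V}
    (hS : S ⊆ lab o j) : robIn H r S ⊆ lab i j := by
  intro x hx
  rw [mem_robIn] at hx
  obtain ⟨y, hy⟩ := card_pos.1 (lt_of_lt_of_le hr hx)
  rw [mem_inter, mem_nbrIn] at hy
  rw [mem_lab, ← hE.label _ _ hy.1]
  exact mem_lab.1 (hS hy.2)

lemma Expander.nbrOut_subset (hE : Expander H o i D τ g r) (x : V) :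
    nbrOut H x ⊆ lab i (o x) := by
  intro y hy
  rw [mem_nbrOut] at hy
  rw [mem_lab, hE.label _ _ hy]

lemma Expander.nbrIn_subset (hE : Expander H o i D τ g r) (x : V) :
    nbrIn H x ⊆ lab o (i x) := by
  intro y hy
  rw [mem_nbrIn] at hy
  rw [mem_lab, hE.label _ _ hy]

lemma Expander.robOut_grow (hE : Expander H o i D τ g r) (hD : 2 * τ ≤ D)
    {j : Bool} (hb : #(lab o j) ≤ #(lab i j) + g)
    {S : Finset V} (hS : S ⊆ lab i j) (hne : S.Nonempty) (hτ : τ ≤ #S) :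
    τ ≤ #(robOut H r S) ∧ (#(lab o j) ≤ #(robOut H r S) + τ ∨ #S + g ≤ #(robOut H r S)) ∧
      (#(lab i j) ≤ #S + τ → #(lab o j) ≤ #(robOut H r S) + τ) := by
  obtain ⟨y, hy⟩ := hne
  have h1 := card_le_card (hE.nbrIn_subset y)
  rw [mem_lab.1 (hS hy)] at h1
  have h2 := hE.in_deg y
  have := hE.exp_out j S hS hτ
  omega

lemma Expander.robIn_grow (hE : Expander H o i D τ g r) (hD : 2 * τ ≤ D)
    {j : Bool} (hb : #(lab i j) ≤ #(lab o j) + g)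
    {S : Finset V} (hS : S ⊆ lab o j) (hne : S.Nonempty) (hτ : τ ≤ #S) :
    τ ≤ #(robIn H r S) ∧ (#(lab i j) ≤ #(robIn H r S) + τ ∨ #S + g ≤ #(robIn H r S)) ∧
      (#(lab o j) ≤ #S + τ → #(lab i j) ≤ #(robIn H r S) + τ) := by
  obtain ⟨y, hy⟩ := hne
  have h1 := card_le_card (hE.nbrOut_subset y)
  rw [mem_lab.1 (hS hy)] at h1
  have h2 := hE.out_deg y
  have := hE.exp_in j S hS hτ
  omega

lemma Expander.robIn_robOut_grow (hE : Expander H o i D τ g r) (hr : 0 < r) (hτ0 : 0 < τ)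
    (hD : 2 * τ ≤ D)
    {j : Bool} (hb : #(lab o j) ≤ #(lab i j) + g) (hb' : #(lab i j) ≤ #(lab o j) + g)
    {S : Finset V} (hS : S ⊆ lab i j) (hτ : τ ≤ #S) :
    robIn H r (robOut H r S) ⊆ lab i j ∧ τ ≤ #(robIn H r (robOut H r S)) ∧
      (#(lab i j) ≤ #(robIn H r (robOut H r S)) + τ ∨ #S + g ≤ #(robIn H r (robOut H r S))) := by
  have s1 := hE.robOut_subset hr hS
  obtain ⟨a1, a2, a3⟩ := hE.robOut_grow hD hb hS (card_pos.1 (by omega)) hτ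
  obtain ⟨b1, b2, b3⟩ := hE.robIn_grow hD hb' s1 (card_pos.1 (by omega)) a1
  exact ⟨hE.robIn_subset hr s1, b1, by omega⟩

lemma Expander.absorbSet_grow (hE : Expander H o i D τ g r) (hr : 0 < r) (hτ0 : 0 < τ)
    (hD : 2 * τ ≤ D) (hb : ∀ j, #(lab o j) ≤ #(lab i j) + g)
    (hb' : ∀ j, #(lab i j) ≤ #(lab o j) + g) (q : V) (k : ℕ) :
    absorbSet H r q k ⊆ lab i (o q) ∧ τ ≤ #(absorbSet H r q k) ∧
      (#(lab i (o q)) ≤ #(absorbSet H r q k) + τ ∨ k * g ≤ #(absorbSet H r q k)) := by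
  induction k with
  | zero =>
    have := hE.out_deg q
    exact ⟨hE.nbrOut_subset q, by rw [absorbSet]; omega, by simp⟩
  | succ k ih =>
    obtain ⟨a1, a2, a3⟩ := ih
    obtain ⟨b1, b2, b3⟩ := hE.robIn_robOut_grow hr hτ0 hD (hb _) (hb' _) a1 a2
    obtain ⟨c1, c2, c3⟩ := hE.robIn_robOut_grow hr hτ0 hD (hb _) (hb' _) b1 b2
    rw [absorbSet]
    refine ⟨c1, c2, ?_⟩
    have : (k + 1) * g = k * g + g := by ring
    omega

lemma Expander.mem_absorbSet (hE : Expander H o i D τ g r) (hr : 0 < r) (hτ0 : 0 < τ)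
    (hD : 2 * τ ≤ D) (hDr : τ + r ≤ D) (hb : ∀ j, #(lab o j) ≤ #(lab i j) + g)
    (hb' : ∀ j, #(lab i j) ≤ #(lab o j) + g) {K : ℕ}
    (hK : Fintype.card V ≤ K * g) {p q : V} (hpq : i p = o q) :
    p ∈ absorbSet H r q (K + 1) := by
  obtain ⟨a1, a2, a3⟩ := hE.absorbSet_grow hr hτ0 hD hb hb' q K
  have hc := card_le_univ (lab i (o q))
  obtain ⟨b1, b2, b3⟩ := hE.robIn_robOut_grow hr hτ0 hD (hb _) (hb' _) a1 a2
  obtain ⟨c1, c2, c3⟩ := hE.robOut_grow hD (hb _) b1 (card_pos.1 (by omega)) b2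
  have c4 := hE.robOut_subset hr b1
  have h1 := hE.nbrIn_subset p
  have h2 := hE.in_deg p
  rw [hpq] at h1
  have h3 := card_union_add_card_inter (nbrIn H p)
    (robOut H r (robIn H r (robOut H r (absorbSet H r q K))))
  have h4 := card_le_card (union_subset h1 c4)
  rw [absorbSet, mem_robIn]
  omega

/-- An average pair `(p, q)` of absorber ends serves many pairs of `W`. -/
lemma exists_popular_pair (hout : ∀ x, D ≤ #(nbrOut H x)) (hin : ∀ x, D ≤ #(nbrIn H x))
    (U : Finset V) {u : ℕ} (hU : #U + 1 ≤ u) (hu : u < D) (W : Finset (V × V))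
    (hW : W.Nonempty) :
    ∃ p q, p ∉ U ∧ q ∉ U ∧ p ≠ q ∧
      #W * (D - u) ^ 2 ≤ Fintype.card V ^ 2 * #(W.filter fun x => H x.1 p ∧ H q x.2) := by
  set P : Finset (V × V) := univ.filter fun y => y.1 ∉ U ∧ y.2 ∉ U ∧ y.1 ≠ y.2 with hP
  have key : ∀ x ∈ W, (D - u) ^ 2 ≤ #(P.filter fun y => H x.1 y.1 ∧ H y.2 x.2) := by
    intro x _
    have h1 := le_card_sdiff U (nbrOut H x.1)
    have h2 := le_card_sdiff U (nbrIn H x.2)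
    have h3 := hout x.1
    have h4 := hin x.2
    set S := nbrOut H x.1 \ U
    set T := nbrIn H x.2 \ U
    have h5 : (S ×ˢ T) \ (S.image fun y => (y, y)) ⊆
        P.filter fun y => H x.1 y.1 ∧ H y.2 x.2 := by
      rintro ⟨y, z⟩ hy
      simp only [mem_sdiff, mem_product, mem_image, Prod.mk.injEq, S, T, mem_nbrOut,
        mem_nbrIn, mem_filter, mem_univ, true_and, P] at hy ⊢
      refine ⟨⟨hy.1.1.2, hy.1.2.2, ?_⟩, hy.1.1.1, hy.1.2.1⟩
      rintro rfl
      exact hy.2 ⟨y, hy.1.1, rfl, rfl⟩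
    have h6 := le_card_sdiff (S.image fun y => (y, y)) (S ×ˢ T)
    have h7 : #(S.image fun y => (y, y)) ≤ #S := card_image_le
    rw [card_product] at h6
    have h8 := card_le_card h5
    have h9 : #S * #T = #S * (#T - 1) + #S := by
      obtain ⟨t, ht⟩ : ∃ t, #T = t + 1 := ⟨#T - 1, by omega⟩
      rw [ht]; simp; ring
    have h10 : (D - u) * (D - u) ≤ #S * (#T - 1) := Nat.mul_le_mul (by omega) (by omega)
    rw [pow_two]
    omega
  have hsum : #W * (D - u) ^ 2 ≤ ∑ y ∈ P, #(W.filter fun x => H x.1 y.1 ∧ H y.2 x.2) := by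
    calc #W * (D - u) ^ 2 ≤ ∑ x ∈ W, #(P.filter fun y => H x.1 y.1 ∧ H y.2 x.2) := by
          rw [← smul_eq_mul]; exact card_nsmul_le_sum _ _ _ key
      _ = _ := sum_card_bipartiteAbove_eq_sum_card_bipartiteBelow
          (fun (x y : V × V) => H x.1 y.1 ∧ H y.2 x.2)
  have hpos : 0 < #W * (D - u) ^ 2 :=
    Nat.mul_pos (card_pos.2 hW) (pow_pos (Nat.sub_pos_of_lt hu) _)
  have hPc : #P ≤ Fintype.card V ^ 2 := by
    rw [pow_two, ← Fintype.card_prod]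
    exact card_le_univ _
  by_contra! hc
  have hlt : ∀ y ∈ P, Fintype.card V ^ 2 * #(W.filter fun x => H x.1 y.1 ∧ H y.2 x.2) <
      #W * (D - u) ^ 2 := by
    intro y hy
    simp only [P, mem_filter, mem_univ, true_and] at hy
    exact hc y.1 y.2 hy.1 hy.2.1 hy.2.2
  have hPne : P.Nonempty := by
    by_contra hne
    rw [not_nonempty_iff_eq_empty] at hne
    rw [hne, sum_empty] at hsum
    omega
  have h1 := sum_lt_sum_of_nonempty hPne hlt
  rw [← mul_sum, sum_const, smul_eq_mul] at h1
  have h2 := Nat.mul_le_mul_left (Fintype.card V ^ 2) hsum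
  have h3 := Nat.mul_le_mul_right (#W * (D - u) ^ 2) hPc
  omega

lemma Expander.exists_absorber_aux [Nonempty V] (hE : Expander H o i D τ g r)
    (hr : 0 < r) (hτ0 : 0 < τ)
    (hD : 2 * τ ≤ D) (hDr : τ + r ≤ D) (hb : ∀ j, #(lab o j) ≤ #(lab i j) + g)
    (hb' : ∀ j, #(lab i j) ≤ #(lab o j) + g) {K : ℕ}
    (hK : Fintype.card V ≤ K * g) (U : Finset V) {c : ℝ} {N : ℕ}
    (hc1 : c ≤ 1) (hN : N < D) (hc : c * (Fintype.card V : ℝ) ^ 2 ≤ ((D - N : ℕ) : ℝ) ^ 2)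
    (hNr : N ≤ r)
    (m : ℕ) (hm : #U + (m + 1) * ((K + 3) * (2 * K + 6)) ≤ N) :
    ∃ Z, ∃ W : Finset (V × V), Absorber H (fun t s => o t = i s ∧ (t, s) ∉ W) 1 Z ∧
      (∀ v ∈ Z, v ∉ U) ∧ Z.length ≤ m * ((K + 3) * (2 * K + 6)) + 1 ∧
      (∀ x ∈ W, o x.1 = i x.2) ∧ (#W : ℝ) ≤ (1 - c) ^ m * (Fintype.card V : ℝ) ^ 2 := by
  set M := (K + 3) * (2 * K + 6) with hM
  have hM' : (K + 2) * (2 * K + 6) + (2 * K + 6) = M := by rw [hM]; ring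
  have e3 : (K + 1 + 1) * (2 * K + 6) = (K + 2) * (2 * K + 6) := by ring
  have e4 : (K + 1 + 2) * (2 * K + 6) = M := by rw [hM]
  have hMpos : 0 < (K + 2) * (2 * K + 6) := by positivity
  induction m with
  | zero =>
    have : #U < #(univ : Finset V) := by
      obtain ⟨v⟩ := ‹Nonempty V›
      have h1 := hE.out_deg v
      have h2 := card_le_univ (nbrOut H v)
      rw [card_univ]; omega
    obtain ⟨v, _, hv⟩ := exists_mem_sdiff_of_card_lt this
    refine ⟨[v], univ.filter fun x => o x.1 = i x.2, ⟨⟨by simp, by simp, by simp⟩, ?_⟩,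
      by simpa using hv, by simp, by simp, ?_⟩
    · intro Q hQ _ hts
      have := hts _ (List.getLast?_eq_getLast_of_ne_nil hQ.ne_nil) _
        (List.head?_eq_some_head hQ.ne_nil)
      simp at this
    · simp only [pow_zero, one_mul]
      rw [pow_two]
      exact_mod_cast (card_le_univ _).trans_eq (Fintype.card_prod V V)
  | succ m ih =>
    have e1 : (m + 1 + 1) * M = m * M + 2 * M := by ring
    have e2 : (m + 1) * M = m * M + M := by ring
    rw [e1] at hm
    obtain ⟨Z, W, hZ, hZU, hZl, hWl, hWc⟩ := ih (by omega)
    rcases W.eq_empty_or_nonempty with rfl | hWne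
    · refine ⟨Z, ∅, hZ, hZU, by omega, by simp, ?_⟩
      rw [card_empty, Nat.cast_zero]
      have : (0 : ℝ) ≤ 1 - c := by linarith
      positivity
    have c1 := List.toFinset_card_le Z
    have c2 := card_union_le U Z.toFinset
    obtain ⟨p, q, hp, hq, hpq, hpop⟩ := exists_popular_pair hE.out_deg hE.in_deg (U ∪ Z.toFinset)
      (u := N) (by omega) hN W hWne
    have hpos : 0 < #W * (D - N) ^ 2 :=
      Nat.mul_pos (card_pos.2 hWne) (pow_pos (Nat.sub_pos_of_lt hN) _)
    obtain ⟨x, hx⟩ := card_pos.1 (Nat.pos_of_mul_pos_left (lt_of_lt_of_le hpos hpop))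
    rw [mem_filter] at hx
    have hpq' : i p = o q := by
      rw [← hE.label _ _ hx.2.1, hE.label _ _ hx.2.2, hWl x hx.1]
    obtain ⟨B, hB, hBU, hBl⟩ := hE.exists_block hK q (K + 1) p
      (hE.mem_absorbSet hr hτ0 hD hDr hb hb' hK hpq') hpq _ hp hq (by omega) (by omega)
    simp only [mem_union, List.mem_toFinset, not_or] at hBU
    obtain ⟨l, hlP, hlU, hll⟩ := hE.exists_link_lists (fun _ _ h => h) hK hZ.isPath hB.isPath
      (fun v hv hv' => (hBU v hv').2 hv) U (by omega) (by omega)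
    refine ⟨_, W.filter fun x => ¬ (H x.1 p ∧ H q x.2), (hZ.or hB hlP).mono ?_, ?_, ?_, ?_, ?_⟩
    · intro t s h
      simp only [mem_filter, not_and] at h
      by_cases hts : (t, s) ∈ W
      · exact Or.inr (not_not.1 fun h' => h.2 hts (not_and.1 h'))
      · exact Or.inl ⟨h.1, hts⟩
    · intro v hv
      simp only [List.mem_append] at hv
      rcases hv with (hv | hv) | hv
      · exact hZU v hv
      · exact hlU v hv
      · exact (hBU v hv).1
    · simp only [List.length_append]
      omega
    · intro x hx
      exact hWl x (mem_filter.1 hx).1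
    · have h1 := card_filter_add_card_filter_not (s := W) (fun x => H x.1 p ∧ H q x.2)
      have h1' : (#(W.filter fun x => H x.1 p ∧ H q x.2) : ℝ) +
        #(W.filter fun x => ¬ (H x.1 p ∧ H q x.2)) = #W := by exact_mod_cast h1
      have h2 : (#W : ℝ) * ((D - N : ℕ) : ℝ) ^ 2 ≤
          (Fintype.card V : ℝ) ^ 2 * #(W.filter fun x => H x.1 p ∧ H q x.2) := by
        exact_mod_cast hpop
      have hn : (0 : ℝ) < (Fintype.card V : ℝ) ^ 2 := by positivity
      have h3 : c * (#W : ℝ) ≤ #(W.filter fun x => H x.1 p ∧ H q x.2) := by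
        refine le_of_mul_le_mul_left ?_ hn
        have := mul_le_mul_of_nonneg_left hc (Nat.cast_nonneg (α := ℝ) #W)
        linarith
      have h4 := mul_le_mul_of_nonneg_left hWc (show (0 : ℝ) ≤ 1 - c by linarith)
      rw [pow_succ]
      linarith

/-- In an expander there is a short path absorbing `m` paths one after the other. -/
lemma Expander.exists_absorber [Nonempty V] (hE : Expander H o i D τ g r) (hr : 0 < r)
    (hτ0 : 0 < τ) (hD : 2 * τ ≤ D) (hDr : τ + r ≤ D) (hb : ∀ j, #(lab o j) ≤ #(lab i j) + g)
    (hb' : ∀ j, #(lab i j) ≤ #(lab o j) + g) {K : ℕ}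
    (hK : Fintype.card V ≤ K * g) (U : Finset V) {c : ℝ} {N : ℕ}
    (hc1 : c ≤ 1) (hN : N < D)
    (hc : c * (Fintype.card V : ℝ) ^ 2 ≤ ((D - N : ℕ) : ℝ) ^ 2) (hNr : N ≤ r)
    {t : ℕ} (ht : (1 - c) ^ t * (Fintype.card V : ℝ) ^ 2 < 1)
    (m : ℕ) (hm : #U + (m + 1) * ((t + 2) * ((K + 3) * (2 * K + 6))) ≤ N) :
    ∃ Z, Absorber H (fun t s => o t = i s) m Z ∧ (∀ v ∈ Z, v ∉ U) ∧
      Z.length + (K + 3) * (2 * K + 6) ≤ (m + 1) * ((t + 2) * ((K + 3) * (2 * K + 6))) := by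
  have hM' : (K + 3) * (2 * K + 6) = (K + 2) * (2 * K + 6) + (2 * K + 6) := by ring
  set M := (K + 3) * (2 * K + 6) with hM
  have hT : (t + 2) * M = t * M + 2 * M := by ring
  have hT1 : (t + 1) * M = t * M + M := by ring
  have hone : ∀ U' : Finset V, #U' + (t + 1) * M ≤ N → ∃ Z, Absorber H (fun t s => o t = i s) 1 Z ∧
      (∀ v ∈ Z, v ∉ U') ∧ Z.length ≤ t * M + 1 := by
    intro U' hU'
    obtain ⟨Z, W, h1, h2, h3, h4, h5⟩ :=
      hE.exists_absorber_aux hr hτ0 hD hDr hb hb' hK U' hc1 hN hc hNr t hU'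
    have hW : W = ∅ := by
      have : (#W : ℝ) < 1 := lt_of_le_of_lt h5 ht
      rw [← card_eq_zero]
      have : #W < 1 := by exact_mod_cast this
      omega
    subst hW
    exact ⟨Z, h1.mono (by simp), h2, h3⟩
  induction m with
  | zero =>
    obtain ⟨Z, h1, h2, h3⟩ := hone U (by omega)
    exact ⟨Z, h1.isPath, h2, by omega⟩
  | succ m ih =>
    have e1 : (m + 1 + 1) * ((t + 2) * M) = (m + 1) * ((t + 2) * M) + (t + 2) * M := by ring
    rw [e1] at hm ⊢
    obtain ⟨Z, h1, h2, h3⟩ := ih (by omega)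
    have c1 := List.toFinset_card_le Z
    have c2 := card_union_le U Z.toFinset
    obtain ⟨Y, h4, h5, h6⟩ := hone (U ∪ Z.toFinset) (by omega)
    simp only [mem_union, List.mem_toFinset, not_or] at h5
    obtain ⟨l, hlP, hlU, hll⟩ := hE.exists_link_lists (fun _ _ h => h) hK h4.isPath h1.isPath
      (fun v hv hv' => (h5 v hv).2 hv') U (by omega) (by omega)
    refine ⟨_, h4.append h1 hlP, ?_, ?_⟩
    · intro v hv
      simp only [List.mem_append] at hv
      rcases hv with (hv | hv) | hv
      · exact (h5 v hv).1
      · exact hlU v hv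
      · exact h2 v hv
    · simp only [List.length_append]
      omega

end

section

variable {V : Type*} [Fintype V]

variable {H R : V → V → Prop} {o o' i : V → Bool} {D τ g r : ℕ}

lemma exists_perm_of_card_eq (h : ∀ j, #(lab o j) = #(lab i j)) :
    ∃ e : Equiv.Perm V, ∀ v, o v = i (e v) := by
  have h' : ∀ j, Nonempty ({v // o v = j} ≃ {v // i v = j}) := by
    intro j
    refine ⟨Fintype.equivOfCardEq ?_⟩
    rw [Fintype.card_subtype, Fintype.card_subtype]
    exact h j
  refine ⟨Equiv.ofFiberEquiv fun j => (h' j).some, fun v => ?_⟩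
  exact (Equiv.ofFiberEquiv_map (fun j => (h' j).some) v).symm

lemma exists_perm_of_path (h : ∀ j, #(lab o j) = #(lab i j)) (P : List V) (hnd : P.Nodup)
    (hP : P.IsChain fun u v => o u = i v) :
    ∃ e : Equiv.Perm V, (∀ v, o v = i (e v)) ∧ P.IsChain fun u v => e u = v := by
  induction P with
  | nil =>
    obtain ⟨e, he⟩ := exists_perm_of_card_eq h
    exact ⟨e, he, by simp⟩
  | cons a L ih =>
    rw [List.nodup_cons] at hnd
    obtain ⟨e, he, hL⟩ := ih hnd.2 hP.tail
    rcases L with _ | ⟨b, L⟩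
    · exact ⟨e, he, by simp⟩
    rw [List.isChain_cons_cons] at hP
    refine ⟨e * Equiv.swap a (e.symm b), fun v => ?_, ?_⟩
    · rw [Equiv.Perm.mul_apply, Equiv.swap_apply_def]
      split_ifs with h1 h2
      · rw [h1, hP.1]; simp
      · rw [h2, ← he, hP.1, he]; simp
      · exact he v
    · rw [List.isChain_cons_cons]
      refine ⟨by simp, ?_⟩
      rw [List.isChain_iff_getElem] at hL ⊢
      intro k hk
      have h1 := hL k hk
      rw [Equiv.Perm.mul_apply, Equiv.swap_apply_of_ne_of_ne, h1]
      · intro h2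
        exact hnd.1 (h2 ▸ List.getElem_mem _)
      · intro h2
        have h3 : (b :: L)[k + 1] = (b :: L)[0] := by
          rw [← h1, h2]; simp
        have := (List.Nodup.getElem_inj_iff hnd.2).1 h3
        omega

/-- Every cycle of `e` of length less than `L` meets `T`. -/
def ShortMeet (L : ℕ) (e : Equiv.Perm V) (T : Finset V) : Prop :=
  ∀ x a, 0 < a → a < L → (e ^ a) x = x → ∃ b : ℕ, (e ^ b) x ∈ T

lemma pow_mul_swap_apply {e : Equiv.Perm V} {t u w : V} (k : ℕ)
    (h : ∀ j, 0 < j → j ≤ k → ((e * Equiv.swap t u) ^ j) w ≠ t ∧ ((e * Equiv.swap t u) ^ j) w ≠ u) :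
    ((e * Equiv.swap t u) ^ (k + 1)) w = (e ^ (k + 1)) (Equiv.swap t u w) := by
  induction k with
  | zero => simp
  | succ k ih =>
    have h1 := h (k + 1) (by omega) (by omega)
    rw [pow_succ', Equiv.Perm.mul_apply, Equiv.Perm.mul_apply,
      Equiv.swap_apply_of_ne_of_ne h1.1 h1.2, ih fun j hj hj' => h j hj (by omega),
      ← Equiv.Perm.mul_apply, ← pow_succ']

lemma ShortMeet.mul_swap {L : ℕ} {e : Equiv.Perm V} {T : Finset V} (hs : ShortMeet L e T)
    {t u : V} (htu : t ≠ u) (hfar : ∀ a < L, (e ^ a) u ≠ t ∧ (e ^ a) t ≠ u) :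
    ShortMeet L (e * Equiv.swap t u) (T.erase t) := by
  intro x a ha haL hx
  set f := e * Equiv.swap t u with hf
  have hper : ∀ b, (f ^ a) ((f ^ b) x) = (f ^ b) x := by
    intro b
    rw [← Equiv.Perm.mul_apply, ← pow_add, add_comm, pow_add, Equiv.Perm.mul_apply, hx]
  have first : ∀ w, (f ^ a) w = w → w = t ∨ w = u → ∃ k, 0 < k ∧ k ≤ a ∧
      ((f ^ k) w = t ∨ (f ^ k) w = u) ∧
      ∀ j, 0 < j → j < k → (f ^ j) w ≠ t ∧ (f ^ j) w ≠ u := by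
    intro w hw hw'
    have hex : ∃ k, 0 < k ∧ ((f ^ k) w = t ∨ (f ^ k) w = u) := ⟨a, ha, by rwa [hw]⟩
    refine ⟨Nat.find hex, (Nat.find_spec hex).1, Nat.find_min' hex ⟨ha, by rwa [hw]⟩,
      (Nat.find_spec hex).2, fun j hj hj' => ?_⟩
    have := Nat.find_min hex hj'
    tauto
  have iter : ∀ w k, (∀ j, 0 < j → j < k → (f ^ j) w ≠ t ∧ (f ^ j) w ≠ u) → 0 < k →
      (f ^ k) w = (e ^ k) (Equiv.swap t u w) := by
    intro w k h hk
    obtain ⟨k, rfl⟩ : ∃ m, k = m + 1 := ⟨k - 1, by omega⟩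
    exact pow_mul_swap_apply k fun j hj hj' => h j hj (by omega)
  by_cases ht : ∃ b, (f ^ b) x = t
  · obtain ⟨b, hb⟩ := ht
    obtain ⟨k, hk0, hka, hk, hlt⟩ := first t (hb ▸ hper b) (Or.inl rfl)
    have hk' := iter t k hlt hk0
    rw [Equiv.swap_apply_left] at hk'
    rcases hk with hk | hk
    · exact absurd (hk'.symm.trans hk) (hfar k (by omega)).1
    · have hku : (e ^ k) u = u := hk'.symm.trans hk
      obtain ⟨c, hc⟩ := hs u k hk0 (by omega) hku
      have hmod : (e ^ c) u = (e ^ (c % k)) u := by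
        conv_lhs => rw [← Nat.mod_add_div c k, pow_add, Equiv.Perm.mul_apply, pow_mul]
        congr 1
        exact (Equiv.Perm.pow_apply_eq_self_of_apply_eq_self hku _)
      obtain ⟨d, hd0, hdk, hd⟩ : ∃ d, 0 < d ∧ d ≤ k ∧ (e ^ d) u ∈ T := by
        rcases Nat.eq_zero_or_pos (c % k) with h0 | h0
        · refine ⟨k, hk0, le_rfl, ?_⟩
          rw [hmod, h0] at hc
          rw [hku]
          simpa using hc
        · exact ⟨c % k, h0, (Nat.mod_lt _ hk0).le, hmod ▸ hc⟩
      have hd' := iter t d (fun j hj hj' => hlt j hj (by omega)) hd0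
      rw [Equiv.swap_apply_left] at hd'
      refine ⟨d + b, ?_⟩
      rw [pow_add, Equiv.Perm.mul_apply, hb, mem_erase, hd']
      refine ⟨?_, hd⟩
      rcases hdk.lt_or_eq with h | h
      · rw [← hd']
        exact (hlt d hd0 h).1
      · rw [h, hku]
        exact htu.symm
  · push Not at ht
    by_cases hu : ∃ b, (f ^ b) x = u
    · obtain ⟨b, hb⟩ := hu
      obtain ⟨k, hk0, hka, hk, hlt⟩ := first u (hb ▸ hper b) (Or.inr rfl)
      have hk' := iter u k hlt hk0
      rw [Equiv.swap_apply_right] at hk'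
      rcases hk with hk | hk
      · refine absurd ?_ (ht (k + b))
        rw [pow_add, Equiv.Perm.mul_apply, hb, hk]
      · exact absurd (hk'.symm.trans hk) (hfar k (by omega)).2
    · push Not at hu
      have hall : ∀ k, (f ^ k) x = (e ^ k) x := by
        intro k
        rcases Nat.eq_zero_or_pos k with rfl | hk
        · simp
        · rw [iter x k (fun j _ _ => ⟨ht j, hu j⟩) hk, Equiv.swap_apply_of_ne_of_ne]
          · simpa using ht 0
          · simpa using hu 0
      obtain ⟨b, hb⟩ := hs x a ha haL (by rw [← hall, hx])
      exact ⟨b, mem_erase.2 ⟨ht b, by rwa [hall]⟩⟩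

/-- A permutation extending the path with protected vertices `Pr`, all of whose other arcs lie in
`H` except those leaving `T`. -/
structure PartialFactor (H : V → V → Prop) (o i : V → Bool) (e₀ : Equiv.Perm V) (Pr : Finset V)
    (L : ℕ) (e : Equiv.Perm V) (T : Finset V) : Prop where
  disj : ∀ t ∈ T, t ∉ Pr
  fixed : ∀ v ∈ Pr, e v = e₀ v
  label : ∀ v ∉ Pr, o v = i (e v)
  arc : ∀ v ∉ Pr, v ∉ T → H v (e v)
  short : ShortMeet L e T

variable {e₀ : Equiv.Perm V} {Pr : Finset V} {L : ℕ} {e : Equiv.Perm V} {T : Finset V}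

lemma PartialFactor.swap (hH : ∀ x y, H x y → o x = i y) (h : PartialFactor H o i e₀ Pr L e T)
    {t u : V} (ht : t ∈ T) (hu : u ∉ Pr)
    (htu : t ≠ u) (hfar : ∀ a < L, (e ^ a) u ≠ t ∧ (e ^ a) t ≠ u) (harc : H t (e u)) :
    PartialFactor H o i e₀ Pr L (e * Equiv.swap t u) (insert u (T.erase t)) ∧
      ShortMeet L (e * Equiv.swap t u) (T.erase t) := by
  have hs := h.short.mul_swap htu hfar
  have htP := h.disj t ht
  refine ⟨⟨?_, ?_, ?_, ?_, ?_⟩, hs⟩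
  · intro v hv
    rcases mem_insert.1 hv with rfl | hv
    · exact hu
    · exact h.disj v (mem_of_mem_erase hv)
  · intro v hv
    rw [Equiv.Perm.mul_apply, Equiv.swap_apply_of_ne_of_ne, h.fixed v hv]
    · rintro rfl; exact htP hv
    · rintro rfl; exact hu hv
  · intro v hv
    rw [Equiv.Perm.mul_apply, Equiv.swap_apply_def]
    split_ifs with h1 h2
    · rw [h1, hH _ _ harc]
    · rw [h2, h.label u hu, ← hH _ _ harc, h.label t htP]
    · exact h.label v hv
  · intro v hv hvT
    rw [mem_insert, mem_erase, not_or, not_and] at hvT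
    rw [Equiv.Perm.mul_apply, Equiv.swap_apply_def]
    split_ifs with h1 h2
    · rw [h1]; exact harc
    · exact absurd h2 hvT.1
    · exact h.arc v hv (hvT.2 h1)
  · intro x a h0 h1 h2
    obtain ⟨b, hb⟩ := hs x a h0 h1 h2
    exact ⟨b, mem_insert_of_mem hb⟩

/-- The vertices `t` which can be repaired in `k + 1` swaps when their arc should enter `s`. -/
noncomputable def repairSet (H : V → V → Prop) (r : ℕ) (Pr : Finset V) (e : Equiv.Perm V)
    (s : V) : ℕ → Finset V
  | 0 => nbrIn H s
  | k + 1 => robOut H r ((repairSet H r Pr e s k \ Pr).image e)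

lemma PartialFactor.repair (hH : ∀ x y, H x y → o x = i y) (e : Equiv.Perm V) (s : V) (k : ℕ) :
    ∀ (f : Equiv.Perm V) (T W : Finset V) (t : V), PartialFactor H o i e₀ Pr L f T → t ∈ T →
      t ∈ repairSet H r Pr e s k → (∀ v ∉ W, f v = e v) → t ∈ W → f t = s →
      #W + k + 2 * L + 1 ≤ r → (k = 0 → ShortMeet L f (T.erase t)) →
      ∃ f' T', PartialFactor H o i e₀ Pr L f' T' ∧ #T' < #T := by
  induction k with
  | zero =>
    intro f T W t h ht htB _ _ hft _ hJ
    refine ⟨f, T.erase t, ⟨fun v hv => h.disj v (mem_of_mem_erase hv), h.fixed, h.label, ?_,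
      hJ rfl⟩, card_erase_lt_of_mem ht⟩
    intro v hv hvT
    by_cases hvt : v = t
    · rw [repairSet, mem_nbrIn] at htB
      rwa [hvt, hft]
    · exact h.arc v hv fun h' => hvT (mem_erase.2 ⟨hvt, h'⟩)
  | succ k ih =>
    intro f T W t h ht htB hfe htW hft hr _
    rw [repairSet, mem_robOut] at htB
    set C := ((range L).image fun a => (f ^ a) t) ∪ ((range L).image fun a => ((f ^ a).symm t))
      with hC
    have hCc : #C ≤ 2 * L := by
      refine (card_union_le _ _).trans ?_
      have h1 := card_image_le (s := range L) (f := fun a => (f ^ a) t)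
      have h2 := card_image_le (s := range L) (f := fun a => (f ^ a).symm t)
      rw [card_range] at h1 h2
      omega
    have hc1 := card_union_le W C
    have hc2 := card_image_le (s := W ∪ C) (f := e)
    obtain ⟨y, hy, hyU⟩ := exists_mem_sdiff_of_card_lt (U := (W ∪ C).image e)
      (lt_of_lt_of_le (by omega) htB)
    rw [mem_inter, mem_nbrOut, mem_image] at hy
    obtain ⟨hty, u, hu, rfl⟩ := hy
    rw [mem_sdiff] at hu
    have huW : u ∉ W ∪ C := fun h' => hyU (mem_image_of_mem _ h')
    rw [mem_union, not_or] at huW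
    have hutne : t ≠ u := by rintro rfl; exact huW.1 htW
    have hfu := hfe u huW.1
    have hfar : ∀ a < L, (f ^ a) u ≠ t ∧ (f ^ a) t ≠ u := by
      intro a ha
      refine ⟨fun h' => huW.2 ?_, fun h' => huW.2 ?_⟩
      · rw [hC, mem_union, mem_image, mem_image]
        exact Or.inr ⟨a, mem_range.2 ha, by rw [← h', Equiv.symm_apply_apply]⟩
      · rw [hC, mem_union, mem_image, mem_image]
        exact Or.inl ⟨a, mem_range.2 ha, h'⟩
    obtain ⟨h1, h2⟩ := h.swap hH ht hu.2 hutne hfar (by rwa [hfu])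
    by_cases huT : u ∈ T
    · refine ⟨_, _, h1, ?_⟩
      rw [insert_eq_self.2 (mem_erase.2 ⟨hutne.symm, huT⟩)]
      exact card_erase_lt_of_mem ht
    · have hcard : #(insert u (T.erase t)) = #T := by
        rw [card_insert_of_notMem fun h' => huT (mem_of_mem_erase h'), card_erase_of_mem ht]
        have := card_pos.2 ⟨t, ht⟩
        omega
      have hcW := card_insert_le u W
      obtain ⟨f', T', h3, h4⟩ := ih (f * Equiv.swap t u) (insert u (T.erase t)) (insert u W) u h1
        (mem_insert_self _ _) hu.1 (by
          intro v hv
          rw [mem_insert, not_or] at hv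
          rw [Equiv.Perm.mul_apply, Equiv.swap_apply_of_ne_of_ne _ hv.1, hfe v hv.2]
          rintro rfl; exact hv.2 htW) (mem_insert_self _ _) (by simp [hft]) (by omega)
        (fun _ => by
          rwa [erase_insert fun h' => huT (mem_of_mem_erase h')])
      exact ⟨f', T', h3, by omega⟩

lemma Expander.mem_repairSet (hE : Expander H o i D τ g r) (hr : 0 < r)
    (hb' : ∀ j, #(lab i j) ≤ #(lab o j) + g) {K : ℕ}
    (hK : Fintype.card V ≤ K * g) (hPr : 2 * #Pr ≤ g) (hD : 2 * τ + #Pr ≤ D)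
    (hDr : r + τ + g + #Pr ≤ D) (e : Equiv.Perm V) (he : ∀ v ∉ Pr, o v = i (e v)) {s t : V}
    (hts : o t = i s) : t ∈ repairSet H r Pr e s (2 * K + 1) := by
  have himg : ∀ B : Finset V, B ⊆ lab o (i s) → (B \ Pr).image e ⊆ lab i (i s) := by
    intro B hB y hy
    obtain ⟨v, hv, rfl⟩ := mem_image.1 hy
    rw [mem_sdiff] at hv
    rw [mem_lab, ← he v hv.2]
    exact mem_lab.1 (hB hv.1)
  have himc : ∀ B : Finset V, #B ≤ #((B \ Pr).image e) + #Pr := by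
    intro B
    rw [card_image_of_injective _ e.injective]
    have := le_card_sdiff Pr B
    omega
  have hX : D ≤ #(lab o (i s)) := (hE.in_deg s).trans (card_le_card (hE.nbrIn_subset s))
  have key : ∀ k, repairSet H r Pr e s k ⊆ lab o (i s) ∧ τ + #Pr ≤ #(repairSet H r Pr e s k) ∧
      (#(lab o (i s)) ≤ #(repairSet H r Pr e s k) + τ ∨ k * g ≤ 2 * #(repairSet H r Pr e s k)) := by
    intro k
    induction k with
    | zero =>
      have := hE.in_deg s
      exact ⟨hE.nbrIn_subset s, by rw [repairSet]; omega, by simp⟩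
    | succ k ih =>
      obtain ⟨h1, h2, h3⟩ := ih
      have h4 := himg _ h1
      have h5 := himc (repairSet H r Pr e s k)
      have h6 := hE.exp_out _ _ h4 (by omega)
      have : (k + 1) * g = k * g + g := by ring
      rw [repairSet]
      refine ⟨hE.robOut_subset hr h4, ?_, ?_⟩ <;> omega
  obtain ⟨h1, h2, h3⟩ := key (2 * K)
  have h4 : #(lab o (i s)) ≤ #(repairSet H r Pr e s (2 * K)) + τ := by
    have h5 := card_le_univ (lab o (i s))
    have h6 : 2 * K * g = 2 * (K * g) := by ring
    omega
  have h5 := himg _ h1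
  have h6 := himc (repairSet H r Pr e s (2 * K))
  have h7 := hE.out_deg t
  have h8 := hE.nbrOut_subset t
  rw [hts] at h8
  have h9 := card_le_card (union_subset h8 h5)
  have h10 := card_union_add_card_inter (nbrOut H t) ((repairSet H r Pr e s (2 * K) \ Pr).image e)
  have h11 := hb' (i s)
  rw [repairSet, mem_robOut]
  omega

/-- A path with balanced labels extends to a 1-factor all of whose cycles are long. -/
lemma Expander.exists_factor (hE : Expander H o i D τ g r)
    (hb' : ∀ j, #(lab i j) ≤ #(lab o j) + g) {K : ℕ}
    (hK : Fintype.card V ≤ K * g) {P : List V} (hnd : P.Nodup)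
    (ho : ∀ v ∉ P.dropLast, o' v = o v) (hbal : ∀ j, #(lab o' j) = #(lab i j))
    (hP : P.IsChain fun u v => o' u = i v) (hPr : 2 * P.length ≤ g) (hD : 2 * τ + P.length ≤ D)
    (hDr : r + τ + g + P.length ≤ D) (hL : 2 * K + 2 * L + 3 ≤ r) :
    ∃ e : Equiv.Perm V, (P.IsChain fun u v => e u = v) ∧ (∀ v ∉ P.dropLast, H v (e v)) ∧
      ∀ x a, 0 < a → a < L → (e ^ a) x ≠ x := by
  obtain ⟨e₀, he₀, hc₀⟩ := exists_perm_of_path hbal P hnd hP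
  set Pr := P.dropLast.toFinset with hPrdef
  have hPrc : #Pr ≤ P.length := by
    refine (List.toFinset_card_le _).trans ?_
    rw [List.length_dropLast]; omega
  have hmem : ∀ k (hk : k < P.length), P[k] ∈ Pr ↔ k + 1 < P.length := by
    intro k hk
    rw [hPrdef, List.mem_toFinset, List.mem_iff_getElem]
    constructor
    · rintro ⟨m, hm, hmk⟩
      rw [List.getElem_dropLast, List.Nodup.getElem_inj_iff hnd] at hmk
      rw [List.length_dropLast] at hm
      omega
    · intro h
      exact ⟨k, by rw [List.length_dropLast]; omega, by rw [List.getElem_dropLast]⟩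
  have hc₀' := List.isChain_iff_getElem.1 hc₀
  have start : PartialFactor H o i e₀ Pr L e₀ (univ \ Pr) := by
    refine ⟨fun t ht => (mem_sdiff.1 ht).2, fun _ _ => rfl, fun v hv => ?_, fun v hv hv' => ?_, ?_⟩
    · rw [← ho v (by simpa [hPrdef] using hv), he₀]
    · exact absurd (mem_sdiff.2 ⟨mem_univ v, hv⟩) hv'
    · intro x a _ _ _
      by_contra! hall
      have hall' : ∀ b : ℕ, (e₀ ^ b) x ∈ Pr := by
        intro b
        have := hall b
        simpa using this
      have hx : x ∈ P := by
        have := hall' 0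
        simp only [pow_zero, Equiv.Perm.one_apply, hPrdef, List.mem_toFinset] at this
        exact List.mem_of_mem_dropLast this
      obtain ⟨k, hk, hkx⟩ := List.mem_iff_getElem.1 hx
      have hit : ∀ b, ∃ h : k + b < P.length, (e₀ ^ b) x = P[k + b] := by
        intro b
        induction b with
        | zero => exact ⟨hk, by simpa using hkx.symm⟩
        | succ b ih =>
          obtain ⟨h1, h2⟩ := ih
          have h3 := hall' b
          rw [h2, hmem] at h3
          refine ⟨h3, ?_⟩
          rw [pow_succ', Equiv.Perm.mul_apply, h2]
          exact hc₀' (k + b) h3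
      obtain ⟨h, _⟩ := hit P.length
      omega
  have main : ∀ m (e : Equiv.Perm V) (T : Finset V), #T = m → PartialFactor H o i e₀ Pr L e T →
      ∃ e', PartialFactor H o i e₀ Pr L e' ∅ := by
    intro m
    induction m using Nat.strong_induction_on with
    | _ m ih =>
      intro e T hTm h
      rcases T.eq_empty_or_nonempty with rfl | ⟨t, ht⟩
      · exact ⟨e, h⟩
      · have hmemR := hE.mem_repairSet (by omega) hb' hK (by omega) (by omega) (by omega) e h.label
          (h.label t (h.disj t ht))
        obtain ⟨f, T', h1, h2⟩ := PartialFactor.repair hE.label e (e t) (2 * K + 1) e T {t} t h ht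
          hmemR (fun _ _ => rfl) (mem_singleton_self t) rfl
          (by rw [card_singleton]; omega) (by omega)
        exact ih _ (hTm ▸ h2) f T' rfl h1
  obtain ⟨e, he⟩ := main _ _ _ rfl start
  refine ⟨e, ?_, fun v hv => he.arc v (by simpa [hPrdef] using hv) (by simp), ?_⟩
  · rw [List.isChain_iff_getElem]
    intro k hk
    rw [he.fixed _ ((hmem k (by omega)).2 hk)]
    exact hc₀' k hk
  · intro x a h0 h1 h2
    obtain ⟨b, hb⟩ := he.short x a h0 h1 h2
    simp at hb

end

section

variable {V : Type*} [Fintype V]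

variable {H R : V → V → Prop} {o o' i : V → Bool} {D τ g r : ℕ}

lemma exists_orbit_list (e : Equiv.Perm V) (x : V) : ∃ C : List V, C.Nodup ∧ 0 < C.length ∧
    (∀ k (hk : k < C.length), C[k] = (e ^ k) x) ∧ (e ^ C.length) x = x ∧
    ∀ v, v ∈ C ↔ e v ∈ C := by
  have hex : ∃ a, 0 < a ∧ (e ^ a) x = x :=
    ⟨orderOf e, orderOf_pos e, by rw [pow_orderOf_eq_one]; rfl⟩
  obtain ⟨ha0, hax⟩ := Nat.find_spec hex
  have hmin : ∀ b, 0 < b → b < Nat.find hex → (e ^ b) x ≠ x := fun b hb hb' h =>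
    Nat.find_min hex hb' ⟨hb, h⟩
  generalize Nat.find hex = a at ha0 hax hmin
  have hinj : ∀ k m, k < m → m < a → (e ^ k) x ≠ (e ^ m) x := by
    intro k m hkm hm h
    refine hmin (m - k) (by omega) (by omega) ((e ^ k).injective ?_)
    rw [← Equiv.Perm.mul_apply, ← pow_add, h]
    congr 2; omega
  have hmem : ∀ v, v ∈ (List.range a).map (fun k => (e ^ k) x) ↔ ∃ k, k < a ∧ (e ^ k) x = v := by
    intro v; simp
  refine ⟨(List.range a).map fun k => (e ^ k) x, ?_, by simpa using ha0, by simp,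
    by simpa using hax,
    fun v => ?_⟩
  · refine List.Nodup.map_on ?_ List.nodup_range
    intro k hk m hm h
    rw [List.mem_range] at hk hm
    rcases lt_trichotomy k m with h' | h' | h'
    · exact absurd h (hinj k m h' hm)
    · exact h'
    · exact absurd h.symm (hinj m k h' hk)
  · rw [hmem, hmem]
    constructor
    · rintro ⟨k, hk, rfl⟩
      rcases Nat.lt_or_ge (k + 1) a with h | h
      · exact ⟨k + 1, h, by rw [pow_succ', Equiv.Perm.mul_apply]⟩
      · refine ⟨0, ha0, ?_⟩
        have : a = k + 1 := by omega
        rw [this, pow_succ', Equiv.Perm.mul_apply] at hax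
        simpa using hax.symm
    · rintro ⟨k, hk, hkv⟩
      rcases k with _ | k
      · refine ⟨a - 1, by omega, e.injective ?_⟩
        rw [← hkv, ← Equiv.Perm.mul_apply, ← pow_succ']
        have : a - 1 + 1 = a := by omega
        rw [this, hax]; simp
      · refine ⟨k, by omega, e.injective ?_⟩
        rw [← hkv, pow_succ', Equiv.Perm.mul_apply]

lemma exists_spanning_of_absorber (hH : ∀ x y, H x y → o x = i y) (hR : ∀ x y, H x y → R x y)
    {L : ℕ} {e : Equiv.Perm V}
    (hlong : ∀ x a, 0 < a → a < L → (e ^ a) x ≠ x) (m : ℕ) : ∀ (X Z Y : List V),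
    Absorber H (fun t s => o t = i s) m Z → IsPath R (X ++ Z ++ Y) →
    (∀ v ∉ X ++ Z ++ Y, H v (e v)) → (∀ v, v ∈ X ++ Z ++ Y ↔ e v ∈ X ++ Z ++ Y) →
    Fintype.card V ≤ (X ++ Z ++ Y).length + m * L →
    ∃ C, IsPath R C ∧ C.head? = (X ++ Z ++ Y).head? ∧ C.getLast? = (X ++ Z ++ Y).getLast? ∧
      ∀ v, v ∈ C := by
  induction m with
  | zero =>
    intro X Z Y _ hP _ _ hc
    refine ⟨_, hP, rfl, rfl, fun v => ?_⟩
    have h1 := List.toFinset_card_of_nodup hP.nodup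
    have h2 : (X ++ Z ++ Y).toFinset = univ :=
      (card_eq_iff_eq_univ _).1 (le_antisymm (card_le_univ _) (by omega))
    rw [← List.mem_toFinset, h2]
    exact mem_univ v
  | succ m ih =>
    intro X Z Y hZ hP harc hinv hc
    by_cases hall : ∀ v, v ∈ X ++ Z ++ Y
    · exact ⟨_, hP, rfl, rfl, hall⟩
    push Not at hall
    obtain ⟨s, hs⟩ := hall
    obtain ⟨Q, hQnd, hQ0, hQk, hQs, hQinv⟩ := exists_orbit_list e s
    have hQdis : ∀ v ∈ Q, v ∉ X ++ Z ++ Y := by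
      have : ∀ k : ℕ, (e ^ k) s ∉ X ++ Z ++ Y := by
        intro k
        induction k with
        | zero => simpa using hs
        | succ k ih => rw [pow_succ', Equiv.Perm.mul_apply, ← hinv]; exact ih
      intro v hv
      obtain ⟨k, hk, rfl⟩ := List.mem_iff_getElem.1 hv
      rw [hQk]; exact this k
    have hQne : Q ≠ [] := List.ne_nil_of_length_pos hQ0
    have hQP : IsPath H Q := by
      refine ⟨?_, hQnd, hQne⟩
      rw [List.isChain_iff_getElem]
      intro k hk
      have h1 := harc _ (hQdis Q[k] (List.getElem_mem _))
      have h2 : Q[k + 1] = e Q[k] := by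
        rw [hQk, hQk, pow_succ', Equiv.Perm.mul_apply]
      rwa [h2]
    have hlast : e (Q.getLast hQne) = s := by
      rw [List.getLast_eq_getElem, hQk, ← Equiv.Perm.mul_apply, ← pow_succ']
      have : Q.length - 1 + 1 = Q.length := by omega
      rw [this, hQs]
    have hhead : Q.head hQne = s := by
      rw [List.head_eq_getElem, hQk]; simp
    obtain ⟨Z', h1, h2, h3, h4⟩ := hZ.2 Q hQP (fun v hv hv' => hQdis v hv (by simp [hv'])) (by
      intro t ht s' hs'
      rw [List.getLast?_eq_getLast_of_ne_nil hQne] at ht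
      rw [List.head?_eq_some_head hQne] at hs'
      cases ht; cases hs'
      rw [hhead, ← hlast]
      exact hH _ _ (harc _ (hQdis _ (List.getLast_mem hQne))))
    have hp := perm_replace (X := X) (Y := Y) h3
    have hmem : ∀ v, v ∈ X ++ Z' ++ Y ↔ v ∈ X ++ Z ++ Y ∨ v ∈ Q := by
      intro v
      rw [hp.mem_iff, List.mem_append]
    have hlen := hp.length_eq
    have hQL : L ≤ Q.length := by
      by_contra! hlt
      exact hlong s _ hQ0 hlt hQs
    have hP' : IsPath R (X ++ Z' ++ Y) :=
      ⟨isChain_replace hP.chain (h4.isPath.chain.imp fun _ _ h => hR _ _ h) h1 h2,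
        nodup_of_perm_append hp hP.nodup hQnd hQdis, by simp [h4.isPath.ne_nil]⟩
    have e1 : (m + 1) * L = m * L + L := by ring
    have hlen' : (X ++ Z ++ Y ++ Q).length = (X ++ Z ++ Y).length + Q.length :=
      List.length_append
    obtain ⟨C, c1, c2, c3, c4⟩ := ih X Z' Y h4 hP'
      (fun v hv => harc v fun h' => hv ((hmem v).2 (Or.inl h')))
      (fun v => by rw [hmem, hmem, hinv v, hQinv v]) (by omega)
    exact ⟨C, c1, c2.trans (head?_replace h1), c3.trans (getLast?_replace h2), c4⟩

lemma exists_hamilton_of_list (hV : 2 ≤ Fintype.card V) {C : List V} (hC : IsPath R C)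
    (hall : ∀ v, v ∈ C) (hclose : R (C.getLast hC.ne_nil) (C.head hC.ne_nil)) :
    ∃ f : ZMod (Fintype.card V) → V, Function.Bijective f ∧ ∀ k, R (f k) (f (k + 1)) := by
  have hlen : C.length = Fintype.card V := by
    rw [← List.toFinset_card_of_nodup hC.nodup]
    have : C.toFinset = univ := eq_univ_of_forall fun v => List.mem_toFinset.2 (hall v)
    rw [this, card_univ]
  have : NeZero (Fintype.card V) := ⟨by omega⟩
  have : Fact (1 < Fintype.card V) := ⟨hV⟩
  have hlt : ∀ k : ZMod (Fintype.card V), k.val < C.length := fun k => by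
    rw [hlen]; exact ZMod.val_lt k
  refine ⟨fun k => C[k.val]'(hlt k), ?_, fun k => ?_⟩
  · rw [Fintype.bijective_iff_injective_and_card]
    refine ⟨fun k m h => ?_, by rw [ZMod.card]⟩
    exact ZMod.val_injective _ ((List.Nodup.getElem_inj_iff hC.nodup).1 h)
  · have hv : (k + 1).val = (k.val + 1) % Fintype.card V := by
      rw [ZMod.val_add, ZMod.val_one]
    have hk := hlt k
    by_cases h : k.val + 1 < Fintype.card V
    · rw [Nat.mod_eq_of_lt h] at hv
      simp only [hv]
      exact List.isChain_iff_getElem.1 hC.chain _ (by omega)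
    · have h' : k.val + 1 = Fintype.card V := by omega
      rw [h', Nat.mod_self] at hv
      have h2 : k.val = C.length - 1 := by omega
      simp only [hv, h2]
      rw [List.getLast_eq_getElem, List.head_eq_getElem] at hclose
      exact hclose

/-- The absorbing path and the long cycles of a 1-factor containing it yield a Hamilton cycle. -/
lemma exists_hamilton_of_factor (hH : ∀ x y, H x y → o x = i y) (hR : ∀ x y, H x y → R x y)
    {L : ℕ} (hV : 2 ≤ Fintype.card V) {e : Equiv.Perm V}
    (hlong : ∀ x a, 0 < a → a < L → (e ^ a) x ≠ x) {X Z : List V} {m : ℕ}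
    (hZ : Absorber H (fun t s => o t = i s) m Z) (hP : IsPath R (X ++ Z))
    (heP : (X ++ Z).IsChain fun u v => e u = v) (harc : ∀ v ∉ (X ++ Z).dropLast, H v (e v))
    (hm : Fintype.card V ≤ m * L) :
    ∃ f : ZMod (Fintype.card V) → V, Function.Bijective f ∧ ∀ k, R (f k) (f (k + 1)) := by
  obtain ⟨C, hCnd, hC0, hCk, hCs, hCinv⟩ := exists_orbit_list e ((X ++ Z).head hP.ne_nil)
  have hP0 : 0 < (X ++ Z).length := List.length_pos_of_ne_nil hP.ne_nil
  have hPk : ∀ k (hk : k < (X ++ Z).length), (X ++ Z)[k] = (e ^ k) ((X ++ Z).head hP.ne_nil) := by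
    intro k
    induction k with
    | zero => intro hk; rw [List.head_eq_getElem]; simp
    | succ k ih =>
      intro hk
      rw [pow_succ', Equiv.Perm.mul_apply, ← ih (by omega)]
      exact (List.isChain_iff_getElem.1 heP k hk).symm
  have hle : (X ++ Z).length ≤ C.length := by
    by_contra! hlt
    have h1 := hPk _ hlt
    rw [hCs, List.head_eq_getElem, List.Nodup.getElem_inj_iff hP.nodup] at h1
    omega
  obtain ⟨Y, hY⟩ : X ++ Z <+: C := by
    rw [List.prefix_iff_getElem]
    refine ⟨hle, fun k hk => ?_⟩
    rw [hPk, hCk]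
  have hRe : ∀ v, R v (e v) := by
    intro v
    by_cases hv : v ∈ (X ++ Z).dropLast
    · obtain ⟨k, hk, rfl⟩ := List.mem_iff_getElem.1 hv
      rw [List.length_dropLast] at hk
      rw [List.getElem_dropLast]
      have h1 := List.isChain_iff_getElem.1 heP k (by omega)
      have h2 := List.isChain_iff_getElem.1 hP.chain k (by omega)
      rwa [h1]
    · exact hR _ _ (harc v hv)
  have hCP : IsPath R C := by
    refine ⟨?_, hCnd, List.ne_nil_of_length_pos hC0⟩
    rw [List.isChain_iff_getElem]
    intro k hk
    have h2 : C[k + 1] = e C[k] := by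
      rw [hCk, hCk, pow_succ', Equiv.Perm.mul_apply]
    rw [h2]; exact hRe _
  have hlast : e (C.getLast hCP.ne_nil) = C.head hCP.ne_nil := by
    rw [List.getLast_eq_getElem, List.head_eq_getElem, hCk, hCk, ← Equiv.Perm.mul_apply,
      ← pow_succ']
    have : C.length - 1 + 1 = C.length := by omega
    rw [this, hCs]; simp
  subst hY
  obtain ⟨C', c1, c2, c3, c4⟩ := exists_spanning_of_absorber hH hR hlong m X Z Y hZ hCP
    (fun v hv => harc v fun h' => hv (by
      rw [List.mem_append]; exact Or.inl (List.mem_of_mem_dropLast h'))) hCinv (by omega)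
  refine exists_hamilton_of_list hV c1 c4 ?_
  rw [List.head?_eq_some_head c1.ne_nil, List.head?_eq_some_head hCP.ne_nil] at c2
  rw [List.getLast?_eq_getLast_of_ne_nil c1.ne_nil, List.getLast?_eq_getLast_of_ne_nil
    hCP.ne_nil] at c3
  rw [Option.some.inj c2, Option.some.inj c3, ← hlast]
  exact hRe _

end

section

variable {V : Type*} [Fintype V]
variable {H G : V → V → Prop} {o o' i : V → Bool} {D τ g r : ℕ}

/-- An expander together with a small matching of edges that balances the labels has a Hamilton
cycle. -/
lemma Expander.exists_hamilton (hE : Expander H o i D τ g r) (hG : ∀ x y, H x y → G x y)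
    (hV : 2 ≤ Fintype.card V) (hr : 0 < r) (hτ0 : 0 < τ)
    (hb : ∀ j, #(lab o j) ≤ #(lab i j) + g) (hb' : ∀ j, #(lab i j) ≤ #(lab o j) + g)
    {M : List (V × V)} (hM : ∀ e ∈ M, G e.1 e.2 ∧ o' e.1 = i e.2)
    (hnd : (M.flatMap fun e => [e.1, e.2]).Nodup)
    (ho : ∀ v, (∀ e ∈ M, e.1 ≠ v) → o' v = o v) (hbal : ∀ j, #(lab o' j) = #(lab i j))
    {K m L N t : ℕ} {c : ℝ} (hK : Fintype.card V ≤ K * g) (hm : Fintype.card V ≤ m * L)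
    (hc1 : c ≤ 1) (hc : c * (Fintype.card V : ℝ) ^ 2 ≤ ((D - N : ℕ) : ℝ) ^ 2)
    (ht : (1 - c) ^ t * (Fintype.card V : ℝ) ^ 2 < 1)
    (hN : (M.length + 1) * (K + 5) + (m + 1) * ((t + 2) * ((K + 3) * (2 * K + 6))) ≤ N)
    (hNg : 2 * N ≤ g) (hNr : N ≤ r) (hDr : r + 2 * τ + g + N < D) (hL : 2 * K + 2 * L + 3 ≤ r) :
    ∃ f : ZMod (Fintype.card V) → V, Function.Bijective f ∧ ∀ k, G (f k) (f (k + 1)) := by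
  have : Nonempty V := Fintype.card_pos_iff.1 (by omega)
  set U : Finset V := (M.flatMap fun e => [e.1, e.2]).toFinset with hU
  set T : Finset V := (M.map Prod.fst).toFinset with hT
  have hUc : #U ≤ 2 * M.length := by
    refine (List.toFinset_card_le _).trans ?_
    clear_value U T
    clear * -
    induction M with
    | nil => simp
    | cons e M ih => simp at *; omega
  have hMK : (M.length + 1) * (K + 5) = (M.length + 1) * (K + 3) + 2 * M.length + 2 := by ring
  have hMK' : (M.length + 1) * (K + 3) = M.length * (K + 3) + (K + 3) := by ring
  obtain ⟨Z, hZ, hZU, hZl⟩ := hE.exists_absorber hr hτ0 (by omega) (by omega) hb hb' hK U hc1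
    (by omega : N < D) hc hNr ht m (by omega)
  have hTm : ∀ v, v ∉ T ↔ ∀ e ∈ M, e.1 ≠ v := by
    intro v
    simp only [hT, List.mem_toFinset, List.mem_map, not_exists, not_and, ne_eq]
  have hTU : T ⊆ U := by
    intro v hv
    simp only [hT, hU, List.mem_toFinset, List.mem_map, List.mem_flatMap] at hv ⊢
    obtain ⟨e, he, rfl⟩ := hv
    exact ⟨e, he, by simp⟩
  set R : V → V → Prop := fun x y => G x y ∧ o' x = i y with hR
  have hHR : ∀ x y, x ∉ T → H x y → R x y := fun x y hx h =>
    ⟨hG x y h, (ho x ((hTm x).1 hx)).trans (hE.label x y h)⟩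
  have hZR : IsPath R Z := by
    refine ⟨?_, hZ.isPath.nodup, hZ.isPath.ne_nil⟩
    refine List.IsChain.imp_of_mem_imp (fun x y hx _ h => hHR x y (fun h' => hZU x hx (hTU h')) h)
      hZ.isPath.chain
  have hMU : ∀ e ∈ M, e.1 ∈ U ∧ e.2 ∈ U ∧ e.2 ∉ T := by
    intro e he
    refine ⟨?_, ?_, ?_⟩
    · simp only [hU, List.mem_toFinset, List.mem_flatMap]; exact ⟨e, he, by simp⟩
    · simp only [hU, List.mem_toFinset, List.mem_flatMap]; exact ⟨e, he, by simp⟩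
    · rw [hTm]
      intro e' he' h
      rw [List.nodup_flatMap] at hnd
      by_cases hee : e = e'
      · subst hee
        have := hnd.1 e he
        simp [h] at this
      · have hsy : Std.Symm (Function.onFun List.Disjoint fun e : V × V => [e.1, e.2]) :=
          ⟨fun a b h => List.Disjoint.symm h⟩
        have := hnd.2.forall he he' hee
        simp [Function.onFun, h] at this
  obtain ⟨X, hX, hXU, hXM, hXl⟩ := hE.exists_path_through T hHR hK hZR U hTU hZU M hM hMU hnd
    (by omega) (by omega)
  have hdrop : ∀ v ∉ (X ++ Z).dropLast, v ∉ T := by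
    intro v hv hvT
    apply hv
    simp only [hT, List.mem_toFinset, List.mem_map] at hvT
    obtain ⟨e, he, rfl⟩ := hvT
    rw [List.dropLast_append_of_ne_nil hZR.ne_nil]
    exact List.mem_append_left _ (hXM e he)
  have hPl : (X ++ Z).length ≤ N := by rw [List.length_append]; omega
  obtain ⟨e, h1, h2, h3⟩ := hE.exists_factor (L := L) hb' hK hX.nodup
    (fun v hv => ho v ((hTm v).1 (hdrop v hv))) hbal (hX.chain.imp fun _ _ h => h.2)
    (by omega) (by omega) (by omega) hL
  exact exists_hamilton_of_factor hE.label hG hV h3 hZ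
    ⟨hX.chain.imp fun _ _ h => h.1, hX.nodup, hX.ne_nil⟩ h1 h2 hm

end

section

variable {V : Type*} [Fintype V]
variable {H G : V → V → Prop} {o o' i : V → Bool} {δ τ μ : ℝ}

/-- The number of edges from `S` to `T`. -/
noncomputable def edges (H : V → V → Prop) (S T : Finset V) : ℕ := ∑ x ∈ S, #(nbrOut H x ∩ T)

lemma edges_eq_card (H : V → V → Prop) (S T : Finset V) :
    edges H S T = #((S ×ˢ T).filter fun p => H p.1 p.2) := by
  rw [edges, card_filter, sum_product]
  refine sum_congr rfl fun x _ => ?_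
  rw [← card_filter]
  congr 1
  ext y
  simp [and_comm]

lemma edges_eq_sum_nbrIn (H : V → V → Prop) (S T : Finset V) :
    edges H S T = ∑ y ∈ T, #(nbrIn H y ∩ S) := by
  rw [edges_eq_card, card_filter, sum_product_right]
  refine sum_congr rfl fun x _ => ?_
  rw [← card_filter]
  congr 1
  ext y
  simp [and_comm]

lemma edges_le_of_out {S T : Finset V} {a : ℝ} (h : ∀ x ∈ S, (#(nbrOut H x ∩ T) : ℝ) ≤ a) :
    (edges H S T : ℝ) ≤ #S * a := by
  rw [edges, Nat.cast_sum]
  simpa using sum_le_card_nsmul S _ a h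

lemma edges_le_of_in {S T : Finset V} {a : ℝ} (h : ∀ y ∈ T, (#(nbrIn H y ∩ S) : ℝ) ≤ a) :
    (edges H S T : ℝ) ≤ #T * a := by
  rw [edges_eq_sum_nbrIn, Nat.cast_sum]
  simpa using sum_le_card_nsmul T _ a h

/-- The density conditions, relative to the number of vertices, that make a labelled digraph a
robust expander. -/
structure Dense (H : V → V → Prop) (o i : V → Bool) (δ τ μ : ℝ) : Prop where
  label : ∀ x y, H x y → o x = i y
  out_deg : ∀ x, δ * Fintype.card V ≤ #(nbrOut H x)
  in_deg : ∀ x, δ * Fintype.card V ≤ #(nbrIn H x)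
  block : ∀ j S T, S ⊆ lab o j → T ⊆ lab i j → τ * Fintype.card V ≤ #S → τ * Fintype.card V ≤ #T →
    #(lab i j) - μ * Fintype.card V ≤ #S + #T → μ * (Fintype.card V : ℝ) ^ 2 ≤ edges H S T
  cut : ∀ S : Finset V, τ * Fintype.card V ≤ #S → #S + τ * Fintype.card V ≤ Fintype.card V →
    μ * (Fintype.card V : ℝ) ^ 2 ≤ edges H Sᶜ S

lemma Dense.expander (h : Dense H o i δ τ μ) (hV : 0 < Fintype.card V) (hμ : 0 < μ) {D t r g : ℕ}
    (hD : (D : ℝ) ≤ δ * Fintype.card V) (ht : τ * Fintype.card V ≤ t)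
    (hr : (r : ℝ) ≤ μ / 4 * Fintype.card V) (hg : (g : ℝ) ≤ μ / 4 * Fintype.card V)
    (hb' : ∀ j, (#(lab i j) : ℝ) ≤ #(lab o j) + μ / 4 * Fintype.card V) :
    Expander H o i D t g r := by
  have hV' : (0 : ℝ) < Fintype.card V := by exact_mod_cast hV
  have hpos : 0 < μ * (Fintype.card V : ℝ) ^ 2 := by positivity
  have hn : ∀ S : Finset V, (#S : ℝ) ≤ Fintype.card V := fun S => by exact_mod_cast card_le_univ S
  have hn' : ∀ S : Finset V, (#S : ℝ) * r ≤ μ / 4 * (Fintype.card V : ℝ) ^ 2 := fun S => by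
    calc (#S : ℝ) * r ≤ Fintype.card V * (μ / 4 * Fintype.card V) :=
          mul_le_mul (hn S) hr (by positivity) (by positivity)
      _ = _ := by ring
  refine ⟨h.label, fun x => ?_, fun x => ?_, ?_, ?_, ?_⟩
  · exact_mod_cast hD.trans (h.out_deg x)
  · exact_mod_cast hD.trans (h.in_deg x)
  · intro j S hS hSt
    by_contra! hc
    have h1 : #(lab o j) ≤ #(lab o j \ robOut H r S) + #(robOut H r S) := by
      have := le_card_sdiff (robOut H r S) (lab o j); omega
    have h2 : (t : ℝ) ≤ #(lab o j \ robOut H r S) := by exact_mod_cast (by omega)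
    have h3 : (#(lab o j) : ℝ) ≤ #(lab o j \ robOut H r S) + #S + g := by exact_mod_cast (by omega)
    have h4 := h.block j (lab o j \ robOut H r S) S sdiff_subset hS (ht.trans h2)
      (ht.trans (by exact_mod_cast hSt)) (by linarith [hb' j])
    have h5 := edges_le_of_out (H := H) (S := lab o j \ robOut H r S) (T := S) (a := r) (by
      intro x hx
      rw [mem_sdiff, mem_robOut, not_le] at hx
      exact_mod_cast hx.2.le)
    have := hn' (lab o j \ robOut H r S)
    linarith
  · intro j S hS hSt
    by_contra! hc
    have h1 : #(lab i j) ≤ #(lab i j \ robIn H r S) + #(robIn H r S) := by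
      have := le_card_sdiff (robIn H r S) (lab i j); omega
    have h2 : (t : ℝ) ≤ #(lab i j \ robIn H r S) := by exact_mod_cast (by omega)
    have h3 : (#(lab i j) : ℝ) ≤ #S + #(lab i j \ robIn H r S) + g := by exact_mod_cast (by omega)
    have h4 := h.block j S (lab i j \ robIn H r S) hS sdiff_subset
      (ht.trans (by exact_mod_cast hSt)) (ht.trans h2) (by nlinarith)
    have h5 := edges_le_of_in (H := H) (T := lab i j \ robIn H r S) (S := S) (a := r) (by
      intro x hx
      rw [mem_sdiff, mem_robIn, not_le] at hx
      exact_mod_cast hx.2.le)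
    have := hn' (lab i j \ robIn H r S)
    linarith
  · intro S hSt
    by_contra! hc
    have h4 := h.cut S (ht.trans (by exact_mod_cast hSt)) (by
      have : (#S : ℝ) + t ≤ Fintype.card V := by exact_mod_cast hc.1.le
      linarith)
    have h6 : #(Sᶜ ∩ robOut H r S) ≤ g := by
      have h7 : #(S ∪ robOut H r S) = #S + #(Sᶜ ∩ robOut H r S) := by
        rw [← card_union_of_disjoint]
        · congr 1; ext x; simp; tauto
        · rw [Finset.disjoint_left]; intro x hx; simp [hx]
      omega
    have h5 : edges H Sᶜ S = edges H (Sᶜ ∩ robOut H r S) S + edges H (Sᶜ \ robOut H r S) S := by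
      simp only [edges]
      rw [← sum_union (disjoint_sdiff_inter _ _).symm, union_comm, sdiff_union_inter]
    have h7 := edges_le_of_out (H := H) (S := Sᶜ \ robOut H r S) (T := S) (a := r) (by
      intro x hx
      rw [mem_sdiff, mem_robOut, not_le] at hx
      exact_mod_cast hx.2.le)
    have h8 := edges_le_of_out (H := H) (S := Sᶜ ∩ robOut H r S) (T := S) (a := Fintype.card V)
      (fun x hx => hn _)
    have := hn' (Sᶜ \ robOut H r S)
    have h9 : (#(Sᶜ ∩ robOut H r S) : ℝ) * Fintype.card V ≤ μ / 4 * (Fintype.card V : ℝ) ^ 2 := by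
      calc (#(Sᶜ ∩ robOut H r S) : ℝ) * Fintype.card V
          ≤ (μ / 4 * Fintype.card V) * Fintype.card V := by
            gcongr
            exact le_trans (by exact_mod_cast h6) hg
        _ = _ := by ring
    rw [h5] at h4
    push_cast at h4
    linarith

set_option maxHeartbeats 1600000 in
/-- A dense labelled digraph together with a small balancing matching has a Hamilton cycle. -/
lemma exists_hamilton_of_dense (hδ : 0 < δ) (hδ1 : δ ≤ 1) (hτ : 0 < τ) (hτδ : 4 * τ ≤ δ)
    (hμ : 0 < μ) (hμδ : 4 * μ ≤ δ) : ∃ ε : ℝ, 0 < ε ∧ ∃ n₀ : ℕ, ∀ (V : Type) [Fintype V]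
    (H G : V → V → Prop) (o o' i : V → Bool) (M : List (V × V)), n₀ ≤ Fintype.card V →
    Dense H o i δ τ μ → (∀ x y, H x y → G x y) →
    (∀ e ∈ M, G e.1 e.2 ∧ o' e.1 = i e.2) → (M.flatMap fun e => [e.1, e.2]).Nodup →
    (∀ v, (∀ e ∈ M, e.1 ≠ v) → o' v = o v) → (∀ j, #(lab o' j) = #(lab i j)) →
    (M.length : ℝ) ≤ ε * Fintype.card V →
    ∃ f : ZMod (Fintype.card V) → V, Function.Bijective f ∧ ∀ k, G (f k) (f (k + 1)) := by
  obtain ⟨K, hK⟩ := exists_nat_ge (8 / μ)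
  obtain ⟨m, hm⟩ := exists_nat_ge (64 / μ)
  set B : ℕ := (K + 3) * (2 * K + 6) with hB
  obtain ⟨q, hq⟩ := exists_nat_ge (64 * ((m + 1) * B) / μ + 1)
  have hB0 : (0 : ℝ) < B := by rw [hB]; positivity
  have hq0 : (0 : ℝ) < q := lt_of_lt_of_le (by positivity) hq
  set c : ℝ := δ ^ 2 / 4 with hc
  have hc0 : 0 < c := by positivity
  have hc1 : c ≤ 1 := by rw [hc]; nlinarith
  have hlim := tendsto_pow_const_mul_const_pow_of_abs_lt_one 2 (r := 1 - c)
    (by rw [abs_lt]; constructor <;> linarith)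
  have hlim' := (hlim.const_mul ((q : ℝ) ^ 2)).eventually_lt_const (u := 1) (by simp)
  obtain ⟨t₀, ht₀⟩ := Filter.eventually_atTop.1 hlim'
  obtain ⟨n₁, hn₁⟩ := exists_nat_ge (64 / μ * (2 * K + 5 + K + 5 + 3 * ((m + 1) * B)) + 16 / δ)
  set ε : ℝ := μ / (64 * (K + 5)) with hε
  refine ⟨ε, by positivity, max n₁ (q * t₀ + 2), ?_⟩
  intro V _ H G o o' i M hn hH hG hM hnd ho hbal hMl
  set n := Fintype.card V with hndef
  have hn1 : n₁ ≤ n := le_trans (le_max_left _ _) hn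
  have hn2 : q * t₀ + 2 ≤ n := le_trans (le_max_right _ _) hn
  have hx1 : 64 / μ * (2 * K + 5 + K + 5 + 3 * ((m + 1) * B)) + 16 / δ ≤ (n : ℝ) :=
    hn₁.trans (by exact_mod_cast hn1)
  set x : ℝ := (n : ℝ) with hx
  have hδx : 16 ≤ δ * x := by
    have h1 : 0 ≤ 64 / μ * (2 * K + 5 + K + 5 + 3 * ((m + 1) * B)) := by positivity
    have h2 : 16 / δ ≤ x := by linarith
    rw [div_le_iff₀ hδ] at h2
    linarith
  have hμx : 64 * (2 * K + 5 + K + 5 + 3 * ((m + 1) * B)) ≤ μ * x := by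
    have h1 : 0 ≤ 16 / δ := by positivity
    have h2 : 64 / μ * (2 * K + 5 + K + 5 + 3 * ((m + 1) * B)) ≤ x := by linarith
    rw [div_mul_eq_mul_div, div_le_iff₀ hμ] at h2
    linarith
  have hmB : 0 ≤ ((m : ℝ) + 1) * B := by positivity
  have hK0 : (0 : ℝ) ≤ K := by positivity
  have hx0 : 0 < x := by
    have : 0 < n := by omega
    rw [hx]; exact_mod_cast this
  have hτx : 0 < τ * x := by positivity
  have hD := Nat.lt_floor_add_one (δ * x)
  have hD' := Nat.floor_le (a := δ * x) (by positivity)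
  have ht := Nat.le_ceil (τ * x)
  have ht' := Nat.ceil_lt_add_one hτx.le
  have hr := Nat.lt_floor_add_one (μ / 4 * x)
  have hr' := Nat.floor_le (a := μ / 4 * x) (by positivity)
  have hN := Nat.lt_floor_add_one (μ / 16 * x)
  have hN' := Nat.floor_le (a := μ / 16 * x) (by positivity)
  have hL := Nat.lt_floor_add_one (μ / 32 * x)
  have hL' := Nat.floor_le (a := μ / 32 * x) (by positivity)
  set D := ⌊δ * x⌋₊
  set t := ⌈τ * x⌉₊
  set r := ⌊μ / 4 * x⌋₊
  set N := ⌊μ / 16 * x⌋₊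
  set L := ⌊μ / 32 * x⌋₊
  have h64 : 64 ≤ μ * x := by linarith
  have hμδx : 4 * (μ * x) ≤ δ * x := by
    rw [← mul_assoc]; exact mul_le_mul_of_nonneg_right hμδ hx0.le
  have hτδx : 4 * (τ * x) ≤ δ * x := by
    rw [← mul_assoc]; exact mul_le_mul_of_nonneg_right hτδ hx0.le
  have hw : (M.length : ℝ) * (K + 5) ≤ μ * x / 64 := by
    calc (M.length : ℝ) * (K + 5) ≤ ε * x * (K + 5) := by gcongr
      _ = μ * x / 64 := by rw [hε]; field_simp
  have hw' : (M.length : ℝ) ≤ μ * x / 64 :=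
    (le_mul_of_one_le_right (Nat.cast_nonneg _) (by linarith)).trans hw
  have hT : #(M.map Prod.fst).toFinset ≤ M.length := by
    simpa using List.toFinset_card_le (M.map Prod.fst)
  have hoT : ∀ v, v ∉ (M.map Prod.fst).toFinset → o' v = o v := by
    intro v hv
    apply ho
    intro e he hev
    apply hv
    simp only [List.mem_toFinset, List.mem_map]
    exact ⟨e, he, hev⟩
  have hb1 : ∀ j, #(lab o j) ≤ #(lab i j) + M.length := by
    intro j
    rw [← hbal j]
    have : lab o j ⊆ lab o' j ∪ (M.map Prod.fst).toFinset := by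
      intro v hv
      by_cases h : v ∈ (M.map Prod.fst).toFinset
      · exact mem_union_right _ h
      · refine mem_union_left _ ?_
        rw [mem_lab] at hv ⊢
        rw [hoT v h, hv]
    exact (card_le_card this).trans ((card_union_le _ _).trans (by omega))
  have hb2 : ∀ j, #(lab i j) ≤ #(lab o j) + M.length := by
    intro j
    rw [← hbal j]
    have : lab o' j ⊆ lab o j ∪ (M.map Prod.fst).toFinset := by
      intro v hv
      by_cases h : v ∈ (M.map Prod.fst).toFinset
      · exact mem_union_right _ h
      · refine mem_union_left _ ?_
        rw [mem_lab] at hv ⊢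
        rw [← hoT v h, hv]
    exact (card_le_card this).trans ((card_union_le _ _).trans (by omega))
  have hMr : M.length ≤ r := by
    have : (M.length : ℝ) ≤ r := by linarith
    exact_mod_cast this
  have hE : Expander H o i D t r r := by
    refine hH.expander (by omega) hμ hD' ht hr' hr' fun j => ?_
    have : (#(lab i j) : ℝ) ≤ #(lab o j) + M.length := by exact_mod_cast hb2 j
    change _ ≤ _ + μ / 4 * x
    linarith
  have hKr : n ≤ K * r := by
    have h1 : μ * x / 8 ≤ r := by linarith
    have : (n : ℝ) ≤ (K : ℝ) * r := by
      calc (n : ℝ) = 8 / μ * (μ * x / 8) := by field_simp; rfl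
        _ ≤ K * r := by gcongr
    exact_mod_cast this
  have hmL : n ≤ m * L := by
    have h1 : μ * x / 64 ≤ L := by linarith
    have : (n : ℝ) ≤ (m : ℝ) * L := by
      calc (n : ℝ) = 64 / μ * (μ * x / 64) := by field_simp; rfl
        _ ≤ m * L := by gcongr
    exact_mod_cast this
  have hND : N ≤ D := by
    have : (N : ℝ) ≤ D := by linarith
    exact_mod_cast this
  have hqn : (0 : ℕ) < q := by exact_mod_cast hq0
  refine hE.exists_hamilton hG (by omega) ?_ ?_ (fun j => (hb1 j).trans (by omega))
    (fun j => (hb2 j).trans (by omega)) hM hnd ho hbal (K := K) (m := m) (L := L) (N := N)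
    (t := n / q + 1) (c := c) hKr hmL hc1 ?_ ?_ ?_ ?_ ?_ ?_ ?_
  · have : (0 : ℝ) < r := by linarith
    exact_mod_cast this
  · exact Nat.ceil_pos.2 hτx
  · rw [Nat.cast_sub hND]
    calc c * (n : ℝ) ^ 2 = (δ * x / 2) ^ 2 := by rw [hc]; ring
      _ ≤ ((D : ℝ) - N) ^ 2 := by
        gcongr
        linarith
  · have h1 : n ≤ q * (n / q + 1) := (Nat.lt_mul_div_succ n hqn).le
    have h2 : t₀ ≤ n / q + 1 := by
      by_contra h
      have : q * (n / q + 1) ≤ q * t₀ := Nat.mul_le_mul_left _ (by omega)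
      omega
    have h3 := ht₀ _ h2
    have h4 : (n : ℝ) ≤ q * (n / q + 1 : ℕ) := by exact_mod_cast h1
    have h5 : 0 ≤ (1 - c) ^ (n / q + 1) := pow_nonneg (by linarith) _
    calc (1 - c) ^ (n / q + 1) * (n : ℝ) ^ 2
        ≤ (1 - c) ^ (n / q + 1) * (q * (n / q + 1 : ℕ)) ^ 2 := by gcongr
      _ = (q : ℝ) ^ 2 * (((n / q + 1 : ℕ) : ℝ) ^ 2 * (1 - c) ^ (n / q + 1)) := by ring
      _ < 1 := h3
  · have h1 : ((n / q : ℕ) : ℝ) ≤ x / q := Nat.cast_div_le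
    have h2 : ((m : ℝ) + 1) * B * (n / q : ℕ) ≤ μ * x / 64 := by
      calc ((m : ℝ) + 1) * B * (n / q : ℕ) ≤ (m + 1) * B * (x / q) := by gcongr
        _ ≤ μ * x / 64 := by
          rw [← mul_div_assoc, div_le_iff₀ hq0]
          have h3 : 64 * ((m + 1) * B) / μ ≤ (q : ℝ) := by linarith
          rw [div_le_iff₀ hμ] at h3
          have := mul_le_mul_of_nonneg_right h3 hx0.le
          linarith
    have h3 : (((M.length + 1) * (K + 5) + (m + 1) * ((n / q + 1 + 2) * B) : ℕ) : ℝ) ≤ N := by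
      push_cast
      have e : ((M.length : ℝ) + 1) * (K + 5) + (m + 1) * (((n / q : ℕ) + 1 + 2) * B)
        = M.length * (K + 5) + (K + 5) + ((m + 1) * B * (n / q : ℕ) + 3 * ((m + 1) * B)) := by ring
      rw [e]
      linarith
    exact_mod_cast h3
  · have : 2 * (N : ℝ) ≤ r := by linarith
    exact_mod_cast this
  · have : (N : ℝ) ≤ r := by linarith
    exact_mod_cast this
  · have : (r : ℝ) + 2 * t + r + N < D := by linarith
    exact_mod_cast this
  · have : 2 * (K : ℝ) + 2 * L + 3 ≤ r := by linarith
    exact_mod_cast this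

end

section

variable {V : Type*} [Fintype V]
variable {H G : V → V → Prop} {p q o i : V → Bool} {δ τ μ ε ζ : ℝ}

lemma card_mul_card_add_edges_le {X X' Y Y' : Finset V} (hX : X' ⊆ X) (hY : Y' ⊆ Y) :
    #X' * #Y' + edges G X Y ≤ #X * #Y + edges G X' Y' := by
  simp only [edges_eq_card]
  have h1 := card_filter_add_card_filter_not (s := X ×ˢ Y) (fun e : V × V => G e.1 e.2)
  have h2 := card_filter_add_card_filter_not (s := X' ×ˢ Y') (fun e : V × V => G e.1 e.2)
  have h3 := card_le_card (filter_subset_filter (fun e : V × V => ¬ G e.1 e.2)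
    (product_subset_product hX hY))
  rw [card_product] at h1 h2
  omega

lemma edges_mono {S S' T T' : Finset V} (hS : S' ⊆ S) (hT : T' ⊆ T)
    (h : ∀ x ∈ S', ∀ y ∈ T', G x y → H x y) : edges G S' T' ≤ edges H S T := by
  simp only [edges_eq_card]
  refine card_le_card fun e he => ?_
  simp only [mem_filter, mem_product] at he ⊢
  exact ⟨⟨hS he.1.1, hT he.1.2⟩, h _ he.1.1 _ he.1.2 he.2⟩

/-- The vertices with labels `s` and `t`. -/
noncomputable def cell (p q : V → Bool) (s t : Bool) : Finset V := lab p s ∩ lab q t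

@[simp] lemma mem_cell {s t : Bool} {x : V} : x ∈ cell p q s t ↔ p x = s ∧ q x = t := by
  simp [cell]

lemma card_lab_eq_left (p q : V → Bool) (s : Bool) :
    #(lab p s) = #(cell p q s s) + #(cell p q s (!s)) := by
  rw [← card_union_of_disjoint]
  · congr 1
    ext x
    cases s <;> cases h : q x <;> simp [h]
  · rw [Finset.disjoint_left]
    intro x
    simp +contextual

lemma card_lab_eq_right (p q : V → Bool) (s : Bool) :
    #(lab q s) = #(cell p q s s) + #(cell p q (!s) s) := by
  rw [← card_union_of_disjoint]
  · congr 1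
    ext x
    cases s <;> cases h : p x <;> simp [h]
  · rw [Finset.disjoint_left]
    intro x
    simp +contextual

lemma card_lab_add (p : V → Bool) (s : Bool) : #(lab p s) + #(lab p (!s)) = Fintype.card V := by
  rw [← card_union_of_disjoint, ← card_univ]
  · congr 1
    ext x
    cases s <;> cases h : p x <;> simp [h]
  · rw [Finset.disjoint_left]
    intro x
    simp +contextual

/-- A labelled digraph close to the extremal example: four classes of almost equal size, arranged
in a cycle with almost all edges between consecutive classes. -/
structure NearExtremal (G : V → V → Prop) (p q : V → Bool) (ε : ℝ) : Prop where
  size : ∀ s t, (1 / 4 - ε) * Fintype.card V ≤ #(cell p q s t)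
  full : ∀ s t, (#(cell p q s t) : ℝ) * #(cell p q (!t) s) - ε * (Fintype.card V : ℝ) ^ 2 ≤
    edges G (cell p q s t) (cell p q (!t) s)
  half : ∀ s t, (Fintype.card V : ℝ) ^ 2 / 40 ≤ edges G (cell p q s t) (cell p q t s)

lemma card_cells (p q : V → Bool) (s t : Bool) : #(cell p q s t) + #(cell p q (!s) t) +
    (#(cell p q s (!t)) + #(cell p q (!s) (!t))) = Fintype.card V := by
  have h1 := card_lab_add p s
  have h2 := card_lab_eq_left p q s
  have h3 := card_lab_eq_left p q (!s)
  cases s <;> cases t <;> simp at * <;> omega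

lemma NearExtremal.card_cell_le (h : NearExtremal G p q ε) (s t : Bool) :
    (#(cell p q s t) : ℝ) ≤ (1 / 4 + 3 * ε) * Fintype.card V := by
  have h1 := card_cells p q s t
  have h2 := h.size (!s) t
  have h3 := h.size s (!t)
  have h4 := h.size (!s) (!t)
  have h5 : (#(cell p q s t) : ℝ) + #(cell p q (!s) t) +
    (#(cell p q s (!t)) + #(cell p q (!s) (!t))) = Fintype.card V := by exact_mod_cast h1
  linarith

lemma edges_restrict_ge {W : Finset V} (hW : ∀ v ∉ W, o v = p v ∧ i v = q v) (s t u : Bool)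
    (S T : Finset V) :
    (#((cell p q s t ∩ S) \ W) : ℝ) * #((cell p q u s ∩ T) \ W) +
      edges G (cell p q s t) (cell p q u s)
      - #(cell p q s t) * #(cell p q u s) ≤ edges (fun x y => G x y ∧ o x = i y) S T := by
  have h1 := card_mul_card_add_edges_le (G := G) (X := cell p q s t) (Y := cell p q u s)
    (X' := (cell p q s t ∩ S) \ W) (Y' := (cell p q u s ∩ T) \ W)
    (sdiff_subset.trans inter_subset_left) (sdiff_subset.trans inter_subset_left)
  have h2 := edges_mono (G := G) (H := fun x y => G x y ∧ o x = i y) (S := S) (T := T)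
    (S' := (cell p q s t ∩ S) \ W) (T' := (cell p q u s ∩ T) \ W)
    (sdiff_subset.trans inter_subset_right) (sdiff_subset.trans inter_subset_right) (by
      intro x hx y hy hxy
      simp only [mem_sdiff, mem_inter, mem_cell] at hx hy
      refine ⟨hxy, ?_⟩
      rw [(hW x hx.2).1, (hW y hy.2).2, hx.1.1.1, hy.1.1.2])
  have h3 : (#((cell p q s t ∩ S) \ W) : ℝ) * #((cell p q u s ∩ T) \ W)
      + edges G (cell p q s t) (cell p q u s) ≤ #(cell p q s t) * #(cell p q u s)
      + edges (fun x y => G x y ∧ o x = i y) S T := by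
    exact_mod_cast h1.trans (by omega)
  linarith

lemma lt_or_lt_of_mul_lt {a b z : ℝ} (hz : 0 ≤ z) (h : a * b < z ^ 2) : a < z ∨ b < z := by
  by_contra! hc
  nlinarith [mul_le_mul hc.1 hc.2 hz (hz.trans hc.1)]

lemma mul_sub_mul_ge {x z a b c d : ℝ} (hz : 0 < z) (hx : 1000 * z ≤ x) (d0 : 0 ≤ d)
    (hc : c ≤ x / 4 + 3 * z) (hd : d ≤ x / 4 + 3 * z) (hac : a ≤ c) (hbd : b ≤ d)
    (hab : x / 2 - 12 * z ≤ a + b) : x ^ 2 / 100 ≤ a * b - c * d + x ^ 2 / 40 := by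
  have ha : x / 4 - 15 * z ≤ a := by linarith
  have hb : x / 4 - 15 * z ≤ b := by linarith
  have h0 : 0 ≤ x / 4 - 15 * z := by linarith
  have h1 := mul_le_mul ha hb h0 (h0.trans ha)
  have h2 : c * d ≤ (x / 4 + 3 * z) * (x / 4 + 3 * z) := mul_le_mul hc hd d0 (by linarith)
  have h3 := mul_le_mul_of_nonneg_right hx (by linarith : 0 ≤ x)
  have h4 := sq_nonneg z
  have h5 : (x / 4 - 15 * z) * (x / 4 - 15 * z) - (x / 4 + 3 * z) * (x / 4 + 3 * z) =
    216 * z ^ 2 - 9 * (z * x) := by ring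
  have h6 := sq_nonneg x
  rw [pow_two] at *
  linarith

set_option maxHeartbeats 1000000 in
lemma NearExtremal.dense (h : NearExtremal G p q ε) {W : Finset V}
    (hW : ∀ v ∉ W, o v = p v ∧ i v = q v) (hn : 0 < Fintype.card V)
    (hζ : 0 < ζ) (hζ1 : ζ ≤ 1 / 1000) (hτ : 8 * ζ ≤ τ) (hεζ : ε ≤ ζ ^ 2 / 2) (hμ : μ ≤ ζ ^ 2 / 2)
    (hWc : (#W : ℝ) ≤ ζ * Fintype.card V) (hWδ : (#W : ℝ) ≤ δ * Fintype.card V)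
    (hout : ∀ v, 2 * δ * Fintype.card V ≤ #(nbrOut G v ∩ lab q (o v)))
    (hin : ∀ v, 2 * δ * Fintype.card V ≤ #(nbrIn G v ∩ lab p (i v))) :
    Dense (fun x y => G x y ∧ o x = i y) o i δ τ μ := by
  have hx : (0 : ℝ) < Fintype.card V := by exact_mod_cast hn
  set x : ℝ := (Fintype.card V : ℝ) with hxdef
  have hζx : 0 < ζ * x := by positivity
  have hεx : ε * x ≤ ζ * x := by
    have : ε ≤ ζ := by nlinarith
    gcongr
  have hμx : μ * x ≤ ζ * x := by
    have : μ ≤ ζ := by nlinarith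
    gcongr
  have hτx : 8 * (ζ * x) ≤ τ * x := by nlinarith
  have hζx1 : 1000 * (ζ * x) ≤ x := by nlinarith
  have hsq : (μ + ε) * x ^ 2 ≤ (ζ * x) ^ 2 := by
    rw [mul_pow]
    have : μ + ε ≤ ζ ^ 2 := by linarith
    gcongr
  have hsq' : μ * x ^ 2 ≤ x ^ 2 / 1000 := by
    have : μ ≤ 1 / 1000 := by nlinarith
    nlinarith [sq_nonneg x]
  have hup : ∀ s t, (#(cell p q s t) : ℝ) ≤ x / 4 + 3 * (ε * x) := fun s t => by
    have := h.card_cell_le s t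
    linarith
  have hlow : ∀ s t, x / 4 - ε * x ≤ (#(cell p q s t) : ℝ) := fun s t => by
    have := h.size s t
    linarith
  have hcellW : ∀ s t (S : Finset V), (#((cell p q s t ∩ S) \ W) : ℝ) ≤ #(cell p q s t) :=
    fun s t S => by
      exact_mod_cast card_le_card (sdiff_subset.trans inter_subset_left)
  refine ⟨fun _ _ h => h.2, fun v => ?_, fun v => ?_, ?_, ?_⟩
  · have h1 : nbrOut G v ∩ lab q (o v) ⊆ nbrOut (fun x y => G x y ∧ o x = i y) v ∪ W := by
      intro y hy
      simp only [mem_inter, mem_nbrOut, mem_lab, mem_union] at hy ⊢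
      by_cases hyW : y ∈ W
      · exact Or.inr hyW
      · exact Or.inl ⟨hy.1, by rw [(hW y hyW).2, hy.2]⟩
    have h2 : (#(nbrOut G v ∩ lab q (o v)) : ℝ) ≤
        #(nbrOut (fun x y => G x y ∧ o x = i y) v) + #W := by
      exact_mod_cast (card_le_card h1).trans (card_union_le _ _)
    have := hout v
    linarith
  · have h1 : nbrIn G v ∩ lab p (i v) ⊆ nbrIn (fun x y => G x y ∧ o x = i y) v ∪ W := by
      intro y hy
      simp only [mem_inter, mem_nbrIn, mem_lab, mem_union] at hy ⊢
      by_cases hyW : y ∈ W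
      · exact Or.inr hyW
      · exact Or.inl ⟨hy.1, by rw [(hW y hyW).1, hy.2]⟩
    have h2 : (#(nbrIn G v ∩ lab p (i v)) : ℝ) ≤
        #(nbrIn (fun x y => G x y ∧ o x = i y) v) + #W := by
      exact_mod_cast (card_le_card h1).trans (card_union_le _ _)
    have := hin v
    linarith
  · intro j S T hS hT hSτ hTτ hST
    by_contra! hc
    have hs : (#S : ℝ) ≤ #((cell p q j j ∩ S) \ W) + #((cell p q j (!j) ∩ S) \ W) + #W := by
      have h1 : S ⊆ ((cell p q j j ∩ S) \ W) ∪ ((cell p q j (!j) ∩ S) \ W) ∪ W := by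
        intro v hv
        by_cases hvW : v ∈ W
        · exact mem_union_right _ hvW
        · have := hS hv
          rw [mem_lab, (hW v hvW).1] at this
          cases h2 : q v <;> cases j <;> simp [hv, hvW, this, h2]
      exact_mod_cast (card_le_card h1).trans ((card_union_le _ _).trans
        (Nat.add_le_add_right (card_union_le _ _) _))
    have ht : (#T : ℝ) ≤ #((cell p q j j ∩ T) \ W) + #((cell p q (!j) j ∩ T) \ W) + #W := by
      have h1 : T ⊆ ((cell p q j j ∩ T) \ W) ∪ ((cell p q (!j) j ∩ T) \ W) ∪ W := by
        intro v hv
        by_cases hvW : v ∈ W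
        · exact mem_union_right _ hvW
        · have := hT hv
          rw [mem_lab, (hW v hvW).2] at this
          cases h2 : p v <;> cases j <;> simp [hv, hvW, this, h2]
      exact_mod_cast (card_le_card h1).trans ((card_union_le _ _).trans
        (Nat.add_le_add_right (card_union_le _ _) _))
    have hi : (#(lab q j) : ℝ) ≤ #(lab i j) + #W := by
      have h1 : lab q j ⊆ lab i j ∪ W := by
        intro v hv
        by_cases hvW : v ∈ W
        · exact mem_union_right _ hvW
        · refine mem_union_left _ ?_
          rw [mem_lab] at hv ⊢
          rw [(hW v hvW).2, hv]
      exact_mod_cast (card_le_card h1).trans (card_union_le _ _)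
    have hq : (#(lab q j) : ℝ) = #(cell p q j j) + #(cell p q (!j) j) := by
      exact_mod_cast card_lab_eq_right p q j
    have e1 := edges_restrict_ge (G := G) hW j j (!j) S T
    have e2 := edges_restrict_ge (G := G) hW j (!j) j S T
    have e3 := edges_restrict_ge (G := G) hW j j j S T
    have e4 := edges_restrict_ge (G := G) hW j (!j) (!j) S T
    have f1 := h.full j j
    have f2 := h.full j (!j)
    rw [Bool.not_not] at f2
    have f3 := h.half j j
    have f4 := h.half j (!j)
    have l1 := hlow j j
    have l2 := hlow (!j) j
    have u1 := hup j j
    have u2 := hup j (!j)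
    have u3 := hup (!j) j
    have v1 := hcellW j j S
    have v2 := hcellW j (!j) S
    have v3 := hcellW j j T
    have v4 := hcellW (!j) j T
    have n1 : (0 : ℝ) ≤ #(cell p q j j) := Nat.cast_nonneg _
    have n3 : (0 : ℝ) ≤ #(cell p q (!j) j) := Nat.cast_nonneg _
    rw [← hxdef] at *
    generalize (#((cell p q j j ∩ S) \ W) : ℝ) = sp at *
    generalize (#((cell p q j (!j) ∩ S) \ W) : ℝ) = sq at *
    generalize (#((cell p q j j ∩ T) \ W) : ℝ) = tp at *
    generalize (#((cell p q (!j) j ∩ T) \ W) : ℝ) = tq at *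
    generalize (#(cell p q j j) : ℝ) = P at *
    generalize (#(cell p q j (!j)) : ℝ) = Qs at *
    generalize (#(cell p q (!j) j) : ℝ) = Qt at *
    have c1 : sp < ζ * x ∨ tq < ζ * x := lt_or_lt_of_mul_lt hζx.le (by linarith)
    have c2 : sq < ζ * x ∨ tp < ζ * x := lt_or_lt_of_mul_lt hζx.le (by linarith)
    rcases c1 with c1 | c1 <;> rcases c2 with c2 | c2
    · linarith
    · have := mul_sub_mul_ge hζx hζx1 n3 (u2.trans (by linarith)) (u3.trans (by linarith)) v2 v4
        (by linarith)
      linarith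
    · have := mul_sub_mul_ge hζx hζx1 n1 (u1.trans (by linarith)) (u1.trans (by linarith)) v1 v3
        (by linarith)
      linarith
    · linarith
  · intro S hS hS'
    by_contra! hc
    have hsplit : ∀ s t, (#(cell p q s t) : ℝ) ≤
        #((cell p q s t ∩ Sᶜ) \ W) + #((cell p q s t ∩ S) \ W) + #W := by
      intro s t
      have h1 : cell p q s t ⊆ ((cell p q s t ∩ Sᶜ) \ W) ∪ ((cell p q s t ∩ S) \ W) ∪ W := by
        intro v hv
        simp only [mem_union, mem_sdiff, mem_inter, mem_compl]
        tauto
      exact_mod_cast (card_le_card h1).trans ((card_union_le _ _).trans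
        (Nat.add_le_add_right (card_union_le _ _) _))
    have hcov : ∀ T : Finset V, (#T : ℝ) ≤ #((cell p q false false ∩ T) \ W) +
        #((cell p q true false ∩ T) \ W) + #((cell p q true true ∩ T) \ W) +
        #((cell p q false true ∩ T) \ W) + #W := by
      intro T
      have h1 : T ⊆ ((cell p q false false ∩ T) \ W) ∪ ((cell p q true false ∩ T) \ W) ∪
          ((cell p q true true ∩ T) \ W) ∪ ((cell p q false true ∩ T) \ W) ∪ W := by
        intro v hv
        cases h1 : p v <;> cases h2 : q v <;> simp [h1, h2, hv] <;> tauto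
      refine le_trans (Nat.cast_le.2 (card_le_card h1)) ?_
      norm_cast
      refine (card_union_le _ _).trans (Nat.add_le_add_right ?_ _)
      refine (card_union_le _ _).trans (Nat.add_le_add_right ?_ _)
      refine (card_union_le _ _).trans (Nat.add_le_add_right ?_ _)
      exact card_union_le _ _
    have hstep : ∀ s t, #((cell p q s t ∩ Sᶜ) \ W) < ζ * x ∨
        #((cell p q (!t) s ∩ S) \ W) < ζ * x := by
      intro s t
      have e1 := edges_restrict_ge (G := G) hW s t (!t) Sᶜ S
      have f1 := h.full s t
      rw [← hxdef] at *
      exact lt_or_lt_of_mul_lt hζx.le (by linarith)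
    have hcS : (#Sᶜ : ℝ) + #S = x := by
      rw [hxdef]
      exact_mod_cast card_compl_add_card S
    have hprop : ∀ s t, ζ * x ≤ #((cell p q (!t) s ∩ S) \ W) →
        ζ * x ≤ #((cell p q s t ∩ S) \ W) ∧ #((cell p q s t ∩ Sᶜ) \ W) < ζ * x := by
      intro s t hst
      have h1 := (hstep s t).resolve_right (not_lt.2 hst)
      have h2 := hsplit s t
      have h3 := hlow s t
      exact ⟨by linarith, h1⟩
    have p1 := hprop false false
    have p2 := hprop true false
    have p3 := hprop true true
    have p4 := hprop false true
    simp only [Bool.not_false, Bool.not_true] at p1 p2 p3 p4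
    have k1 := hcov S
    have k2 := hcov Sᶜ
    by_cases hb : ζ * x ≤ #((cell p q true false ∩ S) \ W)
    · have q1 := p1 hb
      have q4 := p4 q1.1
      have q3 := p3 q4.1
      have q2 := p2 q3.1
      linarith
    · have q2 : ¬ ζ * x ≤ #((cell p q true true ∩ S) \ W) := fun h => hb (p2 h).1
      have q3 : ¬ ζ * x ≤ #((cell p q false true ∩ S) \ W) := fun h => q2 (p3 h).1
      have q4 : ¬ ζ * x ≤ #((cell p q false false ∩ S) \ W) := fun h => q3 (p4 h).1
      rw [not_le] at *
      linarith

end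

section

variable {V : Type*} [Fintype V]
variable {H G F : V → V → Prop} {p q o i : V → Bool} {δ ε θ : ℝ}

lemma exists_matching {d : ℕ} (hirr : ∀ x, ¬ F x x) (hout : ∀ x, #(nbrOut F x) ≤ d)
    (hin : ∀ x, #(nbrIn F x) ≤ d) (k : ℕ) (hk : 4 * k * d < edges F univ univ) :
    ∃ M : List (V × V), M.length = k ∧ (∀ e ∈ M, F e.1 e.2) ∧
      (M.flatMap fun e => [e.1, e.2]).Nodup := by
  induction k with
  | zero => exact ⟨[], by simp⟩
  | succ k ih =>
    have h1 : 4 * (k + 1) * d = 4 * k * d + 4 * d := by ring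
    obtain ⟨M, hMl, hM, hnd⟩ := ih (by omega)
    set U := (M.flatMap fun e => [e.1, e.2]).toFinset with hU
    have hUc : #U ≤ 2 * k := by
      refine (List.toFinset_card_le _).trans ?_
      rw [← hMl]
      clear * -
      induction M with
      | nil => simp
      | cons e M ih => simp at *; omega
    have h2 : ∃ x ∉ U, ∃ y ∉ U, F x y := by
      by_contra! hc
      have h3 : edges F univ univ ≤ edges F U univ + edges F univ U := by
        simp only [edges_eq_card]
        refine le_trans (card_le_card ?_) (card_union_le _ _)
        intro e he
        simp only [mem_union, mem_filter, mem_product, mem_univ, true_and, and_true] at he ⊢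
        by_contra! hc'
        exact hc e.1 (fun h => hc'.1 h he) e.2 (fun h => hc'.2 h he) he
      have h4 : edges F U univ ≤ #U * d := by
        rw [edges]
        refine sum_le_card_nsmul U _ d fun x _ => ?_
        simpa using hout x
      have h5 : edges F univ U ≤ #U * d := by
        rw [edges_eq_sum_nbrIn]
        refine sum_le_card_nsmul U _ d fun x _ => ?_
        simpa using hin x
      have h6 : #U * d ≤ 2 * k * d := Nat.mul_le_mul_right _ hUc
      have h7 : 4 * k * d = 2 * k * d + 2 * k * d := by ring
      omega
    obtain ⟨x, hx, y, hy, hxy⟩ := h2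
    rw [hU, List.mem_toFinset] at hx hy
    refine ⟨(x, y) :: M, by simp [hMl], ?_, ?_⟩
    · simpa using ⟨hxy, fun a b h => hM (a, b) h⟩
    · have hne : x ≠ y := fun h => hirr x (by rw [← h] at hxy; exact hxy)
      rw [List.flatMap_cons, List.cons_append, List.cons_append, List.nil_append,
        List.nodup_cons, List.nodup_cons, List.mem_cons]
      exact ⟨by tauto, hy, hnd⟩

lemma edges_add_edges_le (hG : ∀ x y, G x y → ¬ G y x) (X Y : Finset V) :
    edges G X Y + edges G Y X ≤ #X * #Y := by
  have h1 : edges G Y X = #((X ×ˢ Y).filter fun e => G e.2 e.1) := by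
    rw [edges_eq_sum_nbrIn, card_filter, sum_product]
    refine sum_congr rfl fun x _ => ?_
    rw [← card_filter]
    congr 1
    ext y
    simp [and_comm]
  rw [h1, edges_eq_card, ← card_product, ← card_union_of_disjoint]
  · exact card_le_card (union_subset (filter_subset _ _) (filter_subset _ _))
  · rw [Finset.disjoint_left]
    intro e he he'
    simp only [mem_filter] at he he'
    exact hG _ _ he.2 he'.2

lemma two_mul_edges_self_le (hG : ∀ x y, G x y → ¬ G y x) (X : Finset V) :
    (2 * edges G X X : ℝ) ≤ #X * (#X - 1) := by
  have h1 : edges G X X = #(X.offDiag.filter fun e => G e.2 e.1) := by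
    rw [edges_eq_card]
    refine card_bij (fun e _ => (e.2, e.1)) ?_ ?_ ?_
    · intro e he
      simp only [mem_filter, mem_product, mem_offDiag] at he ⊢
      refine ⟨⟨he.1.2, he.1.1, fun h => ?_⟩, he.2⟩
      have := he.2
      rw [h] at this
      exact hG _ _ this this
    · rintro ⟨a, b⟩ _ ⟨c, d⟩ _ h
      simp only [Prod.mk.injEq] at h ⊢
      tauto
    · rintro ⟨a, b⟩ he
      simp only [mem_filter, mem_offDiag] at he
      exact ⟨(b, a), by simp; tauto, rfl⟩
  have h2 : edges G X X = #(X.offDiag.filter fun e => G e.1 e.2) := by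
    rw [edges_eq_card]
    congr 1
    ext e
    simp only [mem_filter, mem_product, mem_offDiag]
    refine ⟨fun he => ⟨⟨he.1.1, he.1.2, fun h => ?_⟩, he.2⟩, fun he => ⟨⟨he.1.1, he.1.2.1⟩, he.2⟩⟩
    have := he.2
    rw [h] at this
    exact hG _ _ this this
  have h3 : edges G X X + edges G X X ≤ #X.offDiag := by
    conv_lhs => rw [h1]
    conv_lhs => enter [2]; rw [← h1, h2]
    rw [← card_union_of_disjoint]
    · exact card_le_card (union_subset (filter_subset _ _) (filter_subset _ _))
    · rw [Finset.disjoint_left]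
      intro e he he'
      simp only [mem_filter] at he he'
      exact hG _ _ he.2 he'.2
  rw [offDiag_card] at h3
  have h4 : edges G X X + edges G X X + #X ≤ #X * #X := by
    have : #X ≤ #X * #X := Nat.le_mul_self _
    omega
  have h5 : (edges G X X : ℝ) + edges G X X + #X ≤ #X * #X := by exact_mod_cast h4
  linarith

lemma edges_union_left {X Y : Finset V} (h : Disjoint X Y) (T : Finset V) :
    edges G (X ∪ Y) T = edges G X T + edges G Y T := sum_union h

lemma edges_union_right {X Y : Finset V} (h : Disjoint X Y) (T : Finset V) :
    edges G T (X ∪ Y) = edges G T X + edges G T Y := by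
  simp only [edges_eq_sum_nbrIn]
  exact sum_union h

lemma edges_univ_right (X : Finset V) : edges G X univ =
    edges G X (cell o i false false) + edges G X (cell o i true false) +
      edges G X (cell o i true true) + edges G X (cell o i false true) := by
  have h : (univ : Finset V) = cell o i false false ∪ cell o i true false ∪ cell o i true true ∪
      cell o i false true := by
    ext x
    cases h1 : o x <;> cases h2 : i x <;> simp [h1, h2]
  rw [h, edges_union_right, edges_union_right, edges_union_right] <;>
  · rw [Finset.disjoint_left]
    intro x
    cases h1 : o x <;> cases h2 : i x <;> simp [h1, h2]

lemma edges_univ_left (X : Finset V) : edges G univ X =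
    edges G (cell o i false false) X + edges G (cell o i true false) X +
      edges G (cell o i true true) X + edges G (cell o i false true) X := by
  have h : (univ : Finset V) = cell o i false false ∪ cell o i true false ∪ cell o i true true ∪
      cell o i false true := by
    ext x
    cases h1 : o x <;> cases h2 : i x <;> simp [h1, h2]
  rw [h, edges_union_left, edges_union_left, edges_union_left] <;>
  · rw [Finset.disjoint_left]
    intro x
    cases h1 : o x <;> cases h2 : i x <;> simp [h1, h2]

lemma le_edges_univ_right {a : ℝ} (h : ∀ x, a ≤ #(nbrOut G x)) (X : Finset V) :
    #X * a ≤ edges G X univ := by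
  rw [edges, Nat.cast_sum]
  simpa using card_nsmul_le_sum X (fun x => (#(nbrOut G x ∩ univ) : ℝ)) a
    (by simpa using fun x _ => h x)

lemma le_edges_univ_left {a : ℝ} (h : ∀ x, a ≤ #(nbrIn G x)) (X : Finset V) :
    #X * a ≤ edges G univ X := by
  rw [edges_eq_sum_nbrIn, Nat.cast_sum]
  simpa using card_nsmul_le_sum X (fun x => (#(nbrIn G x ∩ univ) : ℝ)) a
    (by simpa using fun x _ => h x)

lemma mul_le_of_mul_le {P x m a : ℝ} (h : x * a ≤ P) (hP : 0 ≤ P) (hm : 0 ≤ m) (hx : m ≤ x) :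
    m * a ≤ P := by
  rcases le_total 0 a with ha | ha
  · exact (mul_le_mul_of_nonneg_right hx ha).trans h
  · exact (mul_nonpos_of_nonneg_of_nonpos hm ha).trans hP

/-- The minimum semidegree condition provides edges that correct the imbalance of the labels. -/
lemma le_edges_of_semidegree (hG : ∀ x y, G x y → ¬ G y x)
    (hout : ∀ x, (3 * (Fintype.card V : ℝ) - 4) / 8 ≤ #(nbrOut G x))
    (hin : ∀ x, (3 * (Fintype.card V : ℝ) - 4) / 8 ≤ #(nbrIn G x))
    (hc : ∀ s t, (Fintype.card V : ℝ) / 5 ≤ #(cell o i s t)) {k : ℕ} (hk : 0 < k)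
    (hlab : #(lab o false) = #(lab i false) + k) :
    (k : ℝ) * Fintype.card V / 20 ≤ edges G (lab o false) (lab i true) := by
  have hd : #(cell o i false true) = #(cell o i true false) + k := by
    have h1 := card_lab_eq_left o i false
    have h2 := card_lab_eq_right o i false
    simp only [Bool.not_false] at h1 h2
    omega
  have hn := card_cells o i false false
  have he : edges G (lab o false) (lab i true) =
      edges G (cell o i false false) (cell o i true true) +
      edges G (cell o i false false) (cell o i false true) +
      (edges G (cell o i false true) (cell o i true true) +
      edges G (cell o i false true) (cell o i false true)) := by
    have h1 : lab o false = cell o i false false ∪ cell o i false true := by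
      ext x; cases h2 : i x <;> simp [h2]
    have h2 : lab i true = cell o i true true ∪ cell o i false true := by
      ext x; cases h2 : o x <;> simp [h2]
    rw [h1, h2, edges_union_left, edges_union_right, edges_union_right] <;>
    · rw [Finset.disjoint_left]
      intro x
      cases h1 : o x <;> cases h2 : i x <;> simp [h1, h2]
  have a1 := le_edges_univ_right hout (cell o i false false)
  have c1 := le_edges_univ_left hin (cell o i true true)
  have d1 := le_edges_univ_right hout (cell o i false true)
  have d2 := le_edges_univ_left hin (cell o i false true)
  rw [edges_univ_right (o := o) (i := i)] at a1 d1
  rw [edges_univ_left (o := o) (i := i)] at c1 d2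
  have a2 := two_mul_edges_self_le hG (cell o i false false)
  have c2 := two_mul_edges_self_le hG (cell o i true true)
  have ab := edges_add_edges_le hG (cell o i false false) (cell o i true false)
  have bc := edges_add_edges_le hG (cell o i true false) (cell o i true true)
  have cd := edges_add_edges_le hG (cell o i true true) (cell o i false true)
  have da := edges_add_edges_le hG (cell o i false true) (cell o i false false)
  have bd := edges_add_edges_le hG (cell o i true false) (cell o i false true)
  have l1 := hc false false
  have l2 := hc true true
  have l3 := hc false true
  have ab' : (edges G (cell o i false false) (cell o i true false) : ℝ) ≤
    #(cell o i false false) * #(cell o i true false) := by exact_mod_cast by omega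
  have bc' : (edges G (cell o i true false) (cell o i true true) : ℝ) ≤
    #(cell o i true false) * #(cell o i true true) := by exact_mod_cast by omega
  have cd' : (edges G (cell o i true true) (cell o i false true) : ℝ) ≤
    #(cell o i true true) * #(cell o i false true) := by exact_mod_cast by omega
  have da' : (edges G (cell o i false true) (cell o i false false) : ℝ) ≤
    #(cell o i false true) * #(cell o i false false) := by exact_mod_cast by omega
  have bd' : (edges G (cell o i true false) (cell o i false true) : ℝ) +
    edges G (cell o i false true) (cell o i true false) ≤
    #(cell o i true false) * #(cell o i false true) := by exact_mod_cast bd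
  rw [he]
  push_cast at a1 c1 d1 d2 ⊢
  have hd' : (#(cell o i false true) : ℝ) = #(cell o i true false) + k := by exact_mod_cast hd
  have hn' : (#(cell o i false false) : ℝ) + #(cell o i true false) +
    (#(cell o i false true) + #(cell o i true true)) = Fintype.card V := by exact_mod_cast hn
  have hk' : (1 : ℝ) ≤ k := by exact_mod_cast hk
  have hx : (0 : ℝ) ≤ Fintype.card V / 5 := by positivity
  set x : ℝ := (Fintype.card V : ℝ)
  generalize (#(cell o i false false) : ℝ) = a at *
  generalize (#(cell o i true false) : ℝ) = b at *
  generalize (#(cell o i true true) : ℝ) = c at *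
  generalize (#(cell o i false true) : ℝ) = d at *
  have eAC : (0 : ℝ) ≤ edges G (cell o i false false) (cell o i true true) := Nat.cast_nonneg _
  have eAD : (0 : ℝ) ≤ edges G (cell o i false false) (cell o i false true) := Nat.cast_nonneg _
  have eDC : (0 : ℝ) ≤ edges G (cell o i false true) (cell o i true true) := Nat.cast_nonneg _
  have eDD : (0 : ℝ) ≤ edges G (cell o i false true) (cell o i false true) := Nat.cast_nonneg _
  have pA : a * ((3 * x - 4) / 8 - (a - 1) / 2 - b) ≤
    edges G (cell o i false false) (cell o i true true) +
    edges G (cell o i false false) (cell o i false true) := by linarith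
  have pC : c * ((3 * x - 4) / 8 - (c - 1) / 2 - b) ≤
    edges G (cell o i false false) (cell o i true true) +
    edges G (cell o i false true) (cell o i true true) := by linarith
  have pD : d * ((3 * x - 4) / 4 - a - b - c) ≤
    edges G (cell o i false true) (cell o i true true) +
    edges G (cell o i false false) (cell o i false true) +
    2 * edges G (cell o i false true) (cell o i false true) := by linarith
  have qA := mul_le_of_mul_le pA (by linarith) hx l1
  have qC := mul_le_of_mul_le pC (by linarith) hx l2
  have qD := mul_le_of_mul_le pD (by linarith) hx l3
  have hsum : ((3 * x - 4) / 8 - (a - 1) / 2 - b) + ((3 * x - 4) / 8 - (c - 1) / 2 - b) +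
    ((3 * x - 4) / 4 - a - b - c) = 3 / 2 * k - 1 := by linarith
  have h1 : x / 5 * (k / 2) ≤ x / 5 * (3 / 2 * k - 1) := by
    apply mul_le_mul_of_nonneg_left _ hx
    linarith
  rw [← hsum] at h1
  linarith

end

section

variable {V : Type*} [Fintype V]
variable {H G F : V → V → Prop} {p q o i : V → Bool} {δ ε θ : ℝ}

/-- The vertices whose labels `o`, `i` differ from the reference labels `p`, `q`. -/
noncomputable def changed (p q o i : V → Bool) : Finset V :=
  univ.filter fun v => o v ≠ p v ∨ i v ≠ q v

@[simp] lemma mem_changed {v : V} : v ∈ changed p q o i ↔ o v ≠ p v ∨ i v ≠ q v := by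
  simp [changed]

lemma card_lab_update {o : V → Bool} {v : V} {s : Bool} (hv : o v = s) :
    #(lab (Function.update o v (!s)) s) + 1 = #(lab o s) := by
  have h : lab o s = insert v (lab (Function.update o v (!s)) s) := by
    ext x
    simp only [mem_lab, mem_insert, Function.update_apply]
    by_cases hx : x = v
    · simp [hx, hv]
    · simp [hx]
  rw [h, card_insert_of_notMem]
  simp

/-- Greedily changing labels between admissible ones reduces the imbalance to zero, or ends with
labels that cannot be improved. -/
lemma exists_stuck {P Q : V → Bool → Prop} (k : ℕ) : ∀ o i : V → Bool, (∀ v, P v (o v)) →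
    (∀ v, Q v (i v)) → #(lab o false) = #(lab i false) + k →
    ∃ o' i' : V → Bool, ∃ k' ≤ k, (∀ v, P v (o' v)) ∧ (∀ v, Q v (i' v)) ∧
      #(lab o' false) = #(lab i' false) + k' ∧
      #(changed p q o' i') ≤ #(changed p q o i) + k ∧
      (k' = 0 ∨ (∀ v, o' v = false → ¬ P v true) ∧ ∀ v, i' v = true → ¬ Q v false) := by
  induction k with
  | zero => exact fun o i hP hQ h => ⟨o, i, 0, le_rfl, hP, hQ, h, by simp, Or.inl rfl⟩
  | succ k ih =>
    intro o i hP hQ h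
    by_cases h1 : ∃ v, o v = false ∧ P v true
    · obtain ⟨v, hv, hPv⟩ := h1
      have h2 := card_lab_update hv
      obtain ⟨o', i', k', hk, a, b, c, d, e⟩ := ih (Function.update o v true) i (by
        intro u
        rw [Function.update_apply]
        split_ifs with hu
        · rw [hu]; exact hPv
        · exact hP u) hQ (by simp only [Bool.not_false] at h2; omega)
      have h3 : #(changed p q (Function.update o v true) i) ≤ #(changed p q o i) + 1 := by
        refine le_trans (card_le_card ?_) (card_insert_le v _)
        intro u hu
        rw [mem_insert]
        by_cases huv : u = v
        · exact Or.inl huv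
        · right
          simpa [huv, Function.update_apply] using hu
      exact ⟨o', i', k', by omega, a, b, c, by omega, e⟩
    by_cases h1' : ∃ v, i v = true ∧ Q v false
    · obtain ⟨v, hv, hQv⟩ := h1'
      have h2 := card_lab_update hv
      have h4 := card_lab_add i false
      have h5 := card_lab_add (Function.update i v false) false
      simp only [Bool.not_false, Bool.not_true] at h2 h4 h5
      obtain ⟨o', i', k', hk, a, b, c, d, e⟩ := ih o (Function.update i v false) hP (by
        intro u
        rw [Function.update_apply]
        split_ifs with hu
        · rw [hu]; exact hQv
        · exact hQ u) (by omega)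
      have h3 : #(changed p q o (Function.update i v false)) ≤ #(changed p q o i) + 1 := by
        refine le_trans (card_le_card ?_) (card_insert_le v _)
        intro u hu
        rw [mem_insert]
        by_cases huv : u = v
        · exact Or.inl huv
        · right
          simpa [huv, Function.update_apply] using hu
      exact ⟨o', i', k', by omega, a, b, c, by omega, e⟩
    push Not at h1 h1'
    exact ⟨o, i, k + 1, le_rfl, hP, hQ, h, by omega, Or.inr ⟨h1, h1'⟩⟩

lemma NearExtremal.card_bad_out (h : NearExtremal G p q ε) (hn : 0 < Fintype.card V)
    (hε : ε ≤ 1 / 16) (hθ : θ ≤ 1 / 16) (s t : Bool) :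
    (#((cell p q s t).filter fun v => ¬ θ * Fintype.card V ≤ #(nbrOut G v ∩ lab q s)) : ℝ) ≤
      8 * ε * Fintype.card V := by
  set B := (cell p q s t).filter fun v => ¬ θ * Fintype.card V ≤ #(nbrOut G v ∩ lab q s)
  have hx : (0 : ℝ) < Fintype.card V := by exact_mod_cast hn
  have h1 := card_mul_card_add_edges_le (G := G) (X := cell p q s t) (Y := cell p q (!t) s)
    (X' := B) (Y' := cell p q (!t) s) (filter_subset _ _) subset_rfl
  have h1' : (#B : ℝ) * #(cell p q (!t) s) + edges G (cell p q s t) (cell p q (!t) s) ≤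
    #(cell p q s t) * #(cell p q (!t) s) + edges G B (cell p q (!t) s) := by exact_mod_cast h1
  have h2 : (edges G B (cell p q (!t) s) : ℝ) ≤ #B * (θ * Fintype.card V) := by
    refine edges_le_of_out fun x hx => ?_
    have h3 := (mem_filter.1 hx).2
    refine le_trans ?_ (not_le.1 h3).le
    exact_mod_cast card_le_card (inter_subset_inter_left inter_subset_right)
  have h3 := h.full s t
  have h4 := h.size (!t) s
  set x : ℝ := (Fintype.card V : ℝ)
  have h5 : (1 / 8 : ℝ) * x ≤ #(cell p q (!t) s) - θ * x := by nlinarith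
  have h6 := mul_le_mul_of_nonneg_left h5 (Nat.cast_nonneg #B : (0 : ℝ) ≤ _)
  have h7 : (#B : ℝ) * x ≤ (8 * ε * x) * x := by nlinarith
  exact le_of_mul_le_mul_right h7 hx

lemma NearExtremal.card_bad_in (h : NearExtremal G p q ε) (hn : 0 < Fintype.card V)
    (hε : ε ≤ 1 / 16) (hθ : θ ≤ 1 / 16) (s t : Bool) :
    (#((cell p q s t).filter fun v => ¬ θ * Fintype.card V ≤ #(nbrIn G v ∩ lab p t)) : ℝ) ≤
      8 * ε * Fintype.card V := by
  set B := (cell p q s t).filter fun v => ¬ θ * Fintype.card V ≤ #(nbrIn G v ∩ lab p t)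
  have hx : (0 : ℝ) < Fintype.card V := by exact_mod_cast hn
  have h1 := card_mul_card_add_edges_le (G := G) (X := cell p q t (!s)) (Y := cell p q s t)
    (X' := cell p q t (!s)) (Y' := B) subset_rfl (filter_subset _ _)
  have h1' : (#(cell p q t (!s)) : ℝ) * #B + edges G (cell p q t (!s)) (cell p q s t) ≤
    #(cell p q t (!s)) * #(cell p q s t) + edges G (cell p q t (!s)) B := by exact_mod_cast h1
  have h2 : (edges G (cell p q t (!s)) B : ℝ) ≤ #B * (θ * Fintype.card V) := by
    refine edges_le_of_in fun x hx => ?_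
    have h3 := (mem_filter.1 hx).2
    refine le_trans ?_ (not_le.1 h3).le
    exact_mod_cast card_le_card (inter_subset_inter_left inter_subset_left)
  have h3 := h.full t (!s)
  rw [Bool.not_not] at h3
  have h4 := h.size t (!s)
  set x : ℝ := (Fintype.card V : ℝ)
  have h5 : (1 / 8 : ℝ) * x ≤ #(cell p q t (!s)) - θ * x := by nlinarith
  have h6 := mul_le_mul_of_nonneg_left h5 (Nat.cast_nonneg #B : (0 : ℝ) ≤ _)
  have h7 : (#B : ℝ) * x ≤ (8 * ε * x) * x := by nlinarith
  exact le_of_mul_le_mul_right h7 hx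

lemma card_le_inter_lab (S : Finset V) (q : V → Bool) (s : Bool) :
    #S ≤ #(S ∩ lab q s) + #(S ∩ lab q (!s)) := by
  refine le_trans (card_le_card ?_) (card_union_le _ _)
  intro x hx
  cases s <;> cases h : q x <;> simp [hx, h]

lemma exists_valid_label {a : ℝ} {S : Finset V} (hS : 2 * a ≤ #S) (p q : V → Bool) (v : V) :
    ∃ s, a ≤ #(S ∩ lab q s) ∧ (a ≤ #(S ∩ lab q (p v)) → s = p v) := by
  by_cases h : a ≤ #(S ∩ lab q (p v))
  · exact ⟨p v, h, fun _ => rfl⟩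
  · refine ⟨!(p v), ?_, fun h' => absurd h' h⟩
    have h1 : (#S : ℝ) ≤ #(S ∩ lab q (p v)) + #(S ∩ lab q (!(p v))) := by
      exact_mod_cast card_le_inter_lab S q (p v)
    linarith

/-- Changing few labels of a nearly extremal digraph gives all vertices many neighbours along
edges respecting the labels. -/
lemma NearExtremal.exists_labels (h : NearExtremal G p q ε) (hn : 0 < Fintype.card V)
    (hε : ε ≤ 1 / 16) (hθ : θ ≤ 1 / 16)
    (hout : ∀ x, 2 * (θ * Fintype.card V) ≤ #(nbrOut G x))
    (hin : ∀ x, 2 * (θ * Fintype.card V) ≤ #(nbrIn G x)) :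
    ∃ o i : V → Bool, (∀ v, θ * Fintype.card V ≤ #(nbrOut G v ∩ lab q (o v))) ∧
      (∀ v, θ * Fintype.card V ≤ #(nbrIn G v ∩ lab p (i v))) ∧
      (#(changed p q o i) : ℝ) ≤ 64 * ε * Fintype.card V := by
  choose o ho ho' using fun v => exists_valid_label (hout v) p q v
  choose i hi hi' using fun v => exists_valid_label (hin v) q p v
  refine ⟨o, i, ho, hi, ?_⟩
  set Bo := fun s t => (cell p q s t).filter fun v => ¬ θ * Fintype.card V ≤ #(nbrOut G v ∩ lab q s)
    with hBo
  set Bi := fun s t => (cell p q s t).filter fun v => ¬ θ * Fintype.card V ≤ #(nbrIn G v ∩ lab p t)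
    with hBi
  have h1 : changed p q o i ⊆ (univ : Finset (Bool × Bool)).biUnion fun st =>
      Bo st.1 st.2 ∪ Bi st.1 st.2 := by
    intro v hv
    rw [mem_changed] at hv
    rw [mem_biUnion]
    refine ⟨(p v, q v), mem_univ _, ?_⟩
    rw [mem_union]
    refine hv.imp (fun hv => ?_) (fun hv => ?_)
    · exact mem_filter.2 ⟨by simp, fun hc => hv (ho' v hc)⟩
    · exact mem_filter.2 ⟨by simp, fun hc => hv (hi' v hc)⟩
  have h2 : (#(changed p q o i) : ℝ) ≤ ∑ st : Bool × Bool, (16 * ε * Fintype.card V) := by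
    refine le_trans (Nat.cast_le.2 ((card_le_card h1).trans card_biUnion_le)) ?_
    rw [Nat.cast_sum]
    refine sum_le_sum fun st _ => ?_
    have h3 := h.card_bad_out hn hε hθ st.1 st.2
    have h4 := h.card_bad_in hn hε hθ st.1 st.2
    have h5 : (#(Bo st.1 st.2 ∪ Bi st.1 st.2) : ℝ) ≤ #(Bo st.1 st.2) + #(Bi st.1 st.2) := by
      exact_mod_cast card_union_le _ _
    linarith
  rw [sum_const, card_univ] at h2
  simp at h2
  linarith

lemma lab_not (p : V → Bool) (s : Bool) : lab (fun v => !(p v)) s = lab p (!s) := by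
  ext x
  cases s <;> simp

lemma cell_not (p q : V → Bool) (s t : Bool) :
    cell (fun v => !(p v)) (fun v => !(q v)) s t = cell p q (!s) (!t) := by
  rw [cell, cell, lab_not, lab_not]

lemma NearExtremal.not (h : NearExtremal G p q ε) :
    NearExtremal G (fun v => !(p v)) (fun v => !(q v)) ε := by
  refine ⟨fun s t => ?_, fun s t => ?_, fun s t => ?_⟩
  · rw [cell_not]; exact h.size _ _
  · rw [cell_not, cell_not]; exact h.full _ _
  · rw [cell_not, cell_not]; exact h.half _ _

end

section

variable {V : Type*} [Fintype V]
variable {H G F : V → V → Prop} {p q o i : V → Bool} {δ ε θ : ℝ}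

lemma card_lab_le_changed_left (p q o i : V → Bool) (s : Bool) :
    #(lab o s) ≤ #(lab p s) + #(changed p q o i) := by
  refine le_trans (card_le_card fun v hv => ?_) (card_union_le _ _)
  rw [mem_union, mem_lab, mem_changed]
  rw [mem_lab] at hv
  by_cases h : o v = p v
  · exact Or.inl (h.symm.trans hv)
  · exact Or.inr (Or.inl h)

lemma card_lab_le_changed_right (p q o i : V → Bool) (s : Bool) :
    #(lab q s) ≤ #(lab i s) + #(changed p q o i) := by
  refine le_trans (card_le_card fun v hv => ?_) (card_union_le _ _)
  rw [mem_union, mem_lab, mem_changed]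
  rw [mem_lab] at hv
  by_cases h : i v = q v
  · exact Or.inl (h.trans hv)
  · exact Or.inr (Or.inr h)

lemma card_cell_le_changed (p q o i : V → Bool) (s t : Bool) :
    #(cell p q s t) ≤ #(cell o i s t) + #(changed p q o i) := by
  refine le_trans (card_le_card fun v hv => ?_) (card_union_le _ _)
  rw [mem_union, mem_cell, mem_changed]
  rw [mem_cell] at hv
  by_cases h : o v = p v
  · by_cases h' : i v = q v
    · exact Or.inl ⟨h.trans hv.1, h'.trans hv.2⟩
    · exact Or.inr (Or.inr h')
  · exact Or.inr (Or.inl h)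

/-- If no label can be changed to reduce the imbalance, then there is a matching whose edges can be
used to balance the labels. -/
lemma exists_balancing_matching (hG : ∀ x y, G x y → ¬ G y x)
    (hout : ∀ x, (3 * (Fintype.card V : ℝ) - 4) / 8 ≤ #(nbrOut G x))
    (hin : ∀ x, (3 * (Fintype.card V : ℝ) - 4) / 8 ≤ #(nbrIn G x))
    (hn : 0 < Fintype.card V)
    (hc : ∀ s t, (Fintype.card V : ℝ) / 5 ≤ #(cell o i s t)) {k : ℕ}
    (hlab : #(lab o false) = #(lab i false) + k)
    (hW : (#(changed p q o i) : ℝ) ≤ Fintype.card V / 400)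
    (hk : k = 0 ∨
      (∀ v, o v = false → ¬ 1 / 400 * (Fintype.card V : ℝ) ≤ #(nbrOut G v ∩ lab q true)) ∧
      ∀ v, i v = true → ¬ 1 / 400 * (Fintype.card V : ℝ) ≤ #(nbrIn G v ∩ lab p false)) :
    ∃ M : List (V × V), M.length = k ∧ (∀ e ∈ M, G e.1 e.2 ∧ o e.1 = false ∧ i e.2 = true) ∧
      (M.flatMap fun e => [e.1, e.2]).Nodup := by
  rcases Nat.eq_zero_or_pos k with rfl | hk0
  · exact ⟨[], by simp⟩
  obtain ⟨hk1, hk2⟩ := hk.resolve_left hk0.ne'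
  have hx : (0 : ℝ) < Fintype.card V := by exact_mod_cast hn
  have he := le_edges_of_semidegree hG hout hin hc hk0 hlab
  set F : V → V → Prop := fun x y => G x y ∧ o x = false ∧ i y = true with hF
  have heF : edges F univ univ = edges G (lab o false) (lab i true) := by
    simp only [edges_eq_card]
    congr 1
    ext e
    simp only [mem_filter, mem_product, mem_univ, true_and, mem_lab, hF]
    tauto
  refine exists_matching (F := F) (d := ⌊(Fintype.card V : ℝ) / 200⌋₊)
    (fun x hx => hG x x hx.1 hx.1) (fun x => ?_) (fun x => ?_) k ?_
  · apply Nat.le_floor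
    by_cases hox : o x = false
    · have h1 : (#(nbrOut F x) : ℝ) ≤ #(nbrOut G x ∩ lab q true) + #(changed p q o i) := by
        refine le_trans (Nat.cast_le.2 (card_le_card ?_)) (by exact_mod_cast card_union_le _ _)
        intro y hy
        rw [mem_nbrOut] at hy
        simp only [mem_union, mem_inter, mem_nbrOut, mem_lab, mem_changed]
        by_cases h : i y = q y
        · exact Or.inl ⟨hy.1, h.symm.trans hy.2.2⟩
        · exact Or.inr (Or.inr h)
      have h2 := not_le.1 (hk1 x hox)
      linarith
    · have : nbrOut F x = ∅ := by
        ext y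
        simp [hF, hox]
      rw [this]
      simp
      positivity
  · apply Nat.le_floor
    by_cases hox : i x = true
    · have h1 : (#(nbrIn F x) : ℝ) ≤ #(nbrIn G x ∩ lab p false) + #(changed p q o i) := by
        refine le_trans (Nat.cast_le.2 (card_le_card ?_)) (by exact_mod_cast card_union_le _ _)
        intro y hy
        rw [mem_nbrIn] at hy
        simp only [mem_union, mem_inter, mem_nbrIn, mem_lab, mem_changed]
        by_cases h : o y = p y
        · exact Or.inl ⟨hy.1, h.symm.trans hy.2.1⟩
        · exact Or.inr (Or.inl h)
      have h2 := not_le.1 (hk2 x hox)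
      linarith
    · have : nbrIn F x = ∅ := by
        ext y
        simp [hF, hox]
      rw [this]
      simp
      positivity
  · rw [heF]
    have h1 := Nat.floor_le (a := (Fintype.card V : ℝ) / 200) (by positivity)
    have h2 : (0 : ℝ) < k := by exact_mod_cast hk0
    have h3 : (4 : ℝ) * k * ⌊(Fintype.card V : ℝ) / 200⌋₊ < edges G (lab o false) (lab i true) := by
      refine lt_of_le_of_lt (mul_le_mul_of_nonneg_left h1 (by positivity)) ?_
      have : 0 < (k : ℝ) * Fintype.card V := by positivity
      linarith
    exact_mod_cast h3

/-- The labels obtained by moving the tails of the edges of a matching. -/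
lemma exists_balanced_labels {M : List (V × V)} {k : ℕ} (hMk : M.length = k)
    (hM : ∀ e ∈ M, G e.1 e.2 ∧ o e.1 = false ∧ i e.2 = true)
    (hnd : (M.flatMap fun e => [e.1, e.2]).Nodup) (hlab : #(lab o false) = #(lab i false) + k) :
    ∃ o' : V → Bool, (∀ e ∈ M, G e.1 e.2 ∧ o' e.1 = i e.2) ∧
      (∀ v, (∀ e ∈ M, e.1 ≠ v) → o' v = o v) ∧ ∀ j, #(lab o' j) = #(lab i j) := by
  set T := (M.map Prod.fst).toFinset with hT
  have hTm : ∀ v, v ∈ T ↔ ∃ e ∈ M, e.1 = v := by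
    intro v
    simp only [hT, List.mem_toFinset, List.mem_map]
  have hTc : #T = k := by
    rw [hT, List.toFinset_card_of_nodup, List.length_map, hMk]
    rw [List.nodup_flatMap] at hnd
    rw [List.Nodup, List.pairwise_map]
    refine hnd.2.imp fun {a b} h hab => ?_
    exact h (a := a.1) (by simp) (by simp [hab])
  have hTo : T ⊆ lab o false := by
    intro v hv
    obtain ⟨e, he, rfl⟩ := (hTm v).1 hv
    rw [mem_lab]
    exact (hM e he).2.1
  refine ⟨fun v => if v ∈ T then true else o v, fun e he => ⟨(hM e he).1, ?_⟩, fun v hv => ?_, ?_⟩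
  · beta_reduce
    rw [if_pos ((hTm _).2 ⟨e, he, rfl⟩), (hM e he).2.2]
  · beta_reduce
    rw [if_neg]
    rw [hTm]
    push Not
    exact hv
  · have h1 : lab (fun v => if v ∈ T then true else o v) false = lab o false \ T := by
      ext v
      by_cases h : v ∈ T <;> simp [h]
    have h2 : #(lab (fun v => if v ∈ T then true else o v) false) = #(lab i false) := by
      rw [h1, card_sdiff_of_subset hTo]
      omega
    have h3 := card_lab_add (fun v => if v ∈ T then true else o v) false
    have h4 := card_lab_add i false
    simp only [Bool.not_false] at h3 h4
    rintro (_ | _)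
    · exact h2
    · omega

/-- The extremal case of the theorem. -/
lemma exists_hamilton_of_nearExtremal : ∃ ε : ℝ, 0 < ε ∧ ∃ n₀ : ℕ, ∀ (V : Type) [Fintype V]
    (G : V → V → Prop) (p q : V → Bool), n₀ ≤ Fintype.card V → (∀ x y, G x y → ¬ G y x) →
    (∀ x, (3 * (Fintype.card V : ℝ) - 4) / 8 ≤ #(nbrOut G x)) →
    (∀ x, (3 * (Fintype.card V : ℝ) - 4) / 8 ≤ #(nbrIn G x)) → NearExtremal G p q ε →
    ∃ f : ZMod (Fintype.card V) → V, Function.Bijective f ∧ ∀ k, G (f k) (f (k + 1)) := by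
  set ζ : ℝ := 1 / 25600 with hζ
  obtain ⟨ε₀, hε₀, n₁, hd⟩ := exists_hamilton_of_dense (δ := 1 / 800) (τ := 1 / 3200)
    (μ := ζ ^ 2 / 2) (by norm_num) (by norm_num) (by norm_num) (by norm_num) (by norm_num [hζ])
    (by norm_num [hζ])
  have hε0 : 0 < min (ζ ^ 2 / 2) (ε₀ / 200) := lt_min (by norm_num [hζ]) (by positivity)
  have hε1 : min (ζ ^ 2 / 2) (ε₀ / 200) ≤ ζ ^ 2 / 2 := min_le_left _ _
  have hε2 : min (ζ ^ 2 / 2) (ε₀ / 200) ≤ ε₀ / 200 := min_le_right _ _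
  set ε := min (ζ ^ 2 / 2) (ε₀ / 200)
  have hε3 : 200 * ε ≤ ζ := by rw [hζ] at hε1 ⊢; norm_num at hε1 ⊢; linarith
  refine ⟨ε, hε0, max n₁ 10, ?_⟩
  intro V _ G p q hn hG hout hin hne
  have hn10 : 10 ≤ Fintype.card V := le_trans (le_max_right _ _) hn
  have hn1 : n₁ ≤ Fintype.card V := le_trans (le_max_left _ _) hn
  have hn0 : 0 < Fintype.card V := by omega
  have hx10 : (10 : ℝ) ≤ Fintype.card V := by exact_mod_cast hn10
  have main : ∀ p q o i : V → Bool, NearExtremal G p q ε →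
      (∀ v, 1 / 400 * (Fintype.card V : ℝ) ≤ #(nbrOut G v ∩ lab q (o v))) →
      (∀ v, 1 / 400 * (Fintype.card V : ℝ) ≤ #(nbrIn G v ∩ lab p (i v))) →
      (#(changed p q o i) : ℝ) ≤ 64 * ε * Fintype.card V → #(lab i false) ≤ #(lab o false) →
      ∃ f : ZMod (Fintype.card V) → V, Function.Bijective f ∧ ∀ k, G (f k) (f (k + 1)) := by
    clear hne p q
    intro p q o₀ i₀ hne ho₀ hi₀ hch hle
    obtain ⟨o, i, k, hk, ho, hi, hlab, hch', hst⟩ := exists_stuck (p := p) (q := q)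
      (P := fun v s => 1 / 400 * (Fintype.card V : ℝ) ≤ #(nbrOut G v ∩ lab q s))
      (Q := fun v s => 1 / 400 * (Fintype.card V : ℝ) ≤ #(nbrIn G v ∩ lab p s))
      (#(lab o₀ false) - #(lab i₀ false)) o₀ i₀ ho₀ hi₀ (by omega)
    set x : ℝ := (Fintype.card V : ℝ)
    have hx0 : 0 < x := by linarith
    have hεx : 200 * (ε * x) ≤ ζ * x := by nlinarith
    have hk' : ((#(lab o₀ false) - #(lab i₀ false) : ℕ) : ℝ) ≤ 132 * (ε * x) := by
      rw [Nat.cast_sub hle]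
      have h1 : (#(lab o₀ false) : ℝ) ≤ #(lab p false) + #(changed p q o₀ i₀) := by
        exact_mod_cast card_lab_le_changed_left p q o₀ i₀ false
      have h2 : (#(lab q false) : ℝ) ≤ #(lab i₀ false) + #(changed p q o₀ i₀) := by
        exact_mod_cast card_lab_le_changed_right p q o₀ i₀ false
      have h3 : (#(lab p false) : ℝ) = #(cell p q false false) + #(cell p q false true) := by
        exact_mod_cast card_lab_eq_left p q false
      have h4 : (#(lab q false) : ℝ) = #(cell p q false false) + #(cell p q true false) := by
        exact_mod_cast card_lab_eq_right p q false
      have h5 := hne.size true false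
      have h6 := hne.card_cell_le false true
      linarith
    have hW : (#(changed p q o i) : ℝ) ≤ 200 * (ε * x) := by
      have : (#(changed p q o i) : ℝ) ≤ #(changed p q o₀ i₀) +
        ((#(lab o₀ false) - #(lab i₀ false) : ℕ) : ℝ) := by exact_mod_cast hch'
      linarith
    have hζx : ζ * x = x / 25600 := by rw [hζ]; ring
    have hεx0 : 0 ≤ ε * x := by positivity
    have hkx : (k : ℝ) ≤ ((#(lab o₀ false) - #(lab i₀ false) : ℕ) : ℝ) := by exact_mod_cast hk
    have hεx1 : ε * x ≤ x / 5120000 := by rw [hζx] at hεx; clear_value ε x; clear * - hεx; linarith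
    obtain ⟨M, hMk, hM, hnd⟩ := exists_balancing_matching (p := p) (q := q) hG hout hin hn0
      (fun s t => by
        have h1 : (#(cell p q s t) : ℝ) ≤ #(cell o i s t) + #(changed p q o i) := by
          exact_mod_cast card_cell_le_changed p q o i s t
        have h2 : (1 / 4 - ε) * x ≤ #(cell p q s t) := hne.size s t
        change x / 5 ≤ _
        linarith) hlab (by change _ ≤ x / 400; linarith) hst
    obtain ⟨o', h1, h2, h3⟩ := exists_balanced_labels hMk hM hnd hlab
    refine hd V (fun x y => G x y ∧ o x = i y) G o o' i M hn1 ?_ (fun _ _ h => h.1) h1 hnd h2 h3 ?_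
    · refine hne.dense (W := changed p q o i) (ζ := ζ) (fun v hv => ?_) hn0 (by norm_num [hζ])
        (by norm_num [hζ]) (by norm_num [hζ]) hε1 le_rfl (by linarith) ?_ ?_ ?_
      · rw [mem_changed] at hv
        tauto
      · change _ ≤ 1 / 800 * x
        linarith
      · intro v
        have := ho v
        change 2 * (1 / 800) * x ≤ _
        linarith
      · intro v
        have := hi v
        change 2 * (1 / 800) * x ≤ _
        linarith
    · rw [hMk]
      have h5 : 200 * (ε * x) ≤ ε₀ * x := by nlinarith
      change _ ≤ ε₀ * x
      nlinarith
  obtain ⟨o, i, ho, hi, hch⟩ := hne.exists_labels (θ := 1 / 400) hn0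
    (by rw [hζ] at hε3; linarith) (by norm_num)
    (fun v => le_trans (by linarith) (hout v)) (fun v => le_trans (by linarith) (hin v))
  rcases le_total #(lab i false) #(lab o false) with h | h
  · exact main p q o i hne ho hi hch h
  · refine main _ _ (fun v => !(o v)) (fun v => !(i v)) hne.not (fun v => ?_) (fun v => ?_) ?_ ?_
    · rw [lab_not, Bool.not_not]
      exact ho v
    · rw [lab_not, Bool.not_not]
      exact hi v
    · have : changed (fun v => !(p v)) (fun v => !(q v)) (fun v => !(o v)) (fun v => !(i v)) =
          changed p q o i := by
        ext v
        simp
      rw [this]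
      exact hch
    · rw [lab_not, lab_not]
      have h1 := card_lab_add o false
      have h2 := card_lab_add i false
      omega

end

section

lemma near_extremal_sizes {a b c d h μ : ℝ}
    (hs : a + b + c + d = 1) (hμ : 0 < μ) (hμ1 : μ ≤ 1 / 100000) (hh : h = 3 / 8 - μ)
    (had : 1 / 16 ≤ a + d) (hcd : 1 / 16 ≤ c + d) (hbd : b ≤ d + μ)
    (h1 : h * a ≤ a * a / 2 + a * b + μ) (h2 : h * c ≤ c * c / 2 + b * c + μ)
    (h3 : h * d ≤ d * a + d * b + μ) (h4 : h * d ≤ b * d + c * d + μ)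
    (h5 : 2 * (h * d) ≤ d * a + b * d + c * d + 2 * μ) :
    (1 / 4 - 1000 * μ ≤ a ∧ 1 / 4 - 1000 * μ ≤ b ∧ 1 / 4 - 1000 * μ ≤ c ∧ 1 / 4 - 1000 * μ ≤ d) ∧
    (a ≤ 1 / 4 + 3000 * μ ∧ b ≤ 1 / 4 + 3000 * μ ∧ c ≤ 1 / 4 + 3000 * μ ∧
      d ≤ 1 / 4 + 3000 * μ) := by
  have key : ∀ z w : ℝ, 1 / 100 ≤ z → h * z ≤ z * w + μ → h ≤ w + 100 * μ := by
    intro z w hz hzw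
    by_contra! hcon
    nlinarith
  have ka : 1 / 100 ≤ a → h ≤ a / 2 + b + 100 * μ := fun hz => by
    linarith [key a (a / 2 + b) hz (by linarith)]
  have kc : 1 / 100 ≤ c → h ≤ c / 2 + b + 100 * μ := fun hz => by
    linarith [key c (c / 2 + b) hz (by linarith)]
  rcases lt_or_ge d (1 / 100) with hd1 | hd1
  · have := ka (by linarith)
    have := kc (by linarith)
    exfalso
    linarith
  have kd := key d ((a + b + c) / 2) hd1 (by linarith)
  have kd1 := key d (a + b) hd1 (by linarith)
  have kd2 := key d (b + c) hd1 (by linarith)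
  have ka := ka (by linarith)
  have kc := kc (by linarith)
  refine ⟨⟨?_, ?_, ?_, ?_⟩, ?_, ?_, ?_, ?_⟩ <;> linarith

lemma near_extremal_edges {a b c d h μ ε AA AB BC CC DA DB BD CD : ℝ}
    (ha : 0 ≤ a) (hc : 0 ≤ c) (hd : 0 ≤ d) (hs : a + b + c + d = 1) (hμ : 0 < μ)
    (hμ1 : μ ≤ 1 / 1000000)
    (hμε : 10000 * μ ≤ ε) (hh : h = 3 / 8 - μ)
    (had : 1 / 16 ≤ a + d) (hcd : 1 / 16 ≤ c + d) (hbd : b ≤ d + μ)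
    (hA : h * a ≤ AA + AB + μ) (hC : h * c ≤ BC + CC + μ) (hD : h * d ≤ DA + DB + μ)
    (hD' : h * d ≤ BD + CD + μ) (hAA : 2 * AA ≤ a * a) (hCC : 2 * CC ≤ c * c)
    (hAB : AB ≤ a * b) (hBC : BC ≤ b * c) (hDA : DA ≤ d * a) (hCD : CD ≤ c * d)
    (hDB0 : DB ≤ d * b) (hBD0 : BD ≤ b * d) (hDB : DB + BD ≤ d * b) :
    (1 / 4 - ε ≤ a ∧ 1 / 4 - ε ≤ b ∧ 1 / 4 - ε ≤ c ∧ 1 / 4 - ε ≤ d) ∧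
    (a * b - ε ≤ AB ∧ b * c - ε ≤ BC ∧ d * a - ε ≤ DA ∧ c * d - ε ≤ CD) ∧
    (1 / 40 ≤ AA ∧ 1 / 40 ≤ CC ∧ 1 / 40 ≤ DB ∧ 1 / 40 ≤ BD) := by
  obtain ⟨⟨ha1, hb1, hc1, hd1⟩, ha2, hb2, hc2, hd2⟩ := near_extremal_sizes hs hμ
    (by linarith) hh had hcd hbd (by linarith) (by linarith) (by linarith) (by linarith)
    (by linarith)
  have key : ∀ z w r : ℝ, 0 ≤ z → z ≤ 1 → 0 ≤ r → w ≤ r → z * w ≤ r := by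
    intro z w r h0 h1 hr hw
    exact (mul_le_mul_of_nonneg_left hw h0).trans (mul_le_of_le_one_left hr h1)
  have low : ∀ z w : ℝ, 1 / 4 - 1000 * μ ≤ z → 1 / 8 - 4000 * μ ≤ w → 1 / 40 + μ ≤ z * w := by
    intro z w hz hw
    have h1 : (249 / 1000 : ℝ) ≤ z := by linarith
    have h2 : (121 / 1000 : ℝ) ≤ w := by linarith
    have h3 := mul_le_mul h1 h2 (by norm_num) (by linarith)
    norm_num at h3
    linarith
  refine ⟨⟨?_, ?_, ?_, ?_⟩, ⟨?_, ?_, ?_, ?_⟩, ?_, ?_, ?_, ?_⟩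
  · linarith
  · linarith
  · linarith
  · linarith
  · have := key a (b + a / 2 - h) (9000 * μ) ha (by linarith) (by linarith) (by linarith)
    linarith
  · have := key c (b + c / 2 - h) (9000 * μ) hc (by linarith) (by linarith) (by linarith)
    linarith
  · have := key d (a + b + c - 2 * h) (9000 * μ) hd (by linarith) (by linarith) (by linarith)
    linarith
  · have := key d (a + b + c - 2 * h) (9000 * μ) hd (by linarith) (by linarith) (by linarith)
    linarith
  · have := low a (h - b) ha1 (by linarith)
    linarith
  · have := low c (h - b) hc1 (by linarith)
    linarith
  · have := low d (h - a) hd1 (by linarith)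
    linarith
  · have := low d (h - c) hd1 (by linarith)
    linarith

lemma near_extremal_counts {x A B C D μ ε AA AB AC AD BC BD CC CD DA DB DC DD : ℝ}
    (hx : 0 < x) (hμ : 0 < μ) (hμ1 : μ ≤ 1 / 1000000) (hμε : 10000 * μ ≤ ε)
    (hn : 1 ≤ 2 * μ * x) (nA : 0 ≤ A) (nC : 0 ≤ C) (nD : 0 ≤ D)
    (hV : A + B + (D + C) = x) (hS : 1 / 16 * x ≤ A + D) (hT : 1 / 16 * x ≤ C + D)
    (hST : x - μ * x ≤ A + D + (C + D)) (he : AC + AD + (DC + DD) < μ * x ^ 2)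
    (outA : A * ((3 * x - 4) / 8) ≤ AA + AB + AC + AD)
    (outD : D * ((3 * x - 4) / 8) ≤ DA + DB + DC + DD)
    (inC : C * ((3 * x - 4) / 8) ≤ AC + BC + CC + DC)
    (inD : D * ((3 * x - 4) / 8) ≤ AD + BD + CD + DD)
    (hAA : 2 * AA ≤ A * (A - 1)) (hCC : 2 * CC ≤ C * (C - 1))
    (hAB : AB ≤ A * B) (hBC : BC ≤ B * C) (hDA : DA ≤ D * A) (hCD : CD ≤ C * D)
    (hDB0 : DB ≤ D * B) (hBD0 : BD ≤ B * D) (hDB : DB + BD ≤ D * B)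
    (nAC : 0 ≤ AC) (nAD : 0 ≤ AD) (nDC : 0 ≤ DC) (nDD : 0 ≤ DD) :
    ((1 / 4 - ε) * x ≤ A ∧ (1 / 4 - ε) * x ≤ B ∧ (1 / 4 - ε) * x ≤ C ∧ (1 / 4 - ε) * x ≤ D) ∧
    (A * B - ε * x ^ 2 ≤ AB ∧ B * C - ε * x ^ 2 ≤ BC ∧ D * A - ε * x ^ 2 ≤ DA ∧
      C * D - ε * x ^ 2 ≤ CD) ∧
    (x ^ 2 / 40 ≤ AA ∧ x ^ 2 / 40 ≤ CC ∧ x ^ 2 / 40 ≤ DB ∧ x ^ 2 / 40 ≤ BD) := by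
  have low : ∀ X, 0 ≤ X → (3 / 8 - μ) * x * X ≤ X * ((3 * x - 4) / 8) := by
    intro X hX
    have := mul_le_mul_of_nonneg_left hn hX
    linarith
  have lA := low A nA
  have lC := low C nC
  have lD := low D nD
  have hx2 : 0 < x ^ 2 := by positivity
  have c1 : ∀ r s : ℝ, r * x ≤ s * x → r ≤ s := fun r s h => le_of_mul_le_mul_right h hx
  have c2 : ∀ r s : ℝ, r * x ^ 2 ≤ s * x ^ 2 → r ≤ s := fun r s h => le_of_mul_le_mul_right h hx2
  have p1 : ∀ X : ℝ, ∃ a, X = a * x := fun X => ⟨X / x, by field_simp⟩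
  have p2 : ∀ X : ℝ, ∃ a, X = a * x ^ 2 := fun X => ⟨X / x ^ 2, by field_simp⟩
  have hAA' : 2 * AA ≤ A * A := by linarith
  have hCC' : 2 * CC ≤ C * C := by linarith
  have eA : (3 / 8 - μ) * x * A ≤ AA + AB + μ * x ^ 2 := by linarith
  have eC : (3 / 8 - μ) * x * C ≤ BC + CC + μ * x ^ 2 := by linarith
  have eD : (3 / 8 - μ) * x * D ≤ DA + DB + μ * x ^ 2 := by linarith
  have eD' : (3 / 8 - μ) * x * D ≤ BD + CD + μ * x ^ 2 := by linarith
  clear outA outD inC inD lA lC lD low hAA hCC nAC nAD nDC nDD he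
  obtain ⟨a, rfl⟩ := p1 A
  obtain ⟨b, rfl⟩ := p1 B
  obtain ⟨c, rfl⟩ := p1 C
  obtain ⟨d, rfl⟩ := p1 D
  obtain ⟨aa, rfl⟩ := p2 AA
  obtain ⟨ab, rfl⟩ := p2 AB
  obtain ⟨bc, rfl⟩ := p2 BC
  obtain ⟨cc, rfl⟩ := p2 CC
  obtain ⟨da, rfl⟩ := p2 DA
  obtain ⟨cd, rfl⟩ := p2 CD
  obtain ⟨db, rfl⟩ := p2 DB
  obtain ⟨bd, rfl⟩ := p2 BD
  clear p1 p2
  have hs : a + b + c + d = 1 :=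
    le_antisymm (c1 _ _ (by linarith)) (c1 _ _ (by linarith))
  obtain ⟨⟨s1, s2, s3, s4⟩, ⟨f1, f2, f3, f4⟩, g1, g2, g3, g4⟩ := near_extremal_edges
    (nonneg_of_mul_nonneg_left nA hx)
    (nonneg_of_mul_nonneg_left nC hx) (nonneg_of_mul_nonneg_left nD hx)
    hs hμ hμ1 hμε rfl (c1 _ _ (by linarith)) (c1 _ _ (by linarith)) (c1 _ _ (by linarith))
    (c2 _ (aa + ab + μ) (by linarith)) (c2 _ (bc + cc + μ) (by linarith))
    (c2 _ (da + db + μ) (by linarith)) (c2 _ (bd + cd + μ) (by linarith))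
    (c2 _ _ (by linarith)) (c2 _ _ (by linarith)) (c2 _ _ (by linarith)) (c2 _ _ (by linarith))
    (c2 _ _ (by linarith)) (c2 _ _ (by linarith)) (c2 _ _ (by linarith)) (c2 _ _ (by linarith))
    (c2 _ _ (by linarith))
  have m1 : ∀ {r s : ℝ}, r ≤ s → r * x ≤ s * x := fun h => mul_le_mul_of_nonneg_right h hx.le
  have m2 : ∀ {r s : ℝ}, r ≤ s → r * x ^ 2 ≤ s * x ^ 2 :=
    fun h => mul_le_mul_of_nonneg_right h hx2.le
  refine ⟨⟨m1 s1, m1 s2, m1 s3, m1 s4⟩, ⟨?_, ?_, ?_, ?_⟩, ?_, ?_, ?_, ?_⟩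
  · linarith [m2 f1]
  · linarith [m2 f2]
  · linarith [m2 f3]
  · linarith [m2 f4]
  · linarith [m2 g1]
  · linarith [m2 g2]
  · linarith [m2 g3]
  · linarith [m2 g4]

variable {V : Type*} [Fintype V]
variable {G : V → V → Prop} {μ ε : ℝ}

lemma edges_le_mul (X Y : Finset V) : edges G X Y ≤ #X * #Y := by
  rw [edges_eq_card, ← card_product]
  exact card_filter_le _ _

/-- A sparse pair of large sets covering almost all vertices forces the extremal structure. -/
lemma exists_nearExtremal {S T : Finset V} (hμ : 0 < μ) (hμ1 : μ ≤ 1 / 1000000)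
    (hμε : 10000 * μ ≤ ε) (hn : 1 ≤ 2 * μ * Fintype.card V) (hG : ∀ x y, G x y → ¬ G y x)
    (hout : ∀ x, (3 * (Fintype.card V : ℝ) - 4) / 8 ≤ #(nbrOut G x))
    (hin : ∀ x, (3 * (Fintype.card V : ℝ) - 4) / 8 ≤ #(nbrIn G x))
    (hS : 1 / 16 * (Fintype.card V : ℝ) ≤ #S) (hT : 1 / 16 * (Fintype.card V : ℝ) ≤ #T)
    (hST : (Fintype.card V : ℝ) - μ * Fintype.card V ≤ #S + #T)
    (he : (edges G S T : ℝ) < μ * (Fintype.card V : ℝ) ^ 2) :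
    ∃ p q, NearExtremal G p q ε := by
  set p : V → Bool := fun v => decide (v ∉ S) with hp
  set q : V → Bool := fun v => decide (v ∈ T) with hq
  have hSc : cell p q false false ∪ cell p q false true = S := by
    ext v
    by_cases h1 : v ∈ S <;> by_cases h2 : v ∈ T <;> simp [hp, hq, h1, h2]
  have hTc : cell p q true true ∪ cell p q false true = T := by
    ext v
    by_cases h1 : v ∈ S <;> by_cases h2 : v ∈ T <;> simp [hp, hq, h1, h2]
  have hd : ∀ s t s' t', (s ≠ s' ∨ t ≠ t') → Disjoint (cell p q s t) (cell p q s' t') := by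
    intro s t s' t' h
    rw [Finset.disjoint_left]
    intro v hv hv'
    rw [mem_cell] at hv hv'
    rcases h with h | h
    · exact h (hv.1.symm.trans hv'.1)
    · exact h (hv.2.symm.trans hv'.2)
  set A := cell p q false false
  set B := cell p q true false
  set C := cell p q true true
  set D := cell p q false true
  have hScard : #S = #A + #D := by rw [← hSc, card_union_of_disjoint (hd _ _ _ _ (by simp))]
  have hTcard : #T = #C + #D := by rw [← hTc, card_union_of_disjoint (hd _ _ _ _ (by simp))]
  have hVcard : #A + #B + (#D + #C) = Fintype.card V := card_cells p q false false
  have heST : edges G S T = edges G A C + edges G A D + (edges G D C + edges G D D) := by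
    rw [← hSc, ← hTc, edges_union_left (hd _ _ _ _ (by simp)),
      edges_union_right (hd _ _ _ _ (by simp)), edges_union_right (hd _ _ _ _ (by simp))]
  have outA := le_edges_univ_right hout A
  have outD := le_edges_univ_right hout D
  have inC := le_edges_univ_left hin C
  have inD := le_edges_univ_left hin D
  rw [edges_univ_right (o := p) (i := q)] at outA outD
  rw [edges_univ_left (o := p) (i := q)] at inC inD
  have hAA := two_mul_edges_self_le hG A
  have hCC := two_mul_edges_self_le hG C
  rw [hScard, Nat.cast_add] at hS hST
  rw [hTcard, Nat.cast_add] at hT hST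
  rw [heST] at he
  have hV : (#A + #B + (#D + #C) : ℝ) = Fintype.card V := by exact_mod_cast hVcard
  push_cast at outA outD inC inD he
  have hAB : (edges G A B : ℝ) ≤ #A * #B := by exact_mod_cast edges_le_mul A B
  have hBC : (edges G B C : ℝ) ≤ #B * #C := by exact_mod_cast edges_le_mul B C
  have hDA : (edges G D A : ℝ) ≤ #D * #A := by exact_mod_cast edges_le_mul D A
  have hCD : (edges G C D : ℝ) ≤ #C * #D := by exact_mod_cast edges_le_mul C D
  have hDB0 : (edges G D B : ℝ) ≤ #D * #B := by exact_mod_cast edges_le_mul D B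
  have hBD0 : (edges G B D : ℝ) ≤ #B * #D := by exact_mod_cast edges_le_mul B D
  have hDB : (edges G D B + edges G B D : ℝ) ≤ #D * #B := by
    exact_mod_cast edges_add_edges_le hG D B
  have nAC : (0 : ℝ) ≤ edges G A C := Nat.cast_nonneg _
  have nAD : (0 : ℝ) ≤ edges G A D := Nat.cast_nonneg _
  have nDC : (0 : ℝ) ≤ edges G D C := Nat.cast_nonneg _
  have nDD : (0 : ℝ) ≤ edges G D D := Nat.cast_nonneg _
  have nA : (0 : ℝ) ≤ #A := Nat.cast_nonneg _
  have nC : (0 : ℝ) ≤ #C := Nat.cast_nonneg _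
  have nD : (0 : ℝ) ≤ #D := Nat.cast_nonneg _
  have hx0 : (0 : ℝ) < Fintype.card V := by
    by_contra! hcon
    nlinarith
  refine ⟨p, q, ?_⟩
  obtain ⟨⟨s1, s2, s3, s4⟩, ⟨f1, f2, f3, f4⟩, g1, g2, g3, g4⟩ := near_extremal_counts hx0 hμ hμ1
    hμε hn nA nC nD hV hS hT hST he outA outD inC inD hAA hCC hAB hBC hDA hCD hDB0 hBD0 hDB nAC
    nAD nDC nDD
  refine ⟨?_, ?_, ?_⟩
  · rintro (_ | _) (_ | _) <;> assumption
  · rintro (_ | _) (_ | _) <;> assumption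
  · rintro (_ | _) (_ | _) <;> assumption

end

section

variable {V : Type*} [Fintype V]
variable {G : V → V → Prop} {μ τ δ : ℝ}

/-- Failure of denseness with constant labels comes from a sparse pair of large sets. -/
lemma dense_of_forall_pair (hτ : 0 < τ) (hn : 0 < Fintype.card V)
    (hout : ∀ x, δ * Fintype.card V ≤ #(nbrOut G x))
    (hin : ∀ x, δ * Fintype.card V ≤ #(nbrIn G x))
    (h : ∀ S T : Finset V, τ * Fintype.card V ≤ #S → τ * Fintype.card V ≤ #T →
      (Fintype.card V : ℝ) - μ * Fintype.card V ≤ #S + #T →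
      μ * (Fintype.card V : ℝ) ^ 2 ≤ edges G S T) (hμ : 0 < μ) :
    Dense G (fun _ => false) (fun _ => false) δ τ μ := by
  have hx : (0 : ℝ) < Fintype.card V := by exact_mod_cast hn
  refine ⟨fun _ _ _ => rfl, hout, hin, ?_, ?_⟩
  · rintro (_ | _) S T hS hT hSc hTc hST
    · refine h S T hSc hTc ?_
      have : lab (fun _ : V => false) false = univ := by ext v; simp
      rw [this, card_univ] at hST
      exact hST
    · have h1 : S = ∅ := by
        rw [eq_empty_iff_forall_notMem]
        intro v hv
        simpa using hS hv
      rw [h1, card_empty, Nat.cast_zero] at hSc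
      nlinarith
  · intro S hS hSc
    have h1 : (#Sᶜ : ℝ) + #S = Fintype.card V := by exact_mod_cast card_compl_add_card S
    refine h _ _ (by linarith) hS ?_
    have : 0 < μ * Fintype.card V := by positivity
    linarith

lemma exists_hamilton_of_semidegree : ∃ n₀ : ℕ, ∀ (V : Type) [Fintype V] (G : V → V → Prop),
    n₀ ≤ Fintype.card V → (∀ x y, G x y → ¬ G y x) →
    (∀ x, (3 * (Fintype.card V : ℝ) - 4) / 8 ≤ #(nbrOut G x)) →
    (∀ x, (3 * (Fintype.card V : ℝ) - 4) / 8 ≤ #(nbrIn G x)) →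
    ∃ f : ZMod (Fintype.card V) → V, Function.Bijective f ∧ ∀ k, G (f k) (f (k + 1)) := by
  obtain ⟨ε, hε, n₁, hext⟩ := exists_hamilton_of_nearExtremal
  have hμ : 0 < min (1 / 1000000) (ε / 10000) := lt_min (by norm_num) (by positivity)
  have hμ1 : min (1 / 1000000) (ε / 10000) ≤ 1 / 1000000 := min_le_left _ _
  have hμ2 : min (1 / 1000000) (ε / 10000) ≤ ε / 10000 := min_le_right _ _
  set μ := min (1 / 1000000) (ε / 10000)
  obtain ⟨ε', hε', n₂, hdense⟩ := exists_hamilton_of_dense (δ := 1 / 4) (τ := 1 / 16) (μ := μ)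
    (by norm_num) (by norm_num) (by norm_num) (by norm_num) hμ (by linarith)
  obtain ⟨n₃, hn₃⟩ := exists_nat_ge (1 / (2 * μ))
  refine ⟨max (max n₁ n₂) (max n₃ 4), ?_⟩
  intro V _ G hn hG hout hin
  simp only [max_le_iff] at hn
  obtain ⟨⟨hn1, hn2⟩, hn3, hn4⟩ := hn
  have hx4 : (4 : ℝ) ≤ Fintype.card V := by exact_mod_cast hn4
  have hx3 : 1 ≤ 2 * μ * Fintype.card V := by
    have h1 : (n₃ : ℝ) ≤ Fintype.card V := by exact_mod_cast hn3
    have h2 := hn₃.trans h1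
    rwa [div_le_iff₀' (by positivity)] at h2
  by_cases hpair : ∀ S T : Finset V, 1 / 16 * (Fintype.card V : ℝ) ≤ #S →
      1 / 16 * (Fintype.card V : ℝ) ≤ #T →
      (Fintype.card V : ℝ) - μ * Fintype.card V ≤ #S + #T →
      μ * (Fintype.card V : ℝ) ^ 2 ≤ edges G S T
  · refine hdense V G G (fun _ => false) (fun _ => false) (fun _ => false) [] hn2
      (dense_of_forall_pair (by norm_num) (by omega) (fun x => le_trans (by linarith) (hout x))
        (fun x => le_trans (by linarith) (hin x)) hpair hμ) (fun _ _ h => h) (by simp) (by simp)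
      (fun _ _ => rfl) (fun _ => rfl) ?_
    simp only [List.length_nil, Nat.cast_zero]
    positivity
  · push Not at hpair
    obtain ⟨S, T, hS, hT, hST, he⟩ := hpair
    obtain ⟨p, q, hpq⟩ := exists_nearExtremal hμ hμ1 (ε := ε) (by linarith) hx3 hG hout hin hS hT
      hST he
    exact hext V G p q hn1 hG hout hin hpq

end

end OrientedHamilton

/-- There exists n₀ such that every oriented graph on n ≥ n₀ vertices with minimum
semidegree at least (3n − 4)/8 contains a Hamilton cycle. -/
theorem oriented_hamilton_min_semidegree :
    ∃ n₀ : ℕ, ∀ (V : Type) [Fintype V] (G : V → V → Prop),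
      IsOriented G →
      n₀ ≤ Fintype.card V →
      (∀ x : V, (3 * (Fintype.card V : ℝ) - 4) / 8 ≤ (outDeg G x : ℝ) ∧
        (3 * (Fintype.card V : ℝ) - 4) / 8 ≤ (inDeg G x : ℝ)) →
      ∃ f : ZMod (Fintype.card V) → V, IsHamCycle G f := by
  classical
  obtain ⟨n₀, h⟩ := OrientedHamilton.exists_hamilton_of_semidegree
  refine ⟨n₀, fun V _ G hG hn hd => ?_⟩
  have hout : ∀ x, outDeg G x = (OrientedHamilton.nbrOut G x).card := fun x => by
    rw [outDeg, Nat.card_eq_fintype_card, Fintype.card_subtype, OrientedHamilton.nbrOut]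
  have hin : ∀ x, inDeg G x = (OrientedHamilton.nbrIn G x).card := fun x => by
    rw [inDeg, Nat.card_eq_fintype_card, Fintype.card_subtype, OrientedHamilton.nbrIn]
  obtain ⟨f, hf⟩ := h V G hn hG (fun x => hout x ▸ (hd x).1) (fun x => hin x ▸ (hd x).2)
  exact ⟨f, hf⟩
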